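/- arXiv:0810.5310 — 2 statements merged into one kernel-verified Lean document; each statement's English description precedes it below -/
import Mathlib

section
/- There exist a fractional O_K-ideal 𝒜 in K and a totally positive element d ∈ F such that the symmetric bilinear form b_d(x,y) = Tr_{K/ℚ}(d x ȳ) makes (𝒜, b_d) a positive definite even unimodular ℤ-lattice of rank 2(p-1); that is, b_d(x,x) ∈ 2ℤ for all x ∈ 𝒜 and the dual lattice {x ∈ K : b_d(x,y) ∈ ℤ for all y ∈ 𝒜} equals 𝒜. -/
open NumberField
open scoped nonZeroDivisors

/-!
The lattice is found in an auxiliary field. Write `ℚ(√-ℓ) = ℚ(√-l)` with `l` square-free, and choose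
by Dirichlet a prime `q ≡ -1 (mod 4l)` that is a non-residue modulo `p`. Let `E = ℚ(√-q, ζ_p)` and
let `τ` be its non-trivial automorphism over `ℚ(ζ_p)`. Since `q ^ ((p - 1) / 2) ≡ -1 (mod p)`, the
factorisations of `y ^ q - y ^ (-q)` for `y = ζ_p ^ (q ^ i)`, split according to quadratic residues
and non-residues modulo `q`, telescope to `u * τ u = -1` for a real unit `u` of `E`.

The inverse different of `E` is generated by a real element `δ` with `τ δ = -δ`. Products of Galois
conjugates of `u` and of `δ` realise enough sign patterns to turn `δ` into a totally positive `d`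
and `u` into a unit `v` such that `𝓞 E` is self-dual for `b(x, y) = Tr(d x ȳ)` and `x ↦ v * τ x` is
skew-adjoint with square `-1`.

By the choice of `q`, the integer `l` is up to a square the norm of some `ν ∈ ℚ(√-q)`. Hence a
rational multiple `X` of `x ↦ ν * v * τ x` is skew-adjoint with `X ^ 2 = -l`, and it commutes with
`ζ_p`. If `Y` is the generator of the ring of integers of `ℚ(X)`, then `𝓞 E + Y 𝓞 E` is stable under
`Y` and unimodular for a multiple of `b`. The actions of `X` and `ζ_p` make `E` a one-dimensional
vector space over `K`, which identifies this lattice with a fractional ideal and the form with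
`Tr(d' x ȳ)`. Evenness holds because `r = (1 + ζ_p)⁻¹` is integral and `r + r̄ = 1`.
-/

section Conic

lemma exists_ne_zero_map_eq_zero_abs_le {ι G : Type*} [Fintype ι] [AddCommGroup G]
    [Fintype G] (f : (ι → ℤ) →+ G) (N : ι → ℕ) (hcard : Fintype.card G < ∏ i, (N i + 1)) :
    ∃ x ≠ 0, f x = 0 ∧ ∀ i, |x i| ≤ N i := by
  classical
  obtain ⟨x, hx, y, hy, hxy, hfxy⟩ := Finset.exists_ne_map_eq_of_card_lt_of_maps_to (f := f)
    (s := Finset.Icc (0 : ι → ℤ) (fun i ↦ N i)) (t := Finset.univ)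
    (by rw [Finset.card_univ, Pi.card_Icc]; simpa using! hcard) (by simp)
  rw [Finset.mem_Icc] at hx hy
  refine ⟨x - y, sub_ne_zero.2 hxy, by rw [map_sub, hfxy, sub_self], fun i ↦ abs_le.2 ?_⟩
  have hxi := hx.1 i
  have hxi' := hx.2 i
  have hyi := hy.1 i
  have hyi' := hy.2 i
  simp only [Pi.zero_apply, Pi.sub_apply] at *
  constructor <;> linarith

lemma sq_ne_prime_mul_of_not_dvd {q l : ℤ} (hq : Prime q) (hql : ¬ q ∣ l) (x : ℤ) :
    x ^ 2 ≠ q * l := by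
  intro h
  obtain ⟨y, rfl⟩ := hq.dvd_of_dvd_pow (Dvd.intro l h.symm)
  exact hql ⟨y ^ 2, mul_left_cancel₀ hq.ne_zero (by linear_combination -h)⟩

lemma exists_small_solution_modEq {q l : ℕ} (hq : 0 < q) (hl : 0 < l) (r : ℤ) :
    ∃ a b z : ℤ, (a, b, z) ≠ 0 ∧ (q : ℤ) ∣ a - r * z ∧ (l : ℤ) ∣ a - b ∧
      a ^ 2 ≤ q * l ∧ b ^ 2 ≤ l ∧ z ^ 2 ≤ q := by
  have : NeZero q := ⟨hq.ne'⟩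
  have : NeZero l := ⟨hl.ne'⟩
  let f : (Fin 3 → ℤ) →+ ZMod q × ZMod l :=
    AddMonoidHom.mk' (fun x ↦ ((x 0 - r * x 2 : ℤ), (x 0 - x 1 : ℤ))) fun x y ↦ by
      ext <;> simp only [Pi.add_apply, Prod.mk_add_mk] <;> push_cast <;> ring
  let N : Fin 3 → ℕ := ![(q * l).sqrt, l.sqrt, q.sqrt]
  have hcard : Fintype.card (ZMod q × ZMod l) < ∏ i, (N i + 1) := by
    rw [Fintype.card_prod, ZMod.card, ZMod.card, Fin.prod_univ_three]
    refine lt_of_pow_lt_pow_left₀ 2 (Nat.zero_le _) ?_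
    calc (q * l) ^ 2 = q * l * (l * q) := by ring
      _ < (N 0 + 1) ^ 2 * ((N 1 + 1) ^ 2 * (N 2 + 1) ^ 2) :=
        mul_lt_mul'' (Nat.lt_succ_sqrt' _) (Nat.mul_lt_mul'' (Nat.lt_succ_sqrt' _)
          (Nat.lt_succ_sqrt' _)) (Nat.zero_le _) (Nat.zero_le _)
      _ = _ := by ring
  have sq_le (x : ℤ) (n : ℕ) (h : |x| ≤ n.sqrt) : x ^ 2 ≤ n := by
    rw [← sq_abs]
    exact (pow_le_pow_left₀ (abs_nonneg x) h 2).trans (mod_cast Nat.sqrt_le' n)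
  obtain ⟨x, hx0, hfx, hx⟩ := exists_ne_zero_map_eq_zero_abs_le f N hcard
  obtain ⟨hfq, hfl⟩ := Prod.mk.inj hfx
  refine ⟨x 0, x 1, x 2, fun h ↦ hx0 ?_, (ZMod.intCast_zmod_eq_zero_iff_dvd _ q).1 hfq,
    (ZMod.intCast_zmod_eq_zero_iff_dvd _ l).1 hfl, ?_, sq_le _ _ (hx 1), sq_le _ _ (hx 2)⟩
  · simp only [Prod.mk_eq_zero] at h
    ext i
    fin_cases i <;> simp [h]
  · exact_mod_cast sq_le _ (q * l) (hx 0)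

lemma eq_zero_or_eq_one_of_small {q l : ℕ} (hq : q.Prime) (hl : 0 < l) (hql : ¬ q ∣ l)
    {a b z k : ℤ} (ha : a ^ 2 ≤ q * l) (hb : b ^ 2 ≤ l) (hz : z ^ 2 ≤ q)
    (hk : a ^ 2 + q * b ^ 2 - l * z ^ 2 = q * l * k) : k = 0 ∨ k = 1 := by
  have hqZ : Prime (q : ℤ) := Nat.prime_iff_prime_int.1 hq
  have hq0 : (0 : ℤ) < q := mod_cast hq.pos
  have hl0 : (0 : ℤ) < l := mod_cast hl
  have ha' : a ^ 2 < q * l :=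
    ha.lt_of_ne (sq_ne_prime_mul_of_not_dvd hqZ (mod_cast hql) a)
  have hz' : z ^ 2 < q :=
    hz.lt_of_ne (by simpa using sq_ne_prime_mul_of_not_dvd hqZ hqZ.not_dvd_one z)
  have k_lt : (q * l : ℤ) * k < (q * l) * 2 := by nlinarith [mul_nonneg hl0.le (sq_nonneg z)]
  have lt_k : (q * l : ℤ) * (-1) < (q * l) * k := by nlinarith [mul_nonneg hq0.le (sq_nonneg b)]
  have := lt_of_mul_lt_mul_left k_lt (by positivity)
  have := lt_of_mul_lt_mul_left lt_k (by positivity)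
  omega

lemma exists_sq_add_mul_sq_eq_mul_sq {q l : ℕ} (hq : q.Prime) (hl : 0 < l) (hql : ¬ q ∣ l)
    (hlq : l ∣ q + 1) (hsq : IsSquare (l : ZMod q)) :
    ∃ a b z : ℤ, z ≠ 0 ∧ a ^ 2 + q * b ^ 2 = l * z ^ 2 := by
  have : NeZero q := ⟨hq.ne_zero⟩
  obtain ⟨r, hr⟩ := hsq
  have hr : (q : ℤ) ∣ r.val ^ 2 - l := by
    rw [← ZMod.intCast_zmod_eq_zero_iff_dvd]
    push_cast
    rw [ZMod.natCast_zmod_val, hr]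
    ring
  obtain ⟨a, b, z, hne, hqa, hla, ha, hb, hz⟩ := exists_small_solution_modEq hq.pos hl r.val
  have dvd_q : (q : ℤ) ∣ a ^ 2 + q * b ^ 2 - l * z ^ 2 := by
    obtain ⟨u, hu⟩ := hqa
    obtain ⟨v, hv⟩ := hr
    exact ⟨u * (a + r.val * z) + b ^ 2 + v * z ^ 2, by
      linear_combination (a + r.val * z) * hu + z ^ 2 * hv⟩
  have dvd_l : (l : ℤ) ∣ a ^ 2 + q * b ^ 2 - l * z ^ 2 := by
    obtain ⟨u, hu⟩ := hla
    obtain ⟨v, hv⟩ : (l : ℤ) ∣ q + 1 := mod_cast hlq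
    exact ⟨u * (a + b) + v * b ^ 2 - z ^ 2, by linear_combination (a + b) * hu + b ^ 2 * hv⟩
  have hcop : IsCoprime (q : ℤ) l := Nat.isCoprime_iff_coprime.2 (hq.coprime_iff_not_dvd.2 hql)
  obtain ⟨k, hk⟩ := hcop.mul_dvd dvd_q dvd_l
  have hq0 : (0 : ℤ) < q := mod_cast hq.pos
  rcases eq_zero_or_eq_one_of_small hq hl hql ha hb hz hk with rfl | rfl
  · refine ⟨a, b, z, ?_, by linarith⟩
    rintro rfl
    have hab : a ^ 2 + q * b ^ 2 = 0 := by linarith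
    have hb0 : b = 0 := by
      by_contra hb0
      have : 0 < a ^ 2 + q * b ^ 2 := by positivity
      exact this.ne' hab
    simp_all
  · -- `a ^ 2 + q b ^ 2 = l (z ^ 2 + q)`, and both sides can be multiplied by the norm `z ^ 2 + q`.
    refine ⟨a * z - q * b, a + b * z, z ^ 2 + q, by positivity, ?_⟩
    linear_combination (z ^ 2 + q) * hk

lemma exists_linear_combination_eq_one {x y z : ℤ}
    (h : ∀ r : ℕ, r.Prime → (r : ℤ) ∣ x → (r : ℤ) ∣ y → ¬ (r : ℤ) ∣ z) :
    ∃ k₀ k₁ k₂ : ℤ, x * k₀ + y * k₁ + z * k₂ = 1 := by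
  have hgcd : Int.gcd x (Int.gcd y z) = 1 := by
    by_contra hne
    obtain ⟨r, hr, hdvd⟩ := Nat.exists_prime_and_dvd hne
    obtain ⟨hx, hyz⟩ := Int.dvd_coe_gcd_iff.1 (Int.natCast_dvd_natCast.2 hdvd)
    obtain ⟨hy, hz⟩ := Int.dvd_coe_gcd_iff.1 hyz
    exact h r hr hx hy hz
  obtain ⟨k, m, hkm⟩ := Int.isCoprime_iff_gcd_eq_one.2 hgcd
  refine ⟨k, y.gcdA z * m, y.gcdB z * m, ?_⟩
  linear_combination hkm - m * Int.gcd_eq_gcd_ab y z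

lemma exists_primitive_solution {a t z Q l : ℤ} (hz : z ≠ 0)
    (h : a ^ 2 + a * t + Q * t ^ 2 = l * z ^ 2) :
    ∃ a' t' z' : ℤ, 0 < z' ∧ a' ^ 2 + a' * t' + Q * t' ^ 2 = l * z' ^ 2 ∧
      ∀ r : ℕ, r.Prime → (r : ℤ) ∣ a' → (r : ℤ) ∣ t' → ¬ (r : ℤ) ∣ z' := by
  obtain ⟨v, hv, hgcd⟩ := Finset.univ.extract_gcd ![a, t, z] Finset.univ_nonempty
  set g := Finset.univ.gcd ![a, t, z]
  have ha : a = g * v 0 := hv 0 (Finset.mem_univ _)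
  have ht : t = g * v 1 := hv 1 (Finset.mem_univ _)
  have hz' : z = g * v 2 := hv 2 (Finset.mem_univ _)
  have hg0 : g ≠ 0 := left_ne_zero_of_mul (hz' ▸ hz)
  refine ⟨v 0, v 1, |v 2|, abs_pos.2 (right_ne_zero_of_mul (hz' ▸ hz)), ?_, fun r hr h0 h1 h2 ↦ ?_⟩
  · apply mul_left_cancel₀ (pow_ne_zero 2 hg0)
    rw [ha, ht, hz'] at h
    linear_combination h - l * g ^ 2 * sq_abs (v 2)
  · refine (Nat.prime_iff_prime_int.1 hr).not_dvd_one (hgcd ▸ Finset.dvd_gcd fun i _ ↦ ?_)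
    fin_cases i
    exacts [h0, h1, (dvd_abs _ _).1 h2]

/- The two integers `2 * a + t` and `a + 2 * Q * t` are the traces of `ν` and `ν * θ̄`, where
`ν = a + t * θ` and `θ = (1 + √-q) / 2`. -/
lemma exists_linear_combination_of_primitive {q Q l : ℕ} (hq : q.Prime) (hQ : q + 1 = 4 * Q)
    {a t z n : ℤ} (h : a ^ 2 + a * t + Q * t ^ 2 = l * z ^ 2)
    (hprim : ∀ r : ℕ, r.Prime → (r : ℤ) ∣ a → (r : ℤ) ∣ t → ¬ (r : ℤ) ∣ z)
    (hn : n = z ∨ n = 2 * z ∧ Odd l) :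
    ∃ k₀ k₁ k₂ : ℤ, n * k₀ + (2 * a + t) * k₁ + (a + 2 * Q * t) * k₂ = 1 := by
  have hQ' : (q : ℤ) + 1 = 4 * Q := mod_cast hQ
  refine exists_linear_combination_eq_one fun r hr hrn hr1 hr2 ↦ ?_
  have hrZ : Prime (r : ℤ) := Nat.prime_iff_prime_int.1 hr
  have hrz : (r : ℤ) ∣ z := by
    rcases hn with rfl | ⟨rfl, hl⟩
    · exact hrn
    refine (hrZ.dvd_or_dvd hrn).resolve_left fun hr_two ↦ ?_
    obtain rfl := (Nat.prime_dvd_prime_iff_eq hr Nat.prime_two).1 (mod_cast hr_two)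
    have ht : 2 ∣ t := (dvd_add_right (dvd_mul_right 2 a)).1 hr1
    have ha : 2 ∣ a := (dvd_add_left (dvd_mul_of_dvd_left (dvd_mul_right _ _) _)).1 hr2
    refine hprim 2 hr ha ht (Int.prime_two.dvd_of_dvd_pow (n := 2) ?_)
    have hlz : 2 ∣ (l : ℤ) * z ^ 2 := h ▸ dvd_add (dvd_add (dvd_pow ha two_ne_zero)
      (ha.mul_right t)) ((dvd_pow ht two_ne_zero).mul_left _)
    exact (Int.prime_two.dvd_or_dvd hlz).resolve_left (by exact_mod_cast hl.not_two_dvd_nat)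
  have hrt : (r : ℤ) ∣ t := by
    have hrqt : (r : ℤ) ∣ q * t := by
      have : q * t = 2 * (a + 2 * Q * t) - (2 * a + t) := by linear_combination t * hQ'
      exact this ▸ dvd_sub (hr2.mul_left 2) hr1
    refine (hrZ.dvd_or_dvd hrqt).elim (fun hrq ↦ ?_) id
    obtain rfl := (Nat.prime_dvd_prime_iff_eq hr hq).1 (mod_cast hrq)
    obtain ⟨u, hu⟩ := hr1
    obtain ⟨y, rfl⟩ := hrz
    refine hrZ.dvd_of_dvd_pow (n := 2) ⟨4 * l * y ^ 2 - u ^ 2, mul_left_cancel₀ hrZ.ne_zero ?_⟩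
    linear_combination 4 * h + t ^ 2 * hQ' - (2 * a + t + r * u) * hu
  have hra : (r : ℤ) ∣ a := (dvd_add_left (hrt.mul_left _)).1 hr2
  exact hprim r hr hra hrt hrz

lemma exists_prime_dvd_add_one_not_isSquare {p m : ℕ} [Fact p.Prime] (hp2 : p ≠ 2)
    (hm : 0 < m) (hpm : ¬ p ∣ m) :
    ∃ q : ℕ, q.Prime ∧ m ∣ q + 1 ∧ ¬ IsSquare (q : ZMod p) := by
  have hp : p.Prime := Fact.out
  obtain ⟨r, hr⟩ := FiniteField.exists_nonsquare (F := ZMod p) (by rwa [ZMod.ringChar_zmod_n])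
  have hr0 : ¬ p ∣ r.val := fun h ↦ hr <| by
    rw [← ZMod.natCast_zmod_val r, (ZMod.natCast_eq_zero_iff _ _).2 h]
    exact IsSquare.zero
  obtain ⟨c, hcp, hcm⟩ := Nat.chineseRemainder (hp.coprime_iff_not_dvd.2 hpm) r.val (m - 1)
  have hc : c.Coprime (p * m) := by
    refine Nat.Coprime.mul_right ?_ ?_
    · rw [Nat.Coprime, hcp.gcd_eq]
      exact (hp.coprime_iff_not_dvd.2 hr0).symm
    · rw [Nat.Coprime, hcm.gcd_eq]
      exact (Nat.coprime_self_sub_left hm).2 (Nat.coprime_one_left m)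
  obtain ⟨q, -, hq, hqc⟩ := Nat.forall_exists_prime_gt_and_modEq 0 (mul_pos hp.pos hm).ne' hc
  have hqr : (q : ZMod p) = r := by
    rw [(ZMod.natCast_eq_natCast_iff _ _ _).2 ((hqc.of_mul_right m).trans hcp),
      ZMod.natCast_zmod_val]
  have hqm : q + 1 ≡ m - 1 + 1 [MOD m] := ((hqc.of_mul_left p).trans hcm).add_right 1
  refine ⟨q, hq, (Nat.modEq_zero_iff_dvd).1 (hqm.trans ?_), hqr ▸ hr⟩
  rw [Nat.sub_add_cancel hm]
  exact Nat.modEq_zero_iff_dvd.2 dvd_rfl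

lemma isSquare_natCast_zmod_of_four_mul_dvd_add_one {q l : ℕ} [Fact q.Prime]
    (h : 4 * l ∣ q + 1) : IsSquare (l : ZMod q) := by
  have hq : q.Prime := Fact.out
  obtain ⟨c, hc⟩ := h
  have hl : 0 < l := Nat.pos_of_ne_zero (by rintro rfl; simp at hc)
  have hc0 : 0 < c := Nat.pos_of_ne_zero (by rintro rfl; simp at hc)
  have hmod : q % (4 * l) = 4 * l - 1 := by
    obtain ⟨e, rfl⟩ := Nat.exists_eq_add_of_lt hc0
    have : q = (4 * l - 1) + 4 * l * e := by
      have : 4 * l * (0 + e + 1) = 4 * l * e + 4 * l := by ring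
      omega
    rw [this, Nat.add_mul_mod_self_left, Nat.mod_eq_of_lt (by omega)]
  have hodd : Odd q := hq.odd_of_ne_two (by rintro rfl; grind)
  have four_eq_one : jacobiSym 4 (4 * l - 1) = 1 := by
    rw [show (4 : ℤ) = 2 ^ 2 by norm_num, jacobiSym.pow_left]
    refine jacobiSym.sq_one ?_
    exact Nat.coprime_two_left.2 ⟨2 * l - 1, by omega⟩
  have four_mul_eq_one : jacobiSym (4 * l) (4 * l - 1) = 1 := by
    rw [jacobiSym.mod_left' (a₂ := 1), jacobiSym.one_left]
    refine ((Int.modEq_iff_dvd).2 ?_).symm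
    rw [Nat.cast_sub (by omega)]
    push_cast
    exact dvd_rfl
  have hsymb : legendreSym q l = 1 := by
    rw [jacobiSym.legendreSym.to_jacobiSym, jacobiSym.mod_right' l hodd, hmod]
    rwa [jacobiSym.mul_left, four_eq_one, one_mul] at four_mul_eq_one
  by_cases hl0 : ((l : ℤ) : ZMod q) = 0
  · exact ⟨0, by simpa using hl0⟩
  · simpa using (legendreSym.eq_one_iff q hl0).1 hsymb

lemma exists_prime_and_primitive_solution {p l : ℕ} [Fact p.Prime] (hp2 : p ≠ 2) (hl : 0 < l)
    (hpl : ¬ p ∣ l) :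
    ∃ q Q : ℕ, q.Prime ∧ q + 1 = 4 * Q ∧ ¬ IsSquare (q : ZMod p) ∧
      ∃ a t z : ℤ, 0 < z ∧ a ^ 2 + a * t + Q * t ^ 2 = l * z ^ 2 ∧
        ∀ n, n = z ∨ n = 2 * z ∧ Odd l →
          ∃ k₀ k₁ k₂ : ℤ, n * k₀ + (2 * a + t) * k₁ + (a + 2 * Q * t) * k₂ = 1 := by
  have hp : p.Prime := Fact.out
  have hp4l : ¬ p ∣ 4 * l := by
    rw [hp.dvd_mul, show 4 = 2 ^ 2 by norm_num, hp.prime.dvd_pow_iff_dvd two_ne_zero,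
      Nat.prime_dvd_prime_iff_eq hp Nat.prime_two]
    exact not_or.2 ⟨hp2, hpl⟩
  obtain ⟨q, hq, hqdvd, hqp⟩ := exists_prime_dvd_add_one_not_isSquare hp2 (by positivity) hp4l
  have : Fact q.Prime := ⟨hq⟩
  have hql : ¬ q ∣ l := fun h ↦ by
    have := Nat.le_of_dvd hl h
    have := Nat.le_of_dvd (Nat.succ_pos q) hqdvd
    omega
  obtain ⟨Q, hQ⟩ := (dvd_mul_right 4 l).trans hqdvd
  obtain ⟨a, b, z, hz, habz⟩ := exists_sq_add_mul_sq_eq_mul_sq hq hl hql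
    ((dvd_mul_left l 4).trans hqdvd) (isSquare_natCast_zmod_of_four_mul_dvd_add_one hqdvd)
  have hQ' : (q : ℤ) + 1 = 4 * Q := mod_cast hQ
  -- `a + b √-q = (a - b) + 2 b θ`
  obtain ⟨a, t, z, hz, h, hprim⟩ := exists_primitive_solution (a := a - b) (t := 2 * b) (Q := Q)
    (l := l) hz (by linear_combination habz - b ^ 2 * hQ')
  exact ⟨q, Q, hq, hQ, hqp, a, t, z, hz, h, fun n hn ↦
    exists_linear_combination_of_primitive hq hQ h hprim hn⟩

end Conic

section AntiperiodicSequences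

open Polynomial

/-- The left shift on `ℤ/2`-valued sequences, through which `(ZMod 2)[X]` acts on them. -/
def shift : Module.End (ZMod 2) (ℕ → ZMod 2) :=
  LinearMap.funLeft (ZMod 2) (ZMod 2) Nat.succ

lemma shift_pow_apply (k : ℕ) (s : ℕ → ZMod 2) (i : ℕ) : (shift ^ k) s i = s (i + k) := by
  induction k generalizing i with
  | zero => rfl
  | succ k ih => rw [pow_succ', Module.End.mul_apply, shift, LinearMap.funLeft_apply, ← shift, ih,
      Nat.succ_add_eq_add_succ]

lemma coeff_eq_one_of_mem_support {P : (ZMod 2)[X]} {k : ℕ} (hk : k ∈ P.support) :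
    P.coeff k = 1 := by
  have hk := mem_support_iff.1 hk
  generalize P.coeff k = c at hk ⊢
  decide +revert

lemma aeval_shift_apply (P : (ZMod 2)[X]) (s : ℕ → ZMod 2) (i : ℕ) :
    aeval shift P s i = ∑ k ∈ P.support, s (i + k) := by
  rw [aeval_def, eval₂_eq_sum, Polynomial.sum, LinearMap.sum_apply, Finset.sum_apply]
  refine Finset.sum_congr rfl fun k hk ↦ ?_
  rw [coeff_eq_one_of_mem_support hk, map_one, one_mul, shift_pow_apply]

lemma odd_card_support_of_eval_one_eq_one {P : (ZMod 2)[X]} (hP : P.eval 1 = 1) :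
    Odd P.support.card := by
  rw [← ZMod.natCast_eq_one_iff_odd, ← hP, eval_eq_sum, Polynomial.sum, Finset.card_eq_sum_ones,
    Nat.cast_sum]
  refine Finset.sum_congr rfl fun k hk ↦ ?_
  rw [coeff_eq_one_of_mem_support hk, one_pow, mul_one, Nat.cast_one]

lemma eq_smul_one_of_aeval_X_sub_one_eq_zero {s : ℕ → ZMod 2}
    (hs : aeval shift (X - 1 : (ZMod 2)[X]) s = 0) : s = s 0 • 1 := by
  have hsucc (i : ℕ) : s (i + 1) = s i := by
    rw [map_sub, aeval_X, map_one, LinearMap.sub_apply, sub_eq_zero] at hs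
    exact congrFun hs i
  ext i
  induction i with
  | zero => simp
  | succ i ih => rw [hsucc, ih]; rfl

lemma exists_aeval_eq_of_aeval_X_sub_one_pow_eq_one {N : ℕ} {s s' : ℕ → ZMod 2}
    (hs : aeval shift ((X - 1 : (ZMod 2)[X]) ^ N) s = 1)
    (hs' : aeval shift ((X - 1 : (ZMod 2)[X]) ^ N) s' = 1) :
    ∃ P : (ZMod 2)[X], P.eval 1 = 1 ∧ aeval shift P s = s' := by
  suffices h : ∀ j k, j + k = N → ∃ P : (ZMod 2)[X], P.eval 1 = 1 ∧
      aeval shift ((X - 1 : (ZMod 2)[X]) ^ k) (aeval shift P s - s') = 0 by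
    obtain ⟨P, hP, h⟩ := h N 0 rfl
    exact ⟨P, hP, sub_eq_zero.1 (by simpa using h)⟩
  intro j
  induction j with
  | zero =>
    rintro k hk
    obtain rfl : k = N := by omega
    exact ⟨1, eval_one, by rw [map_one, Module.End.one_apply, map_sub, hs, hs', sub_self]⟩
  | succ j ih =>
    intro k hk
    obtain ⟨P, hP, h⟩ := ih (k + 1) (by omega)
    set f := aeval shift ((X - 1 : (ZMod 2)[X]) ^ k) (aeval shift P s - s') with hf
    have hf_const : f = f 0 • 1 := eq_smul_one_of_aeval_X_sub_one_eq_zero <| by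
      rw [hf, ← Module.End.mul_apply, ← map_mul, ← pow_succ', h]
    refine ⟨P - C (f 0) * (X - 1) ^ (j + 1), by simp [hP], ?_⟩
    calc aeval shift ((X - 1 : (ZMod 2)[X]) ^ k)
          (aeval shift (P - C (f 0) * (X - 1) ^ (j + 1)) s - s')
        = f - aeval shift ((X - 1) ^ k * (C (f 0) * (X - 1) ^ (j + 1))) s := by
          rw [hf, map_sub (aeval shift) P, LinearMap.sub_apply, sub_right_comm, map_sub (aeval _ _),
            map_mul (aeval shift) (_ ^ k), Module.End.mul_apply]
      _ = f - f 0 • aeval shift ((X - 1 : (ZMod 2)[X]) ^ N) s := by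
          rw [mul_left_comm, ← pow_add, add_comm k, hk, ← smul_eq_C_mul, map_smul,
            LinearMap.smul_apply]
      _ = 0 := by rw [hs, ← hf_const, sub_self]

/- For `n = 2 ^ a * m` with `m` odd, `X ^ n - 1 = ((X - 1) * h) ^ (2 ^ a)` in characteristic `2`,
where `h = 1 + X + ... + X ^ (m - 1)` has `h 1 = 1`. -/
lemma exists_X_pow_sub_one_eq {n : ℕ} (hn : n ≠ 0) :
    ∃ (N : ℕ) (H : (ZMod 2)[X]), H.eval 1 = 1 ∧ X ^ n - 1 = (X - 1) ^ N * H := by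
  obtain ⟨a, m, hm, rfl⟩ := Nat.exists_eq_two_pow_mul_odd hn
  refine ⟨2 ^ a, (∑ i ∈ Finset.range m, X ^ i) ^ 2 ^ a, ?_, ?_⟩
  · rw [eval_pow, eval_finsetSum]
    simp [ZMod.natCast_eq_one_iff_odd.2 hm]
  · rw [← mul_pow, mul_geom_sum, sub_pow_char_pow, one_pow, mul_comm, pow_mul]

lemma exists_odd_card_sum_shift_eq {n : ℕ} (hn : n ≠ 0) {s s' : ℕ → ZMod 2}
    (hs : ∀ i, s (i + n) = s i + 1) (hs' : ∀ i, s' (i + n) = s' i + 1) :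
    ∃ A B : Finset ℕ, Odd A.card ∧ Odd B.card ∧
      ∀ i, ∑ k ∈ A, s (i + k) = ∑ k ∈ B, s' (i + k) := by
  obtain ⟨N, H, hH, hXn⟩ := exists_X_pow_sub_one_eq hn
  have key {s : ℕ → ZMod 2} (hs : ∀ i, s (i + n) = s i + 1) :
      aeval shift ((X - 1 : (ZMod 2)[X]) ^ N) (aeval shift H s) = 1 := by
    rw [← Module.End.mul_apply, ← map_mul, ← hXn]
    ext i
    simp [shift_pow_apply, hs]
  obtain ⟨P, hP, hPs⟩ := exists_aeval_eq_of_aeval_X_sub_one_pow_eq_one (key hs) (key hs')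
  refine ⟨(P * H).support, H.support, odd_card_support_of_eval_one_eq_one (by simp [hP, hH]),
    odd_card_support_of_eval_one_eq_one hH, fun i ↦ ?_⟩
  rw [← aeval_shift_apply, ← aeval_shift_apply, map_mul, Module.End.mul_apply, hPs]

end AntiperiodicSequences

section TraceDual

open Polynomial

variable {A F K : Type*} [CommRing A] [IsDomain A] [IsIntegrallyClosed A] [Field F] [Field K]
  [Algebra A F] [IsFractionRing A F] [Algebra F K] [Algebra A K] [IsScalarTower A F K]
  [FiniteDimensional F K] [Algebra.IsSeparable F K] {x : K}

lemma forall_trace_mem_range_iff_derivative_mul_mem_adjoin (hx : Algebra.adjoin F {x} = ⊤)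
    (hAx : IsIntegral A x) (y : K) :
    (∀ z ∈ Algebra.adjoin A {x}, Algebra.trace F K (y * z) ∈ (algebraMap A F).range) ↔
      aeval x (derivative (minpoly F x)) * y ∈ Algebra.adjoin A {x} := by
  have hne : aeval x (derivative (minpoly F x)) ≠ 0 :=
    (Algebra.IsSeparable.isSeparable F x).aeval_derivative_ne_zero (minpoly.aeval F x)
  have h := Submodule.ext_iff.1 (traceForm_dualSubmodule_adjoin A F hx hAx) y
  rw [Submodule.mem_smul_iff_inv_mul_mem (inv_ne_zero hne), inv_inv] at h
  rw [← Subalgebra.mem_toSubmodule, ← h]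
  simp [LinearMap.BilinForm.mem_dualSubmodule, Submodule.mem_one, Algebra.traceForm_apply]

lemma derivative_mul_mem_adjoin_of_isIntegral (hx : Algebra.adjoin F {x} = ⊤) {P : A[X]}
    (hP : P.Monic) (hPx : aeval x P = 0) {y : K} (hy : IsIntegral A y) :
    aeval x (derivative P) * y ∈ Algebra.adjoin A {x} := by
  have hAx : IsIntegral A x := ⟨P, hP, hPx⟩
  have : FaithfulSMul A K := .trans A F K
  obtain ⟨Q, rfl⟩ := minpoly.isIntegrallyClosed_dvd hAx hPx
  have hy' : aeval x (derivative (minpoly F x)) * y ∈ Algebra.adjoin A {x} := by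
    refine (forall_trace_mem_range_iff_derivative_mul_mem_adjoin hx hAx y).1 fun z hz ↦ ?_
    exact IsIntegrallyClosed.isIntegral_iff.1 (Algebra.isIntegral_trace
      (hy.mul (adjoin_le_integralClosure hAx hz)))
  have hxQ : aeval x Q ∈ Algebra.adjoin A {x} := aeval_mem_adjoin_singleton A x
  convert mul_mem hxQ hy' using 1
  rw [minpoly.isIntegrallyClosed_eq_field_fractions' F hAx, derivative_mul, map_add, map_mul,
    map_mul, minpoly.aeval, derivative_map, aeval_map_algebraMap]
  ring

end TraceDual

section QuadraticIntegers

lemma exists_eq_add_mul_of_mem_adjoin {R S : Type*} [CommRing R] [CommRing S] [Algebra R S]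
    {α : S} {c d : R} (hα : α ^ 2 = algebraMap R S c * α + algebraMap R S d) {x : S}
    (hx : x ∈ Algebra.adjoin R {α}) :
    ∃ a b : R, x = algebraMap R S a + algebraMap R S b * α := by
  induction hx using Algebra.adjoin_induction with
  | mem x hx => exact ⟨0, 1, by simpa using hx⟩
  | algebraMap r => exact ⟨r, 0, by simp⟩
  | add x y _ _ hx hy =>
    obtain ⟨⟨a, b, rfl⟩, a', b', rfl⟩ := hx, hy
    exact ⟨a + a', b + b', by simp only [map_add]; ring⟩
  | mul x y _ _ hx hy =>
    obtain ⟨⟨a, b, rfl⟩, a', b', rfl⟩ := hx, hy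
    refine ⟨a * a' + b * b' * d, a * b' + a' * b + b * b' * c, ?_⟩
    simp only [map_add, map_mul]
    linear_combination algebraMap R S b * algebraMap R S b' * hα

lemma exists_intCast_eq_of_squarefree_mul_sq_eq {l : ℕ} (hl : Squarefree l) {r : ℚ} {k : ℤ}
    (h : l * r ^ 2 = k) : ∃ n : ℤ, r = n := by
  have hden : (l * r.num ^ 2 : ℤ) = k * r.den ^ 2 := by
    have : (l * r.num ^ 2 : ℚ) = k * r.den ^ 2 := by
      rw [← h, mul_assoc, ← mul_pow, Rat.mul_den_eq_num]
    exact_mod_cast this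
  have hdvd : (r.den ^ 2 : ℤ) ∣ l := by
    have hcop : IsCoprime ((r.den : ℤ) ^ 2) (r.num ^ 2) :=
      (Int.isCoprime_iff_gcd_eq_one.2 (by simpa [Int.gcd] using r.reduced.symm)).pow
    exact hcop.dvd_of_dvd_mul_right (hden ▸ dvd_mul_left _ _)
  have hunit : IsUnit r.den := hl _ (by rw [← sq]; exact_mod_cast hdvd)
  exact ⟨r.num, ((Rat.den_eq_one_iff r).1 (Nat.isUnit_iff.1 hunit)).symm⟩

lemma exists_intCast_eq_of_isIntegral {K : Type*} [Field K] [CharZero K] {r : ℚ}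
    (hr : IsIntegral ℤ (r : K)) : ∃ n : ℤ, r = n := by
  have : IsIntegral ℤ r :=
    (isIntegral_algebraMap_iff (algebraMap ℚ K).injective).1 (by simpa using hr)
  obtain ⟨n, hn⟩ := IsIntegrallyClosed.isIntegral_iff.1 this
  exact ⟨n, by simp [← hn]⟩

lemma even_and_even_of_sq_add_mul_sq {l : ℕ} (hl : Squarefree l) (hl3 : l % 4 ≠ 3) {a b n : ℤ}
    (h : a ^ 2 + l * b ^ 2 = 4 * n) : Even a ∧ Even b := by
  have hl4 : l % 4 ≠ 0 := fun h0 ↦ by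
    simpa using hl 2 (Nat.dvd_of_mod_eq_zero h0)
  have hl12 : (l : ℤ) % 4 = 1 ∨ (l : ℤ) % 4 = 2 := by omega
  have hmod : (a ^ 2 + l * b ^ 2) % 4 = 0 := by omega
  have ha : a % 4 = 0 ∨ a % 4 = 1 ∨ a % 4 = 2 ∨ a % 4 = 3 := by omega
  have hb : b % 4 = 0 ∨ b % 4 = 1 ∨ b % 4 = 2 ∨ b % 4 = 3 := by omega
  simp only [Int.even_iff]
  rcases hl12 with hl | hl <;> rcases ha with ha | ha | ha | ha <;>
    rcases hb with hb | hb | hb | hb <;>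
    simp [pow_two, Int.add_emod, Int.mul_emod, hl, ha, hb] at hmod <;> omega

/-- `ω` generates the ring of integers of `ℚ(√-l)`, where `α = √-l` and `l` is square-free. -/
def IsQuadraticIntegerGenerator {A : Type*} [Ring A] (l : ℕ) (α ω : A) : Prop :=
  l % 4 = 3 ∧ 2 * ω = 1 + α ∨ l % 4 ≠ 3 ∧ ω = α

lemma mem_adjoin_of_isIntegral_add_mul {K : Type*} [Field K] [CharZero K] {l : ℕ} {α ω : K}
    (hl : Squarefree l) (hα : α ^ 2 = -l) (hω : IsQuadraticIntegerGenerator l α ω) {a b : ℚ}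
    (h : IsIntegral ℤ (a + b * α)) (h' : IsIntegral ℤ (a - b * α)) :
    (a + b * α : K) ∈ Algebra.adjoin ℤ {ω} := by
  have hωmem : ω ∈ Algebra.adjoin ℤ {ω} := Algebra.self_mem_adjoin_singleton ℤ ω
  obtain ⟨A, hA⟩ : ∃ A : ℤ, 2 * a = A := exists_intCast_eq_of_isIntegral (K := K) <| by
    have : ((2 * a : ℚ) : K) = (a + b * α) + (a - b * α) := by push_cast; ring
    exact this ▸ h.add h'
  obtain ⟨N, hN⟩ : ∃ N : ℤ, a ^ 2 + l * b ^ 2 = N := exists_intCast_eq_of_isIntegral (K := K) <| by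
    have : ((a ^ 2 + l * b ^ 2 : ℚ) : K) = (a + b * α) * (a - b * α) := by
      push_cast
      linear_combination b ^ 2 * hα
    exact this ▸ h.mul h'
  obtain ⟨B, hB⟩ : ∃ B : ℤ, 2 * b = B :=
    exists_intCast_eq_of_squarefree_mul_sq_eq hl (k := 4 * N - A ^ 2) <| by
      push_cast
      linear_combination 4 * hN - (2 * a + A) * hA
  have hAB : A ^ 2 + l * B ^ 2 = 4 * N := by
    have : (A ^ 2 + l * B ^ 2 : ℚ) = 4 * N := by rw [← hA, ← hB, ← hN]; ring
    exact_mod_cast this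
  have hAK : (2 * a : K) = A := mod_cast congrArg (Rat.cast : ℚ → K) hA
  have hBK : (2 * b : K) = B := mod_cast congrArg (Rat.cast : ℚ → K) hB
  rcases hω with ⟨hl3, hω⟩ | ⟨hl3, rfl⟩
  · obtain ⟨C, hC⟩ : Even (A - B) := by
      have hl2 : Odd (l : ℤ) := Int.odd_iff.2 (by omega)
      have : Even (A ^ 2 + l * B ^ 2) := ⟨2 * N, by rw [hAB]; ring⟩
      simp only [Int.even_add, Int.even_mul, Int.even_pow, Int.not_even_iff_odd.2 hl2] at this
      grind [Int.even_sub]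
    have hCK : (A - B : K) = C + C := mod_cast congrArg (Int.cast : ℤ → K) hC
    have : (a + b * α : K) = C + B * ω := by
      linear_combination (hAK + hCK + α * hBK - B * hω) / 2
    exact this ▸ add_mem (intCast_mem _ C) (mul_mem (intCast_mem _ B) hωmem)
  · obtain ⟨⟨C, rfl⟩, D, rfl⟩ := even_and_even_of_sq_add_mul_sq hl hl3 hAB
    push_cast at hAK hBK
    have : (a + b * ω : K) = C + D * ω := by linear_combination (hAK + ω * hBK) / 2
    exact this ▸ add_mem (intCast_mem _ C) (mul_mem (intCast_mem _ D) hωmem)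

end QuadraticIntegers

section QuadraticCyclotomic

open Polynomial IntermediateField

/-- `K = ℚ(√-l, ζ_p)`, presented by generators `α = √-l` and `ζ = ζ_p`, together with the
automorphism `conj` induced by complex conjugation. -/
structure IsQuadraticCyclotomic {K : Type*} [Field K] [NumberField K] (l p : ℕ) (α ζ : K)
    (conj : K ≃ₐ[ℚ] K) : Prop where
  pos : 0 < l
  sq_eq : α ^ 2 = -l
  isPrimitiveRoot : IsPrimitiveRoot ζ p
  adjoin_eq_top : IntermediateField.adjoin ℚ {α, ζ} = ⊤
  conj_sqrt : conj α = -α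
  conj_root : conj ζ = ζ⁻¹

lemma adjoin_adjoin_simple_eq_top {F K : Type*} [Field F] [Field K] [Algebra F K]
    [Algebra.IsAlgebraic F K] {a b : K} (h : IntermediateField.adjoin F {a, b} = ⊤) :
    Algebra.adjoin F⟮b⟯ {a} = ⊤ := by
  have : F⟮b⟯⟮a⟯ = ⊤ := by
    rw [← restrictScalars_eq_top_iff (K := F), adjoin_adjoin_left, Set.union_singleton, h]
  rw [← adjoin_simple_toSubalgebra_of_isAlgebraic
    (Algebra.IsAlgebraic.tower_top (K := F) F⟮b⟯ |>.isAlgebraic a), this, top_toSubalgebra]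

lemma exists_algEquiv_root_eq_pow {C : Type*} [Field C] [NumberField C] {n : ℕ} [NeZero n]
    [IsCyclotomicExtension {n} ℚ C] {ζ : C} (hζ : IsPrimitiveRoot ζ n) {a : ℕ}
    (ha : a.Coprime n) : ∃ σ : C ≃ₐ[ℚ] C, σ ζ = ζ ^ a := by
  refine ⟨(IsCyclotomicExtension.Rat.galEquivZMod n C).symm (ZMod.unitOfCoprime a ha), ?_⟩
  rw [IsCyclotomicExtension.Rat.galEquivZMod_apply_of_pow_eq n C _ hζ.pow_eq_one,
    MulEquiv.apply_symm_apply, ZMod.coe_unitOfCoprime, ZMod.val_natCast, hζ.eq_orderOf,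
    pow_mod_orderOf]

lemma isPrimitiveRoot_adjoinSimple_gen {F K : Type*} [Field F] [Field K] [Algebra F K] {n : ℕ}
    {ζ : K} (hζ : IsPrimitiveRoot ζ n) : IsPrimitiveRoot (AdjoinSimple.gen F ζ) n :=
  IsPrimitiveRoot.coe_submonoidClass_iff.1 (by simpa using hζ)

lemma mem_of_isIntegral_of_mem_adjoin_root {K : Type*} [Field K] [NumberField K] {p : ℕ}
    [Fact p.Prime] {ζ x : K} (hζ : IsPrimitiveRoot ζ p) (hx : x ∈ ℚ⟮ζ⟯) (hxi : IsIntegral ℤ x) :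
    x ∈ Algebra.adjoin ℤ {ζ} := by
  have hcyc : IsCyclotomicExtension {p} ℚ ℚ⟮ζ⟯ :=
    hζ.intermediateField_adjoin_isCyclotomicExtension ℚ
  have hgen := isPrimitiveRoot_adjoinSimple_gen (F := ℚ) hζ
  have hxi' : IsIntegral ℤ (⟨x, hx⟩ : ℚ⟮ζ⟯) :=
    (isIntegral_algebraMap_iff (B := K) (algebraMap ℚ⟮ζ⟯ K).injective).1 hxi
  obtain ⟨y, hy⟩ :=
    (IsCyclotomicExtension.Rat.isIntegralClosure_adjoin_singleton_of_prime hgen)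
      |>.isIntegral_iff.1 hxi'
  have hmem := (Algebra.adjoin ℤ {AdjoinSimple.gen ℚ ζ}).mem_map.2
    ⟨_, y.2, congrArg (ℚ⟮ζ⟯.val.restrictScalars ℤ) hy⟩
  rw [AlgHom.map_adjoin, Set.image_singleton] at hmem
  simpa using hmem

lemma derivative_mul_mem_of_isIntegral {K : Type*} [Field K] [NumberField K]
    {M : IntermediateField ℚ K} {x y : K} (hy : Algebra.adjoin M {y} = ⊤) {P : ℤ[X]}
    (hP : P.Monic) (hPy : aeval y P = 0) {S : Subalgebra ℤ K}
    (hS : ∀ m ∈ M, IsIntegral ℤ m → m ∈ S) (hyS : y ∈ S) (hx : IsIntegral ℤ x) :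
    aeval y (derivative P) * x ∈ S := by
  have h := derivative_mul_mem_adjoin_of_isIntegral (A := 𝓞 M) hy (hP.map (algebraMap ℤ (𝓞 M)))
    (by rwa [aeval_map_algebraMap]) hx.tower_top
  rw [derivative_map, aeval_map_algebraMap] at h
  generalize aeval y (derivative P) * x = z at h
  induction h using Algebra.adjoin_induction with
  | mem z hz => exact hz ▸ hyS
  | algebraMap m => exact hS _ m.1.2 (m.2.map (M.val.restrictScalars ℤ))
  | add _ _ _ _ hz hw => exact add_mem hz hw
  | mul _ _ _ _ hz hw => exact mul_mem hz hw

lemma star_eq_neg_of_sq_eq_neg {z : ℂ} {r : ℝ} (hr : 0 < r) (h : z ^ 2 = -r) : star z = -z := by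
  have him : z.re * z.im = 0 := by
    have := congrArg Complex.im h
    simp only [sq, Complex.mul_im, Complex.neg_im, Complex.ofReal_im] at this
    linarith
  have hre : z.re ^ 2 - z.im ^ 2 = -r := by simpa [sq] using congrArg Complex.re h
  have hz : z.re = 0 := (mul_eq_zero.1 him).resolve_right fun h0 ↦ by nlinarith
  apply Complex.ext <;> simp [hz]

lemma minpoly_eq_of_sq_eq {F E : Type*} [Field F] [Field E] [Algebra F E] {y : E} {c d : F}
    (hy : y ∉ Set.range (algebraMap F E)) (h : y ^ 2 = algebraMap F E c * y + algebraMap F E d) :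
    minpoly F y = X ^ 2 - C c * X - C d := by
  have hmonic : (X ^ 2 - C c * X - C d).Monic := by monicity!
  have hdeg : (X ^ 2 - C c * X - C d).natDegree = 2 := by compute_degree!
  refine (minpoly.eq_of_irreducible_of_monic ?_ (by simp [h]) hmonic).symm
  rw [irreducible_iff_roots_eq_zero_of_degree_le_three hdeg.ge (by rw [hdeg]; norm_num),
    Multiset.eq_zero_iff_forall_notMem]
  intro x hx
  have hx0 : x ^ 2 - c * x - d = 0 := by simpa using (mem_roots'.1 hx).2
  have hx0' := congrArg (algebraMap F E) hx0
  simp only [map_sub, map_mul, map_pow, map_zero] at hx0'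
  have hfactor : (y - algebraMap F E x) * (y - algebraMap F E (c - x)) = 0 := by
    simp only [map_sub]
    linear_combination h - hx0'
  rcases mul_eq_zero.1 hfactor with h0 | h0
  · exact hy ⟨x, (sub_eq_zero.1 h0).symm⟩
  · exact hy ⟨c - x, (sub_eq_zero.1 h0).symm⟩

namespace IsQuadraticCyclotomic

variable {K : Type*} [Field K] [NumberField K] {l p : ℕ} {α ζ : K} {conj : K ≃ₐ[ℚ] K}

lemma sqrt_ne_zero (h : IsQuadraticCyclotomic l p α ζ conj) : α ≠ 0 := by
  rintro rfl
  simpa [h.pos.ne'] using h.sq_eq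

lemma isIntegral_sqrt (h : IsQuadraticCyclotomic l p α ζ conj) : IsIntegral ℤ α :=
  .of_pow two_pos (h.sq_eq ▸ (isIntegral_natCast l).neg)

lemma algHom_ext (h : IsQuadraticCyclotomic l p α ζ conj) {L : Type*} [Field L] [Algebra ℚ L]
    {f g : K →ₐ[ℚ] L} (hα : f α = g α) (hζ : f ζ = g ζ) : f = g := by
  have htop : Algebra.adjoin ℚ {α, ζ} = ⊤ := by
    rw [← top_toSubalgebra, ← h.adjoin_eq_top, adjoin_toSubalgebra]
  exact AlgHom.ext_of_adjoin_eq_top htop (by simp [Set.EqOn, hα, hζ])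

lemma conj_conj (h : IsQuadraticCyclotomic l p α ζ conj) (x : K) : conj (conj x) = x :=
  DFunLike.congr_fun (h.algHom_ext (f := (conj.trans conj).toAlgHom) (g := .id ℚ K)
    (by simp [h.conj_sqrt]) (by simp [h.conj_root])) x

lemma star_algHom_apply (h : IsQuadraticCyclotomic l p α ζ conj) (hp : p ≠ 0) (φ : K →ₐ[ℚ] ℂ)
    (x : K) : star (φ x) = φ (conj x) := by
  refine DFunLike.congr_fun (h.algHom_ext
    (f := (Complex.conjAe.toAlgHom.restrictScalars ℚ).comp φ) (g := φ.comp conj.toAlgHom) ?_ ?_) x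
  · have hsq : φ α ^ 2 = -l := by simp [← map_pow, h.sq_eq]
    simpa [h.conj_sqrt] using star_eq_neg_of_sq_eq_neg (mod_cast h.pos : (0 : ℝ) < l) (by simpa)
  · have hnorm : ‖φ ζ‖ = 1 := (h.isPrimitiveRoot.map_of_injective φ.injective).norm'_eq_one hp
    simpa [h.conj_root] using (Complex.inv_eq_conj hnorm).symm

-- `-1 = c ^ 2` in `ZMod p`, so `conj` is a square in the Galois group of `ℚ(ζ)` and fixes every
-- square root of a rational number in `ℚ(ζ)`.
lemma sqrt_notMem_adjoin_root [Fact p.Prime] (h : IsQuadraticCyclotomic l p α ζ conj)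
    (hp : p % 4 = 1) : α ∉ ℚ⟮ζ⟯ := by
  intro hmem
  have hcyc : IsCyclotomicExtension {p} ℚ ℚ⟮ζ⟯ :=
    h.isPrimitiveRoot.intermediateField_adjoin_isCyclotomicExtension ℚ
  have hgen := isPrimitiveRoot_adjoinSimple_gen (F := ℚ) h.isPrimitiveRoot
  obtain ⟨c, hc⟩ := (ZMod.exists_sq_eq_neg_one_iff (p := p)).2 (by omega)
  have hc0 : c ≠ 0 := by rintro rfl; simp at hc
  obtain ⟨σ, hσ⟩ := exists_algEquiv_root_eq_pow hgen
    (ZMod.val_coe_unit_coprime (Units.mk0 c hc0))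
  have hσζ : conj ζ = (σ (σ (AdjoinSimple.gen ℚ ζ)) : K) := by
    have hval : ζ ^ (c.val * c.val) = ζ⁻¹ := by
      apply eq_inv_of_mul_eq_one_left
      rw [← pow_succ, h.isPrimitiveRoot.pow_eq_one_iff_dvd, ← ZMod.natCast_eq_zero_iff]
      simp [← hc]
    simp [hσ, h.conj_root, ← pow_mul, hval]
  have hσσ : conj.toAlgHom.comp ℚ⟮ζ⟯.val = ℚ⟮ζ⟯.val.comp (σ.trans σ).toAlgHom := by
    refine algHom_ext_of_eq_adjoin ℚ rfl ?_
    rintro _ rfl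
    exact hσζ
  have hσα : σ (σ ⟨α, hmem⟩) = ⟨α, hmem⟩ := by
    have hsq : σ ⟨α, hmem⟩ ^ 2 = ⟨α, hmem⟩ ^ 2 := by
      have : (⟨α, hmem⟩ : ℚ⟮ζ⟯) ^ 2 = -l := Subtype.ext (by simpa using h.sq_eq)
      rw [← map_pow, this, map_neg, map_natCast]
    rcases sq_eq_sq_iff_eq_or_eq_neg.1 hsq with h | h <;> simp [h]
  have hconj : -α = α := by
    have hα : conj α = (σ (σ ⟨α, hmem⟩) : K) := DFunLike.congr_fun hσσ ⟨α, hmem⟩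
    rwa [hσα, h.conj_sqrt] at hα
  exact h.sqrt_ne_zero (self_eq_neg.1 hconj.symm)

lemma mem_adjoin_of_isIntegral_of_mem_adjoin_sqrt (h : IsQuadraticCyclotomic l p α ζ conj)
    (hl : Squarefree l) {ω x : K} (hω : IsQuadraticIntegerGenerator l α ω) (hx : x ∈ ℚ⟮α⟯)
    (hxi : IsIntegral ℤ x) : x ∈ Algebra.adjoin ℤ {ω} := by
  rw [← mem_toSubalgebra, adjoin_simple_toSubalgebra_of_isAlgebraic
    (Algebra.IsAlgebraic.isAlgebraic α)] at hx
  obtain ⟨a, b, rfl⟩ :=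
    exists_eq_add_mul_of_mem_adjoin (c := 0) (d := (-l : ℚ)) (by simp [h.sq_eq]) hx
  refine mem_adjoin_of_isIntegral_add_mul hl h.sq_eq hω hxi ?_
  simpa [h.conj_sqrt, ← sub_eq_add_neg] using hxi.map (conj.toAlgHom.restrictScalars ℤ)

lemma finrank_eq [Fact p.Prime] (h : IsQuadraticCyclotomic l p α ζ conj) (hp : p % 4 = 1) :
    Module.finrank ℚ K = 2 * (p - 1) := by
  have hcyc : IsCyclotomicExtension {p} ℚ ℚ⟮ζ⟯ :=
    h.isPrimitiveRoot.intermediateField_adjoin_isCyclotomicExtension ℚ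
  have hmin : minpoly ℚ⟮ζ⟯ α = X ^ 2 - C 0 * X - C (-l : ℚ⟮ζ⟯) :=
    minpoly_eq_of_sq_eq (by simpa using h.sqrt_notMem_adjoin_root hp) (by simp [h.sq_eq])
  let B := PowerBasis.ofAdjoinEqTop (Algebra.IsIntegral.isIntegral α)
    (adjoin_adjoin_simple_eq_top h.adjoin_eq_top)
  have hB : Module.finrank ℚ⟮ζ⟯ K = 2 := by
    rw [B.finrank, ← B.natDegree_minpoly, PowerBasis.ofAdjoinEqTop_gen, hmin]
    compute_degree!
  rw [← Module.finrank_mul_finrank ℚ ℚ⟮ζ⟯ K, hB,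
    IsCyclotomicExtension.finrank (n := p) ℚ⟮ζ⟯ (cyclotomic.irreducible_rat (NeZero.pos p)),
    Nat.totient_prime Fact.out, mul_comm]

lemma mem_adjoin_of_isIntegral [Fact p.Prime] (h : IsQuadraticCyclotomic l p α ζ conj)
    (hp : p ≠ 2) (hl : Squarefree l) (hpl : ¬ p ∣ l) {ω x : K}
    (hω : IsQuadraticIntegerGenerator l α ω) (hx : IsIntegral ℤ x) :
    x ∈ Algebra.adjoin ℤ {ζ, ω} := by
  have hζS : Algebra.adjoin ℤ {ζ} ≤ Algebra.adjoin ℤ {ζ, ω} := Algebra.adjoin_mono (by simp)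
  have hωS : Algebra.adjoin ℤ {ω} ≤ Algebra.adjoin ℤ {ζ, ω} := Algebra.adjoin_mono (by simp)
  have hζ : ζ ∈ Algebra.adjoin ℤ {ζ, ω} := Algebra.subset_adjoin (by simp)
  have hα : α ∈ Algebra.adjoin ℤ {ζ, ω} :=
    hωS (h.mem_adjoin_of_isIntegral_of_mem_adjoin_sqrt hl hω (mem_adjoin_simple_self ℚ α)
      h.isIntegral_sqrt)
  have hpx : p * x ∈ Algebra.adjoin ℤ {ζ, ω} := by
    have := derivative_mul_mem_of_isIntegral (P := X ^ p - C 1) (y := ζ) (M := ℚ⟮α⟯)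
      (adjoin_adjoin_simple_eq_top (Set.pair_comm α ζ ▸ h.adjoin_eq_top))
      (monic_X_pow_sub_C 1 (NeZero.ne p))
      (by simp [h.isPrimitiveRoot.pow_eq_one])
      (fun m hm hmi ↦ hωS (h.mem_adjoin_of_isIntegral_of_mem_adjoin_sqrt hl hω hm hmi)) hζ hx
    have hmul := mul_mem hζ this
    rw [derivative_sub, derivative_C, sub_zero, derivative_X_pow, map_mul, map_pow, aeval_X,
      aeval_C, ← mul_assoc, mul_left_comm, mul_pow_sub_one (NeZero.ne p),
      h.isPrimitiveRoot.pow_eq_one] at hmul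
    simpa using hmul
  have hlx : (4 * l : ℕ) * x ∈ Algebra.adjoin ℤ {ζ, ω} := by
    have := derivative_mul_mem_of_isIntegral (P := X ^ 2 + C (l : ℤ)) (y := α) (M := ℚ⟮ζ⟯)
      (adjoin_adjoin_simple_eq_top h.adjoin_eq_top) (by monicity!) (by simp [h.sq_eq])
      (fun m hm hmi ↦ hζS (mem_of_isIntegral_of_mem_adjoin_root h.isPrimitiveRoot hm hmi)) hα hx
    have hmul := neg_mem (mul_mem (mul_mem (ofNat_mem _ 2) hα) this)
    have heq : (4 * l : ℕ) * x = -(2 * α * (aeval α (derivative (X ^ 2 + C (l : ℤ))) * x)) := by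
      simp only [derivative_add, derivative_X_sq, derivative_C, add_zero, map_mul, map_ofNat,
        aeval_X]
      push_cast
      linear_combination 4 * x * h.sq_eq
    exact heq ▸ hmul
  obtain ⟨s, t, hst⟩ : IsCoprime (p : ℤ) (4 * l : ℕ) := by
    have hp' : p.Prime := Fact.out
    rw [Nat.isCoprime_iff_coprime, hp'.coprime_iff_not_dvd, hp'.dvd_mul, not_or]
    exact ⟨fun h4 ↦ hp ((Nat.prime_dvd_prime_iff_eq hp' Nat.prime_two).1
      (hp'.dvd_of_dvd_pow (n := 2) h4)), hpl⟩
  have hst' : (s * p + t * (4 * l : ℕ) : K) = 1 := mod_cast congrArg (Int.cast : ℤ → K) hst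
  have heq : x = s * (p * x) + t * ((4 * l : ℕ) * x) := by linear_combination -x * hst'
  exact heq ▸ add_mem (mul_mem (intCast_mem _ s) hpx) (mul_mem (intCast_mem _ t) hlx)

end IsQuadraticCyclotomic

end QuadraticCyclotomic

section IntegralUnits

/-- `u` is a unit of the ring of algebraic integers. -/
def IsIntegralUnit {K : Type*} [Field K] (u : K) : Prop :=
  u ≠ 0 ∧ IsIntegral ℤ u ∧ IsIntegral ℤ u⁻¹

namespace IsIntegralUnit

variable {K : Type*} [Field K] {u v x : K}

lemma inv (hu : IsIntegralUnit u) : IsIntegralUnit u⁻¹ :=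
  ⟨inv_ne_zero hu.1, hu.2.2, by simpa using hu.2.1⟩

lemma mul (hu : IsIntegralUnit u) (hv : IsIntegralUnit v) : IsIntegralUnit (u * v) :=
  ⟨mul_ne_zero hu.1 hv.1, hu.2.1.mul hv.2.1, by simpa [mul_comm] using hu.2.2.mul hv.2.2⟩

lemma one : IsIntegralUnit (1 : K) := ⟨one_ne_zero, isIntegral_one, by simpa using isIntegral_one⟩

lemma prod {ι : Type*} {s : Finset ι} {f : ι → K} (hf : ∀ i ∈ s, IsIntegralUnit (f i)) :
    IsIntegralUnit (∏ i ∈ s, f i) :=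
  Finset.prod_induction f IsIntegralUnit (fun _ _ ↦ mul) one hf

lemma isIntegral_mul_iff (hu : IsIntegralUnit u) : IsIntegral ℤ (u * x) ↔ IsIntegral ℤ x :=
  ⟨fun h ↦ by simpa [hu.1] using hu.2.2.mul h, hu.2.1.mul⟩

end IsIntegralUnit

lemma isIntegralUnit_of_pow_eq_one {K : Type*} [Field K] {u : K} {n : ℕ} (hn : n ≠ 0)
    (hu : u ^ n = 1) : IsIntegralUnit u :=
  ⟨ne_zero_pow hn (by simp [hu]), .of_pow (Nat.pos_of_ne_zero hn) (hu ▸ isIntegral_one),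
    .of_pow (Nat.pos_of_ne_zero hn) (by simpa [hu] using isIntegral_one)⟩

end IntegralUnits

section QuadraticCyclotomicDifferent

open Polynomial IntermediateField

lemma sub_one_mul_derivative_cyclotomic {C : Type*} [Field C] [CharZero C] {p : ℕ}
    [Fact p.Prime] {ζ : C} (hζ : IsPrimitiveRoot ζ p) :
    (ζ - 1) * aeval ζ (derivative (cyclotomic p ℚ)) = p * ζ ^ (p - 1) := by
  have h := congrArg (fun P : ℚ[X] ↦ aeval ζ (derivative P)) (cyclotomic_prime_mul_X_sub_one ℚ p)
  have h0 : aeval ζ (cyclotomic p ℚ) = 0 := by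
    rw [cyclotomic_eq_minpoly_rat hζ (NeZero.pos p), minpoly.aeval]
  simpa [h0, mul_comm, derivative_X_pow] using h

lemma forall_trace_isInt_iff_of_isCyclotomicExtension {C : Type*} [Field C] [NumberField C]
    {p : ℕ} [Fact p.Prime] [IsCyclotomicExtension {p} ℚ C] {ζ : C} (hζ : IsPrimitiveRoot ζ p)
    (y : C) :
    (∀ z, IsIntegral ℤ z → ∃ n : ℤ, Algebra.trace ℚ C (y * z) = n) ↔
      IsIntegral ℤ (p / (ζ - 1) * y) := by
  have hint := IsCyclotomicExtension.Rat.isIntegralClosure_adjoin_singleton_of_prime hζ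
  have hmem (z : C) : z ∈ Algebra.adjoin ℤ {ζ} ↔ IsIntegral ℤ z :=
    ⟨fun hz ↦ hint.isIntegral_iff.2 ⟨⟨z, hz⟩, rfl⟩, fun hz ↦ by
      obtain ⟨w, rfl⟩ := hint.isIntegral_iff.1 hz
      exact w.2⟩
  have hunit : IsIntegralUnit (ζ ^ (p - 1)) :=
    isIntegralUnit_of_pow_eq_one (NeZero.ne p)
      (by rw [← pow_mul, mul_comm, pow_mul, hζ.pow_eq_one, one_pow])
  have hsub : ζ - 1 ≠ 0 := sub_ne_zero.2 (hζ.ne_one (Nat.Prime.one_lt Fact.out))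
  have hζi : IsIntegral ℤ ζ := hζ.isIntegral (NeZero.pos p)
  have hder : aeval ζ (derivative (minpoly ℚ ζ)) * y = ζ ^ (p - 1) * (p / (ζ - 1) * y) := by
    rw [← cyclotomic_eq_minpoly_rat hζ (NeZero.pos p)]
    field_simp
    linear_combination y * sub_one_mul_derivative_cyclotomic hζ
  have htop : Algebra.adjoin ℚ {ζ} = ⊤ := IsCyclotomicExtension.adjoin_primitive_root_eq_top hζ
  have key := forall_trace_mem_range_iff_derivative_mul_mem_adjoin (A := ℤ) htop hζi y
  simp only [hmem, hder, hunit.isIntegral_mul_iff] at key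
  rw [← key]
  simp [eq_comm]

lemma isIntegral_quadraticIntegerGenerator {K : Type*} [Field K] [CharZero K] {l : ℕ} {α ω : K}
    (hα : α ^ 2 = -l) (hω : IsQuadraticIntegerGenerator l α ω) : IsIntegral ℤ ω := by
  rcases hω with ⟨hl, hω⟩ | ⟨-, rfl⟩
  · obtain ⟨m, hm⟩ : ∃ m, l + 1 = 4 * m := ⟨(l + 1) / 4, by omega⟩
    have hmK : (l + 1 : K) = 4 * m := mod_cast congrArg (Nat.cast : ℕ → K) hm
    have hsq : ω ^ 2 - ω + m = 0 := by
      linear_combination ((2 * ω - 1 + α) * hω + hα - hmK) / 4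
    exact ⟨X ^ 2 - X + C (m : ℤ), by monicity!, by simpa [eval₂_add, eval₂_sub] using hsq⟩
  · exact .of_pow two_pos (hα ▸ (isIntegral_natCast l).neg)

namespace IsQuadraticCyclotomic

variable {K : Type*} [Field K] [NumberField K] {l p : ℕ} [Fact p.Prime] {α ζ ω : K}
  {conj : K ≃ₐ[ℚ] K}

lemma mem_adjoin_ringOfIntegers_iff_isIntegral (h : IsQuadraticCyclotomic l p α ζ conj)
    (hp : p ≠ 2) (hl : Squarefree l) (hpl : ¬ p ∣ l) (hω : IsQuadraticIntegerGenerator l α ω)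
    (x : K) : x ∈ Algebra.adjoin (𝓞 ℚ⟮ζ⟯) {ω} ↔ IsIntegral ℤ x := by
  have hωi := isIntegral_quadraticIntegerGenerator h.sq_eq hω
  refine ⟨fun hx ↦ isIntegral_trans (A := 𝓞 ℚ⟮ζ⟯) _
    (adjoin_le_integralClosure hωi.tower_top hx), fun hx ↦ ?_⟩
  have hζmem : ζ ∈ Algebra.adjoin (𝓞 ℚ⟮ζ⟯) {ω} :=
    have hgen := isPrimitiveRoot_adjoinSimple_gen (F := ℚ) h.isPrimitiveRoot
    (Algebra.adjoin (𝓞 ℚ⟮ζ⟯) {ω}).algebraMap_mem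
      (⟨AdjoinSimple.gen ℚ ζ, hgen.isIntegral (NeZero.pos p)⟩ : 𝓞 ℚ⟮ζ⟯)
  have hωmem : ω ∈ Algebra.adjoin (𝓞 ℚ⟮ζ⟯) {ω} := Algebra.self_mem_adjoin_singleton _ _
  have hxmem := h.mem_adjoin_of_isIntegral hp hl hpl hω hx
  clear hx
  induction hxmem using Algebra.adjoin_induction with
  | mem x hx => rcases hx with rfl | rfl <;> assumption
  | algebraMap n => exact intCast_mem _ n
  | add _ _ _ _ hz hw => exact add_mem hz hw
  | mul _ _ _ _ hz hw => exact mul_mem hz hw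

lemma forall_trace_adjoin_root_mem_range_iff (h : IsQuadraticCyclotomic l p α ζ conj)
    (hp : p % 4 = 1) (hl : Squarefree l) (hpl : ¬ p ∣ l) (hl3 : l % 4 = 3) (y : K) :
    (∀ z : K, IsIntegral ℤ z → IsIntegral ℤ (Algebra.trace ℚ⟮ζ⟯ K (y * z))) ↔
      IsIntegral ℤ (α * y) := by
  have hω : IsQuadraticIntegerGenerator l α ((1 + α) / 2) := .inl ⟨hl3, by ring⟩
  have hmem := h.mem_adjoin_ringOfIntegers_iff_isIntegral (by omega) hl hpl hω
  have htop : Algebra.adjoin ℚ⟮ζ⟯ {(1 + α) / 2} = ⊤ := by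
    rw [eq_top_iff, ← adjoin_adjoin_simple_eq_top h.adjoin_eq_top]
    have hmem2 := add_mem (Algebra.self_mem_adjoin_singleton ℚ⟮ζ⟯ ((1 + α) / 2))
      (Algebra.self_mem_adjoin_singleton ℚ⟮ζ⟯ ((1 + α) / 2))
    rw [add_halves] at hmem2
    exact Algebra.adjoin_le (Set.singleton_subset_iff.2 (by simpa using sub_mem hmem2 (one_mem _)))
  obtain ⟨m, hm⟩ : ∃ m, l + 1 = 4 * m := ⟨(l + 1) / 4, by omega⟩
  have hmK : (l + 1 : K) = 4 * m := mod_cast congrArg (Nat.cast : ℕ → K) hm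
  have hmin : minpoly ℚ⟮ζ⟯ ((1 + α) / 2) = X ^ 2 - C 1 * X - C (-m : ℚ⟮ζ⟯) := by
    refine minpoly_eq_of_sq_eq ?_ ?_
    · rintro ⟨x, hx : (x : K) = (1 + α) / 2⟩
      have hα : 2 * (x : K) - 1 = α := by linear_combination 2 * hx
      exact h.sqrt_notMem_adjoin_root hp
        (hα ▸ sub_mem (mul_mem (ofNat_mem _ 2) x.2) (one_mem _))
    · simp only [map_one, one_mul, map_neg, map_natCast]
      linear_combination (h.sq_eq - hmK) / 4
  have key := forall_trace_mem_range_iff_derivative_mul_mem_adjoin (A := 𝓞 ℚ⟮ζ⟯) htop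
    (isIntegral_quadraticIntegerGenerator h.sq_eq hω).tower_top y
  have hder : aeval ((1 + α) / 2) (derivative (minpoly ℚ⟮ζ⟯ ((1 + α) / 2))) = α := by
    rw [hmin]
    simp
    ring
  simp only [hmem, hder] at key
  rw [← key]
  simp [IsIntegralClosure.isIntegral_iff (A := 𝓞 ℚ⟮ζ⟯) (R := ℤ)]

lemma forall_trace_isInt_iff (h : IsQuadraticCyclotomic l p α ζ conj)
    (hp : p % 4 = 1) (hl : Squarefree l) (hpl : ¬ p ∣ l) (hl3 : l % 4 = 3) (y : K) :
    (∀ z : K, IsIntegral ℤ z → ∃ n : ℤ, Algebra.trace ℚ K (y * z) = n) ↔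
      IsIntegral ℤ (p / (ζ - 1) * (α * y)) := by
  have hcyc : IsCyclotomicExtension {p} ℚ ℚ⟮ζ⟯ :=
    h.isPrimitiveRoot.intermediateField_adjoin_isCyclotomicExtension ℚ
  have hgen := isPrimitiveRoot_adjoinSimple_gen (F := ℚ) h.isPrimitiveRoot
  set c : ℚ⟮ζ⟯ := p / (AdjoinSimple.gen ℚ ζ - 1) with hc
  have hcK : (algebraMap ℚ⟮ζ⟯ K c) = p / (ζ - 1) := by simp [hc]
  rw [← hcK, mul_left_comm, ← h.forall_trace_adjoin_root_mem_range_iff hp hl hpl hl3]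
  calc (∀ z : K, IsIntegral ℤ z → ∃ n : ℤ, Algebra.trace ℚ K (y * z) = n)
    _ ↔ ∀ z : K, IsIntegral ℤ z → ∀ m : ℚ⟮ζ⟯, IsIntegral ℤ m →
          ∃ n : ℤ, Algebra.trace ℚ ℚ⟮ζ⟯ (Algebra.trace ℚ⟮ζ⟯ K (y * z) * m) = n := by
        have htr (z : K) (m : ℚ⟮ζ⟯) : Algebra.trace ℚ ℚ⟮ζ⟯ (Algebra.trace ℚ⟮ζ⟯ K (y * z) * m) =
            Algebra.trace ℚ K (y * (z * m)) := by
          rw [mul_comm, ← smul_eq_mul, ← map_smul, Algebra.trace_trace, Algebra.smul_def]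
          exact congrArg _ (by rw [IntermediateField.algebraMap_apply]; ring)
        simp only [htr]
        refine ⟨fun H z hz m hm ↦ H _ (hz.mul (hm.map (ℚ⟮ζ⟯.val.restrictScalars ℤ))),
          fun H z hz ↦ by simpa using H z hz 1 isIntegral_one⟩
    _ ↔ ∀ z : K, IsIntegral ℤ z → IsIntegral ℤ (c * Algebra.trace ℚ⟮ζ⟯ K (y * z)) := by
        simp only [forall_trace_isInt_iff_of_isCyclotomicExtension hgen, hc]
    _ ↔ ∀ z : K, IsIntegral ℤ z →
          IsIntegral ℤ (Algebra.trace ℚ⟮ζ⟯ K (algebraMap ℚ⟮ζ⟯ K c * y * z)) := by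
        simp only [← Algebra.smul_def, smul_mul_assoc, map_smul, smul_eq_mul]

end IsQuadraticCyclotomic

end QuadraticCyclotomicDifferent

section ResidueProducts

variable {q : ℕ} [Fact q.Prime] {C : Type*} [Field C] {ψ : AddChar (ZMod q) C}

lemma isPrimitiveRoot_addChar_one (hψ : ψ.IsPrimitive) : IsPrimitiveRoot (ψ 1) q := by
  have hpow (k : ℕ) : ψ 1 ^ k = 1 ↔ q ∣ k := by
    rw [← AddChar.map_nsmul_eq_pow, nsmul_one, hψ.zmod_char_eq_one_iff,
      ZMod.natCast_eq_zero_iff]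
  exact IsPrimitiveRoot.iff_def _ _ |>.2 ⟨(hpow q).2 dvd_rfl, fun k hk ↦ (hpow k).1 hk⟩

lemma injective_of_isPrimitive (hψ : ψ.IsPrimitive) : Function.Injective ψ := fun a b hab ↦ by
  rw [← sub_eq_zero, ← hψ.zmod_char_eq_one_iff, AddChar.map_sub_eq_div, hab,
    div_self (ψ.val_isUnit b).ne_zero]

lemma image_addChar_eq_nthRootsFinset [DecidableEq C] (hψ : ψ.IsPrimitive) :
    Finset.univ.image ψ = Polynomial.nthRootsFinset q (1 : C) := by
  refine Finset.eq_of_subset_of_card_le (fun x hx ↦ ?_) ?_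
  · obtain ⟨b, -, rfl⟩ := Finset.mem_image.1 hx
    rw [Polynomial.mem_nthRootsFinset (NeZero.pos q), ← AddChar.map_nsmul_eq_pow,
      nsmul_eq_mul, CharP.cast_eq_zero, zero_mul, AddChar.map_zero_eq_one]
  · rw [(isPrimitiveRoot_addChar_one hψ).card_nthRootsFinset,
      Finset.card_image_of_injective _ (injective_of_isPrimitive hψ), Finset.card_univ, ZMod.card]

lemma prod_addChar_eq_addChar_sum {ι G R : Type*} [AddCommMonoid G] [CommMonoid R]
    (ψ : AddChar G R) (s : Finset ι) (f : ι → G) : ∏ i ∈ s, ψ (f i) = ψ (∑ i ∈ s, f i) :=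
  (map_prod ψ.toMonoidHom (fun i ↦ Multiplicative.ofAdd (f i)) s).symm

lemma prod_addChar_eq_one (hq : q ≠ 2) (ψ : AddChar (ZMod q) C) : ∏ b, ψ b = 1 := by
  have htwo : (2 : ZMod q) ≠ 0 := Ring.two_ne_zero ((ZMod.ringChar_zmod_n q).trans_ne hq)
  have hsum : ∑ b : ZMod q, b = 0 := by
    have hneg : ∑ b : ZMod q, -b = ∑ b : ZMod q, b := Equiv.sum_comp (Equiv.neg _) id
    rw [Finset.sum_neg_distrib] at hneg
    exact (mul_eq_zero.1 (by linear_combination -hneg)).resolve_left htwo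
  rw [prod_addChar_eq_addChar_sum, hsum, AddChar.map_zero_eq_one]

lemma prod_mul_addChar_sub_inv (hq : q ≠ 2) (hψ : ψ.IsPrimitive) (y : C) :
    ∏ b, (y * ψ b - (y * ψ b)⁻¹) = y ^ q - (y ^ q)⁻¹ := by
  classical
  have htwo : (-2 : ZMod q) ≠ 0 :=
    neg_ne_zero.2 (Ring.two_ne_zero ((ZMod.ringChar_zmod_n q).trans_ne hq))
  have hterm (b : ZMod q) : y * ψ b - (y * ψ b)⁻¹ = ψ b * (y - ψ (-2 * b) * y⁻¹) := by
    have hne : ψ b ≠ 0 := (ψ.val_isUnit b).ne_zero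
    have hsq : ψ (-2 * b) = (ψ b)⁻¹ * (ψ b)⁻¹ := by
      rw [← AddChar.map_neg_eq_inv, ← AddChar.map_add_eq_mul]
      ring_nf
    rw [hsq, mul_sub, mul_assoc, mul_inv_cancel_left₀ hne, mul_inv]
    ring
  calc ∏ b, (y * ψ b - (y * ψ b)⁻¹)
      = ∏ b, (y - ψ (-2 * b) * y⁻¹) := by
        simp_rw [hterm, Finset.prod_mul_distrib, prod_addChar_eq_one hq, one_mul]
    _ = ∏ b, (y - ψ b * y⁻¹) :=
        Equiv.prod_comp (Equiv.mulLeft₀ _ htwo) fun b ↦ y - ψ b * y⁻¹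
    _ = y ^ q - (y ^ q)⁻¹ := by
        rw [← inv_pow, (isPrimitiveRoot_addChar_one hψ).pow_sub_pow_eq_prod_sub_mul _ _
          (NeZero.pos q), ← image_addChar_eq_nthRootsFinset hψ,
          Finset.prod_image (injective_of_isPrimitive hψ).injOn]

/-- The part of the factorisation `y ^ q - y⁻¹ ^ q = ∏ b, (y ψ(b) - (y ψ(b))⁻¹)` indexed by the
`b` with Legendre symbol `c`. -/
def residueProd (ψ : AddChar (ZMod q) C) (c : ℤ) (y : C) : C :=
  ∏ b with quadraticChar (ZMod q) b = c, (y * ψ b - (y * ψ b)⁻¹)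

lemma residueProd_mul_residueProd_neg (hq : q ≠ 2) (hψ : ψ.IsPrimitive) (y : C) :
    residueProd ψ 1 y * residueProd ψ (-1) y * (y - y⁻¹) = y ^ q - (y ^ q)⁻¹ := by
  have hneg : ({b | ¬ quadraticChar (ZMod q) b = 1} : Finset (ZMod q)) =
      insert 0 ({b | quadraticChar (ZMod q) b = -1} : Finset (ZMod q)) := by
    ext b
    simp only [Finset.mem_filter_univ, Finset.mem_insert]
    obtain rfl | hb := eq_or_ne b 0
    · simp
    · simpa only [hb, false_or] using quadraticChar_eq_neg_one_iff_not_one hb |>.symm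
  rw [← prod_mul_addChar_sub_inv hq hψ, residueProd, residueProd,
    ← Finset.prod_filter_mul_prod_filter_not Finset.univ (fun b ↦ quadraticChar (ZMod q) b = 1),
    hneg, Finset.prod_insert (by simp), AddChar.map_zero_eq_one, mul_one]
  ring

lemma map_residueProd {σ : C →+* C} {a : ZMod q} (ha : a ≠ 0) (hσ : ∀ b, σ (ψ b) = ψ (a * b))
    (c : ℤ) (y : C) :
    σ (residueProd ψ c y) = residueProd ψ (quadraticChar (ZMod q) a * c) (σ y) := by
  have hmem (b : ZMod q) : quadraticChar (ZMod q) b = c ↔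
      quadraticChar (ZMod q) (a * b) = quadraticChar (ZMod q) a * c := by
    rw [map_mul, mul_right_inj' (mt quadraticChar_eq_zero_iff.1 ha)]
  rw [residueProd, map_prod, residueProd]
  exact Finset.prod_equiv (Equiv.mulLeft₀ a ha) (by simpa using hmem) (by simp [hσ])

lemma quadraticChar_neg_one_of_mod_four_eq_three (hq : q % 4 = 3) :
    quadraticChar (ZMod q) (-1) = -1 := by
  rw [quadraticChar_neg_one ((ZMod.ringChar_zmod_n q).trans_ne (by omega)), ZMod.card,
    ZMod.χ₄_nat_three_mod_four hq]

lemma residueProd_neg_inv (hq : q % 4 = 3) (c : ℤ) (y : C) :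
    residueProd ψ (-c) y⁻¹ =
      (-1) ^ (Finset.univ.filter fun b : ZMod q ↦ quadraticChar (ZMod q) b = c).card *
        residueProd ψ c y := by
  have hneg (b : ZMod q) :
      quadraticChar (ZMod q) b = -c ↔ quadraticChar (ZMod q) (-b) = c := by
    rw [← neg_one_mul b, map_mul, quadraticChar_neg_one_of_mod_four_eq_three hq, neg_one_mul,
      neg_eq_iff_eq_neg]
  rw [← Finset.prod_const, residueProd, residueProd, ← Finset.prod_mul_distrib]
  refine Finset.prod_equiv (Equiv.neg _) (by simpa using hneg) fun b _ ↦ ?_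
  rw [Equiv.neg_apply, AddChar.map_neg_eq_inv, mul_inv, mul_inv, inv_inv, inv_inv]
  ring

/-- The product of `residueProd ψ c (ζ ^ q ^ i)` over `i < n`: for `ζ` a root of unity whose
`q ^ n`-th power is `ζ⁻¹`, the factors telescope and the two signs of `c` give units with
product `-1`. -/
def residueUnit (ψ : AddChar (ZMod q) C) (ζ : C) (n : ℕ) (c : ℤ) : C :=
  ∏ i ∈ Finset.range n, residueProd ψ c (ζ ^ q ^ i)

lemma residueUnit_mul_residueUnit_neg (hq : q ≠ 2) (hψ : ψ.IsPrimitive) (ζ : C) (n : ℕ) :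
    residueUnit ψ ζ n 1 * residueUnit ψ ζ n (-1) * (ζ - ζ⁻¹) =
      ζ ^ q ^ n - (ζ ^ q ^ n)⁻¹ := by
  induction n with
  | zero => simp [residueUnit]
  | succ n ih =>
    have hstep := residueProd_mul_residueProd_neg hq hψ (ζ ^ q ^ n)
    rw [← pow_mul, ← pow_succ] at hstep
    rw [← hstep, ← ih, residueUnit, residueUnit, residueUnit, residueUnit,
      Finset.prod_range_succ, Finset.prod_range_succ]
    ring

lemma map_residueUnit {σ : C →+* C} {a : ZMod q} (ha : a ≠ 0)
    (hσ : ∀ b, σ (ψ b) = ψ (a * b)) (ζ : C) (n : ℕ) (c : ℤ) :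
    σ (residueUnit ψ ζ n c) = residueUnit ψ (σ ζ) n (quadraticChar (ZMod q) a * c) := by
  simp only [residueUnit, map_prod, map_residueProd ha hσ, map_pow]

lemma residueUnit_neg_inv (hq : q % 4 = 3) {n : ℕ} (hn : Even n) (ζ : C) (c : ℤ) :
    residueUnit ψ ζ⁻¹ n (-c) = residueUnit ψ ζ n c := by
  simp only [residueUnit, inv_pow, residueProd_neg_inv hq, Finset.prod_mul_distrib,
    Finset.prod_const, Finset.card_range, pow_right_comm (-1 : C) _ n, hn.neg_one_pow, one_pow,
    one_mul]

lemma isIntegral_residueUnit {p : ℕ} (hp : 0 < p) {ζ : C} (hζ : ζ ^ p = 1) (n : ℕ)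
    (c : ℤ) : IsIntegral ℤ (residueUnit ψ ζ n c) := by
  refine IsIntegral.prod _ fun i _ ↦ IsIntegral.prod _ fun b _ ↦ ?_
  have hpow : (ζ ^ q ^ i * ψ b) ^ (p * q) = 1 := by
    rw [mul_pow, ← pow_mul, mul_left_comm, pow_mul, hζ, one_pow, one_mul,
      ← AddChar.map_nsmul_eq_pow, nsmul_eq_mul, Nat.cast_mul, ZMod.natCast_self, mul_zero,
      zero_mul, AddChar.map_zero_eq_one]
  have hpq : 0 < p * q := mul_pos hp (NeZero.pos q)
  exact (IsIntegral.of_pow hpq (hpow ▸ isIntegral_one)).sub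
    (IsIntegral.of_pow hpq (by rw [inv_pow, hpow, inv_one]; exact isIntegral_one))

/-- The quadratic Gauss sum of `ψ`, a square root of `-q` for `q ≡ 3 (mod 4)`. -/
noncomputable def quadraticGaussSum (ψ : AddChar (ZMod q) C) : C :=
  gaussSum ((quadraticChar (ZMod q)).ringHomComp (Int.castRingHom C)) ψ

lemma quadraticGaussSum_sq [CharZero C] (hq : q % 4 = 3) (hψ : ψ.IsPrimitive) :
    quadraticGaussSum ψ ^ 2 = -q := by
  have hchar : (quadraticChar (ZMod q)).ringHomComp (Int.castRingHom C) ≠ 1 :=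
    (MulChar.ringHomComp_ne_one_iff (RingHom.injective_int _)).2
      (quadraticChar_ne_one ((ZMod.ringChar_zmod_n q).trans_ne (by omega)))
  rw [quadraticGaussSum, gaussSum_sq hchar ((quadraticChar_isQuadratic _).comp _) hψ,
    MulChar.ringHomComp_apply, quadraticChar_neg_one_of_mod_four_eq_three hq, ZMod.card]
  simp

lemma map_quadraticGaussSum {σ : C →+* C} {a : ZMod q} (ha : a ≠ 0)
    (hσ : ∀ b, σ (ψ b) = ψ (a * b)) :
    σ (quadraticGaussSum ψ) = quadraticChar (ZMod q) a * quadraticGaussSum ψ := by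
  have hshift : σ (quadraticGaussSum ψ) =
      gaussSum ((quadraticChar (ZMod q)).ringHomComp (Int.castRingHom C)) (ψ.mulShift a) := by
    simp [quadraticGaussSum, gaussSum, hσ, AddChar.mulShift_apply]
  have hsq : (quadraticChar (ZMod q) a * quadraticChar (ZMod q) a : C) = 1 := by
    rw [← Int.cast_mul, ← sq, quadraticChar_sq_one ha, Int.cast_one]
  have hmul := gaussSum_mulShift
    ((quadraticChar (ZMod q)).ringHomComp (Int.castRingHom C)) ψ (Units.mk0 a ha)
  rw [MulChar.ringHomComp_apply, Units.val_mk0, eq_intCast] at hmul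
  rw [hshift, quadraticGaussSum, ← hmul, ← mul_assoc, hsq, one_mul]

end ResidueProducts

section AuxiliaryField

open IntermediateField

lemma mem_adjoin_of_forall_fixed {F C : Type*} [Field F] [Field C] [Algebra F C]
    [FiniteDimensional F C] [IsGalois F C] {s : Set C} {x : C}
    (hx : ∀ σ : C ≃ₐ[F] C, (∀ y ∈ s, σ y = y) → σ x = x) : x ∈ IntermediateField.adjoin F s := by
  rw [← IsGalois.fixedField_fixingSubgroup (IntermediateField.adjoin F s)]
  rintro ⟨σ, hσ⟩
  exact hx σ fun y hy ↦ (mem_fixingSubgroup_iff _ _).1 hσ y (subset_adjoin F s hy)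

lemma adjoin_preimage_val_eq_top {F C : Type*} [Field F] [Field C] [Algebra F C] (s : Set C) :
    IntermediateField.adjoin F ((↑) ⁻¹' s : Set (IntermediateField.adjoin F s)) = ⊤ := by
  refine lift_injective _ ?_
  have himage : ((↑) '' ((↑) ⁻¹' s : Set (IntermediateField.adjoin F s)) : Set C) = s :=
    Set.image_preimage_eq_of_subset fun x hx ↦ ⟨⟨x, subset_adjoin F s hx⟩, rfl⟩
  rw [lift_adjoin, himage, lift_top]

lemma exists_ringEquiv_coe_eq {F C : Type*} [Field F] [Field C] [Algebra F C]
    [IsAbelianGalois F C] (K : IntermediateField F C) (σ : C ≃ₐ[F] C) :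
    ∃ σ' : K ≃+* K, ∀ x : K, (σ' x : C) = σ x :=
  ⟨(σ.restrictNormal K).toRingEquiv, AlgEquiv.restrictNormal_commutes σ K⟩

lemma exists_algEquiv_coe_eq {C : Type*} [Field C] [NumberField C] [IsAbelianGalois ℚ C]
    (K : IntermediateField ℚ C) (σ : C ≃ₐ[ℚ] C) :
    ∃ σ' : K ≃ₐ[ℚ] K, ∀ x : K, (σ' x : C) = σ x :=
  let ⟨σ', hσ'⟩ := exists_ringEquiv_coe_eq K σ
  ⟨AlgEquiv.ofRingEquiv (f := σ') (map_ratCast σ'), hσ'⟩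

lemma exists_algEquiv_pow_pow {C : Type*} [Field C] [NumberField C] {m n : ℕ} [NeZero (m * n)]
    [IsCyclotomicExtension {m * n} ℚ C] (hmn : m.Coprime n) {z : C}
    (hz : IsPrimitiveRoot z (m * n)) {a b : ℕ} (ha : a.Coprime m) (hb : b.Coprime n) :
    ∃ σ : C ≃ₐ[ℚ] C, σ (z ^ n) = (z ^ n) ^ a ∧ σ (z ^ m) = (z ^ m) ^ b := by
  obtain ⟨c, hca, hcb⟩ := Nat.chineseRemainder hmn a b
  have hcm : c.Coprime m := hca.gcd_eq.trans ha
  have hcn : c.Coprime n := hcb.gcd_eq.trans hb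
  obtain ⟨σ, hσ⟩ := exists_algEquiv_root_eq_pow hz (hcm.mul_right hcn)
  refine ⟨σ, ?_, ?_⟩
  · rw [map_pow, hσ, ← pow_mul, ← pow_mul, mul_comm c]
    exact pow_eq_pow_of_modEq (mul_comm m n ▸ hca.mul_left' n) hz.pow_eq_one
  · rw [map_pow, hσ, ← pow_mul, ← pow_mul, mul_comm c]
    exact pow_eq_pow_of_modEq (hcb.mul_left' m) hz.pow_eq_one

lemma map_addChar_eq_of_map_one {q : ℕ} {C : Type*} [Field C] {ψ : AddChar (ZMod q) C}
    [NeZero q] {σ : C →+* C} {b : ℕ} (hσ : σ (ψ 1) = ψ 1 ^ b) (x : ZMod q) :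
    σ (ψ x) = ψ (b * x) := by
  rw [← ZMod.natCast_zmod_val x, ← nsmul_one x.val, AddChar.map_nsmul_eq_pow, map_pow, hσ,
    ← AddChar.map_nsmul_eq_pow, ← AddChar.map_nsmul_eq_pow]
  congr 1
  simp [mul_comm]

lemma exists_forall_map_addChar_eq {q : ℕ} [Fact q.Prime] {C : Type*} [Field C]
    {ψ : AddChar (ZMod q) C} (hψ : ψ.IsPrimitive) (σ : C →+* C) :
    ∃ a : ZMod q, a ≠ 0 ∧ ∀ b, σ (ψ b) = ψ (a * b) := by
  have hroot := isPrimitiveRoot_addChar_one hψ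
  have hpow : σ (ψ 1) ^ q = 1 := by rw [← map_pow, hroot.pow_eq_one, map_one]
  obtain ⟨a, -, ha⟩ := hroot.eq_pow_of_pow_eq_one hpow
  have hσ := map_addChar_eq_of_map_one ha.symm
  refine ⟨a, fun ha0 ↦ ?_, hσ⟩
  have hone : ψ 1 = 1 := σ.injective (by rw [hσ, ha0, zero_mul, AddChar.map_zero_eq_one, map_one])
  exact one_ne_zero (hψ.zmod_char_eq_one_iff q 1 |>.1 hone)

lemma residueUnit_mem_adjoin {q : ℕ} [Fact q.Prime] {C : Type*} [Field C] [NumberField C]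
    [IsGalois ℚ C] {ψ : AddChar (ZMod q) C} (hq : q % 4 = 3) (hψ : ψ.IsPrimitive) (ζ : C) (n : ℕ) :
    residueUnit ψ ζ n 1 ∈ IntermediateField.adjoin ℚ {quadraticGaussSum ψ, ζ} := by
  refine mem_adjoin_of_forall_fixed fun σ hσ ↦ ?_
  obtain ⟨hσg, hσζ⟩ : σ (quadraticGaussSum ψ) = quadraticGaussSum ψ ∧ σ ζ = ζ := by simpa using hσ
  obtain ⟨a, ha, hψa⟩ := exists_forall_map_addChar_eq hψ (σ : C →+* C)
  have hg : quadraticGaussSum ψ ≠ 0 := fun hg ↦ by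
    simpa [hg, NeZero.ne q] using quadraticGaussSum_sq hq hψ
  have hchar : (quadraticChar (ZMod q) a : C) = 1 := by
    exact (mul_eq_right₀ hg).1 ((map_quadraticGaussSum ha hψa).symm.trans hσg)
  have hunit := map_residueUnit ha hψa ζ n 1
  rw [Int.cast_eq_one.1 hchar, one_mul] at hunit
  exact hunit.trans (congrArg (residueUnit ψ · n 1) hσζ)

lemma residueUnit_mul_map_eq_neg_one {q : ℕ} [Fact q.Prime] {C : Type*} [Field C]
    {ψ : AddChar (ZMod q) C} (hq : q % 4 = 3) (hψ : ψ.IsPrimitive) {τ : C →+* C}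
    (hτψ : ∀ b, τ (ψ b) = ψ (-1 * b)) {ζ : C} (hτζ : τ ζ = ζ) (hζ : ζ ≠ ζ⁻¹) {n : ℕ}
    (hn : ζ ^ q ^ n = ζ⁻¹) : residueUnit ψ ζ n 1 * τ (residueUnit ψ ζ n 1) = -1 := by
  have htel := residueUnit_mul_residueUnit_neg (by omega) hψ ζ n
  rw [map_residueUnit (neg_ne_zero.2 one_ne_zero) hτψ, hτζ,
    quadraticChar_neg_one_of_mod_four_eq_three hq, mul_one]
  rw [hn, inv_inv] at htel
  exact mul_right_cancel₀ (sub_ne_zero.2 hζ) (by rw [htel]; ring)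

lemma map_residueUnit_eq_self {q : ℕ} [Fact q.Prime] {C : Type*} [Field C]
    {ψ : AddChar (ZMod q) C} (hq : q % 4 = 3) {σ : C →+* C} (hσψ : ∀ b, σ (ψ b) = ψ (-1 * b))
    {ζ : C} (hσζ : σ ζ = ζ⁻¹) {n : ℕ} (hn : Even n) :
    σ (residueUnit ψ ζ n 1) = residueUnit ψ ζ n 1 := by
  rw [map_residueUnit (neg_ne_zero.2 one_ne_zero) hσψ,
    quadraticChar_neg_one_of_mod_four_eq_three hq, mul_one, hσζ, residueUnit_neg_inv hq hn]

/-- A field `ℚ(√-q, ζ_p)` with generators `j` and `ζ`, its automorphism `τ` over `ℚ(ζ)`, and an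
integral `u`, fixed by complex conjugation, with `u * τ u = -1`. The semilinear map `x ↦ u * τ x`
then squares to `-1`. -/
structure HasUnitOfNormNegOne {K : Type*} [Field K] [NumberField K] (q p : ℕ) (j ζ : K)
    (conj τ : K ≃ₐ[ℚ] K) (u : K) : Prop extends IsQuadraticCyclotomic q p j ζ conj where
  tau_sqrt : τ j = -j
  tau_root : τ ζ = ζ
  isIntegral_unit : IsIntegral ℤ u
  unit_mul_tau : u * τ u = -1
  conj_unit : conj u = u
  exists_algEquiv (a : ℕ) : a.Coprime p → ∃ σ : K ≃ₐ[ℚ] K, σ ζ = ζ ^ a ∧ σ j = j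

lemma exists_hasUnitOfNormNegOne_of_ambient {C : Type*} [Field C] [NumberField C]
    [IsAbelianGalois ℚ C] {p q : ℕ} {g ζ u : C} {conj τ : C ≃ₐ[ℚ] C} (hq : 0 < q)
    (hg : g ^ 2 = -q) (hζ : IsPrimitiveRoot ζ p) (hu : u ∈ IntermediateField.adjoin ℚ {g, ζ})
    (hui : IsIntegral ℤ u) (hconj_g : conj g = -g) (hconj_ζ : conj ζ = ζ⁻¹)
    (hτg : τ g = -g) (hτζ : τ ζ = ζ) (hτu : u * τ u = -1) (hconj_u : conj u = u)
    (hex : ∀ a : ℕ, a.Coprime p → ∃ σ : C ≃ₐ[ℚ] C, σ ζ = ζ ^ a ∧ σ g = g) :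
    ∃ (j' ζ' u' : IntermediateField.adjoin ℚ {g, ζ}) (conj' τ' : _ ≃ₐ[ℚ] _),
      HasUnitOfNormNegOne q p j' ζ' conj' τ' u' := by
  obtain ⟨conj', hconj'⟩ := exists_algEquiv_coe_eq (IntermediateField.adjoin ℚ {g, ζ}) conj
  obtain ⟨τ', hτ'⟩ := exists_algEquiv_coe_eq (IntermediateField.adjoin ℚ {g, ζ}) τ
  have hgK : g ∈ IntermediateField.adjoin ℚ {g, ζ} := subset_adjoin _ _ (by simp)
  have hζK : ζ ∈ IntermediateField.adjoin ℚ {g, ζ} := subset_adjoin _ _ (by simp)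
  refine ⟨⟨g, hgK⟩, ⟨ζ, hζK⟩, ⟨u, hu⟩, conj', τ', ⟨hq, Subtype.ext hg, ?_, ?_,
    Subtype.ext ((hconj' _).trans hconj_g), Subtype.ext ((hconj' _).trans hconj_ζ)⟩,
    Subtype.ext ((hτ' _).trans hτg), Subtype.ext ((hτ' _).trans hτζ), ?_, ?_,
    Subtype.ext ((hconj' _).trans hconj_u), fun a ha ↦ ?_⟩
  · exact IsPrimitiveRoot.coe_submonoidClass_iff.1 hζ
  · have htop := adjoin_preimage_val_eq_top (F := ℚ) {g, ζ}
    have hpre : ((↑) ⁻¹' {g, ζ} : Set (IntermediateField.adjoin ℚ {g, ζ})) =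
        {⟨g, hgK⟩, ⟨ζ, hζK⟩} := by
      ext x
      simp [Subtype.ext_iff]
    rw [hpre] at htop
    exact htop
  · exact (isIntegral_algebraMap_iff (B := C) Subtype.val_injective).1 hui
  · exact Subtype.ext ((congrArg (u * ·) (hτ' _)).trans hτu)
  · obtain ⟨σ, hσζ, hσg⟩ := hex a ha
    obtain ⟨σ', hσ'⟩ := exists_algEquiv_coe_eq (IntermediateField.adjoin ℚ {g, ζ}) σ
    exact ⟨σ', Subtype.ext ((hσ' _).trans hσζ), Subtype.ext ((hσ' _).trans hσg)⟩

lemma pow_pow_eq_inv_of_pow_eq_neg_one {C : Type*} [Field C] {ζ : C} {p q n : ℕ} (hζ : ζ ^ p = 1)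
    (hn : (q : ZMod p) ^ n = -1) : ζ ^ q ^ n = ζ⁻¹ := by
  have hdvd : p ∣ q ^ n + 1 := by
    rw [← ZMod.natCast_eq_zero_iff, Nat.cast_add, Nat.cast_pow, hn, Nat.cast_one, neg_add_cancel]
  obtain ⟨k, hk⟩ := hdvd
  exact eq_inv_of_mul_eq_one_left (by rw [← pow_succ, hk, pow_mul, hζ, one_pow])

lemma ne_inv_of_isPrimitiveRoot {C : Type*} [Field C] {ζ : C} {p : ℕ} (hζ : IsPrimitiveRoot ζ p)
    (hp : 2 < p) : ζ ≠ ζ⁻¹ := fun h ↦ by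
  have hsq : ζ ^ 2 = 1 := by
    rw [sq]
    nth_rw 2 [h]
    exact mul_inv_cancel₀ (hζ.ne_zero (by omega))
  exact absurd (Nat.le_of_dvd two_pos (hζ.dvd_of_pow_eq_one 2 hsq)) (by omega)

lemma exists_root_addChar_algEquiv (C : Type*) [Field C] [NumberField C] {p q : ℕ} [NeZero p]
    [Fact q.Prime] [IsCyclotomicExtension {p * q} ℚ C] (hpq : p.Coprime q) :
    ∃ (ζ : C) (ψ : AddChar (ZMod q) C), IsPrimitiveRoot ζ p ∧ ψ.IsPrimitive ∧
      ∀ (a : ℕ) (b : ZMod q), a.Coprime p → b ≠ 0 →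
        ∃ σ : C ≃ₐ[ℚ] C, σ ζ = ζ ^ a ∧ ∀ x, σ (ψ x) = ψ (b * x) := by
  have : NeZero (p * q) := ⟨mul_ne_zero (NeZero.ne p) (NeZero.ne q)⟩
  obtain ⟨z, hz⟩ : ∃ z : C, IsPrimitiveRoot z (p * q) :=
    ⟨_, IsCyclotomicExtension.zeta_spec (p * q) ℚ C⟩
  have hξ : IsPrimitiveRoot (z ^ p) q := hz.pow (NeZero.pos _) rfl
  refine ⟨z ^ q, AddChar.zmodChar q hξ.pow_eq_one, hz.pow (NeZero.pos _) (mul_comm p q),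
    AddChar.zmodChar_primitive_of_primitive_root q hξ, fun a b ha hb ↦ ?_⟩
  have hbq : b.val.Coprime q := (ZMod.isUnit_iff_coprime _ _).1 (by simpa using hb)
  obtain ⟨σ, hσζ, hσξ⟩ := exists_algEquiv_pow_pow hpq hz ha hbq
  refine ⟨σ, hσζ, fun x ↦ ?_⟩
  have hone : AddChar.zmodChar q hξ.pow_eq_one 1 = z ^ p := by
    rw [AddChar.zmodChar_apply, ZMod.val_one, pow_one]
  have hmap := map_addChar_eq_of_map_one (σ := (σ : C →+* C)) (hone.symm ▸ hσξ) x
  rwa [ZMod.natCast_zmod_val] at hmap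

lemma exists_hasUnitOfNormNegOne_of_isCyclotomicExtension (C : Type*) [Field C] [NumberField C]
    {p q : ℕ} [Fact p.Prime] [Fact q.Prime] [IsCyclotomicExtension {p * q} ℚ C] (hp : p % 4 = 1)
    (hq : q % 4 = 3) (hqp : (q : ZMod p) ^ (p / 2) = -1) :
    ∃ (g ζ : C) (j' ζ' u' : IntermediateField.adjoin ℚ {g, ζ}) (conj' τ' : _ ≃ₐ[ℚ] _),
      HasUnitOfNormNegOne q p j' ζ' conj' τ' u' := by
  have : NeZero (p * q) := ⟨mul_ne_zero (NeZero.ne p) (NeZero.ne q)⟩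
  have : IsAbelianGalois ℚ C := IsCyclotomicExtension.isAbelianGalois {p * q} ℚ C
  have hcop : p.Coprime q := (Nat.coprime_primes Fact.out Fact.out).2 (by omega)
  obtain ⟨ζ, ψ, hζ, hψ, haut⟩ := exists_root_addChar_algEquiv C hcop
  have hpred : (p - 1).Coprime p := (Nat.coprime_self_sub_left NeZero.one_le).2 (by simp)
  have hζinv : ζ ^ (p - 1) = ζ⁻¹ := eq_inv_of_mul_eq_one_left <| by
    rw [← pow_succ, Nat.sub_add_cancel NeZero.one_le, hζ.pow_eq_one]
  have hneg : (-1 : ZMod q) ≠ 0 := neg_ne_zero.2 one_ne_zero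
  have hgauss {σ : C ≃ₐ[ℚ] C} (hσ : ∀ x, σ (ψ x) = ψ (-1 * x)) :
      σ (quadraticGaussSum ψ) = -quadraticGaussSum ψ := by
    simpa [quadraticChar_neg_one_of_mod_four_eq_three hq] using
      map_quadraticGaussSum (σ := (σ : C →+* C)) hneg hσ
  obtain ⟨conj, hconj_ζ, hconj_ψ⟩ := haut (p - 1) (-1) hpred hneg
  obtain ⟨τ, hτζ, hτψ⟩ := haut 1 (-1) (Nat.coprime_one_left p) hneg
  rw [hζinv] at hconj_ζ
  rw [pow_one] at hτζ
  have hτu : residueUnit ψ ζ (p / 2) 1 * τ (residueUnit ψ ζ (p / 2) 1) = -1 :=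
    residueUnit_mul_map_eq_neg_one (τ := (τ : C →+* C)) hq hψ hτψ hτζ
      (ne_inv_of_isPrimitiveRoot hζ (by have := (Fact.out : p.Prime).two_le; omega))
      (pow_pow_eq_inv_of_pow_eq_neg_one hζ.pow_eq_one hqp)
  have hconj_u : conj (residueUnit ψ ζ (p / 2) 1) = residueUnit ψ ζ (p / 2) 1 :=
    map_residueUnit_eq_self (σ := (conj : C →+* C)) hq hconj_ψ hconj_ζ
      (Nat.even_iff.2 (by omega))
  refine ⟨_, ζ, exists_hasUnitOfNormNegOne_of_ambient (NeZero.pos q)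
    (quadraticGaussSum_sq hq hψ) hζ (residueUnit_mem_adjoin hq hψ ζ (p / 2))
    (isIntegral_residueUnit (NeZero.pos p) hζ.pow_eq_one _ _) (hgauss hconj_ψ) hconj_ζ
    (hgauss hτψ) hτζ hτu hconj_u fun a ha ↦ ?_⟩
  obtain ⟨σ, hσζ, hσψ⟩ := haut a 1 ha one_ne_zero
  exact ⟨σ, hσζ, by
    simpa using map_quadraticGaussSum (σ := (σ : C →+* C)) one_ne_zero hσψ⟩

lemma exists_hasUnitOfNormNegOne {p q : ℕ} [Fact p.Prime] [Fact q.Prime] (hp : p % 4 = 1)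
    (hq : q % 4 = 3) (hqp : (q : ZMod p) ^ (p / 2) = -1) :
    ∃ (K : Type) (_ : Field K) (_ : NumberField K) (j ζ u : K) (conj τ : K ≃ₐ[ℚ] K),
      HasUnitOfNormNegOne q p j ζ conj τ u := by
  have : NeZero (p * q) := ⟨mul_ne_zero (NeZero.ne p) (NeZero.ne q)⟩
  have hcyc : IsCyclotomicExtension {p * q} ℚ (CyclotomicField (p * q) ℚ) := by
    convert CyclotomicField.isCyclotomicExtension (p * q) ℚ
    · rfl
    · exact Subsingleton.elim (α := Algebra ℚ (CyclotomicField (p * q) ℚ)) _ _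
  obtain ⟨g, ζ, hK⟩ := exists_hasUnitOfNormNegOne_of_isCyclotomicExtension
    (C := CyclotomicField (p * q) ℚ) hp hq hqp
  exact ⟨IntermediateField.adjoin ℚ {g, ζ}, inferInstance, inferInstance, hK⟩

end AuxiliaryField

section CyclotomicUnits

variable {K : Type*} [Field K] {p : ℕ} {x y : K}

lemma isIntegral_sub_one_div_sub_one (hx : x ^ p = 1) (hy : IsPrimitiveRoot y p) (hp : 1 < p) :
    IsIntegral ℤ ((x - 1) / (y - 1)) := by
  have : NeZero p := ⟨by omega⟩
  obtain ⟨m, -, rfl⟩ := hy.eq_pow_of_pow_eq_one hx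
  rw [← geom_sum_eq (hy.ne_one hp)]
  exact IsIntegral.sum _ fun i _ ↦ (hy.isIntegral (by omega)).pow i

lemma isIntegralUnit_sub_one_div_sub_one (hx : IsPrimitiveRoot x p) (hy : IsPrimitiveRoot y p)
    (hp : 1 < p) : IsIntegralUnit ((x - 1) / (y - 1)) :=
  ⟨div_ne_zero (sub_ne_zero.2 (hx.ne_one hp)) (sub_ne_zero.2 (hy.ne_one hp)),
    isIntegral_sub_one_div_sub_one hx.pow_eq_one hy hp, by
      rw [inv_div]
      exact isIntegral_sub_one_div_sub_one hy.pow_eq_one hx hp⟩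

lemma isIntegralUnit_sub_inv_div_sub_one (hx : IsPrimitiveRoot x p) (hp : 1 < p) (hodd : Odd p) :
    IsIntegralUnit ((x - x⁻¹) / (x - 1)) := by
  have hsq : IsPrimitiveRoot (x ^ 2) p := hx.pow_of_coprime 2 hodd.coprime_two_left
  have hx0 : x ≠ 0 := hx.ne_zero (by omega)
  have heq : (x - x⁻¹) / (x - 1) = x⁻¹ * ((x ^ 2 - 1) / (x - 1)) := by
    field_simp
  rw [heq]
  exact (isIntegralUnit_of_pow_eq_one (by omega) hx.inv.pow_eq_one).mul
    (isIntegralUnit_sub_one_div_sub_one hsq hx hp)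

lemma isIntegralUnit_sub_inv_div_sub_inv (hx : IsPrimitiveRoot x p) (hy : IsPrimitiveRoot y p)
    (hp : 1 < p) (hodd : Odd p) : IsIntegralUnit ((x - x⁻¹) / (y - y⁻¹)) := by
  have hx1 := sub_ne_zero.2 (hx.ne_one hp)
  have hy1 := sub_ne_zero.2 (hy.ne_one hp)
  have heq : (x - x⁻¹) / (y - y⁻¹) =
      (x - x⁻¹) / (x - 1) * ((x - 1) / (y - 1)) * ((y - y⁻¹) / (y - 1))⁻¹ := by
    rw [inv_div, div_mul_div_cancel₀ hx1, div_mul_div_cancel₀ hy1]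
  rw [heq]
  exact ((isIntegralUnit_sub_inv_div_sub_one hx hp hodd).mul
    (isIntegralUnit_sub_one_div_sub_one hx hy hp)).mul
    (isIntegralUnit_sub_inv_div_sub_one hy hp hodd).inv

end CyclotomicUnits

section Signs

/-- The sign of a nonzero real number, written additively: `1` for negative numbers. -/
noncomputable def signBit (x : ℝ) : ZMod 2 := if x < 0 then 1 else 0

lemma signBit_mul {x y : ℝ} (hx : x ≠ 0) (hy : y ≠ 0) :
    signBit (x * y) = signBit x + signBit y := by
  rcases hx.lt_or_gt with hx | hx <;> rcases hy.lt_or_gt with hy | hy <;>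
    simp [signBit, mul_neg_iff, hx, hy, hx.not_gt, hy.not_gt, CharTwo.add_self_eq_zero]

lemma signBit_prod {ι : Type*} {s : Finset ι} {f : ι → ℝ} (hf : ∀ i ∈ s, f i ≠ 0) :
    signBit (∏ i ∈ s, f i) = ∑ i ∈ s, signBit (f i) := by
  classical
  induction s using Finset.induction_on with
  | empty => simp [signBit, (zero_le_one' ℝ).not_gt]
  | insert a s ha ih =>
    rw [Finset.forall_mem_insert] at hf
    rw [Finset.prod_insert ha, Finset.sum_insert ha, ← ih hf.2,
      signBit_mul hf.1 (Finset.prod_ne_zero_iff.2 hf.2)]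

lemma signBit_eq_add_one_of_mul_neg {x y : ℝ} (h : x * y < 0) : signBit y = signBit x + 1 := by
  rcases mul_neg_iff.1 h with ⟨hx, hy⟩ | ⟨hx, hy⟩ <;>
    simp [signBit, hx, hy, hx.not_gt, hy.not_gt, CharTwo.add_self_eq_zero]

lemma mul_pos_of_signBit_eq {x y : ℝ} (hx : x ≠ 0) (hy : y ≠ 0) (h : signBit x = signBit y) :
    0 < x * y := by
  have hzero : signBit (x * y) = 0 := by
    rw [signBit_mul hx hy, h, CharTwo.add_self_eq_zero]
  exact (mul_ne_zero hx hy).lt_or_gt.resolve_left fun hneg ↦ by simp [signBit, hneg] at hzero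

end Signs

lemma exists_generator_pow_half {p : ℕ} [Fact p.Prime] (hp : p ≠ 2) :
    ∃ g : ℕ, g.Coprime p ∧ (g : ZMod p) ^ (p / 2) = -1 ∧
      ∀ a : ℕ, a.Coprime p → ∃ i, (a : ZMod p) = g ^ i := by
  obtain ⟨g, hg⟩ := IsCyclic.exists_generator (α := (ZMod p)ˣ)
  have hval : (((g : ZMod p).val : ℕ) : ZMod p) = g := ZMod.natCast_zmod_val _
  refine ⟨(g : ZMod p).val, ZMod.val_coe_unit_coprime g, ?_, fun a ha ↦ ?_⟩
  · rw [hval]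
    refine (ZMod.pow_div_two_eq_neg_one_or_one p g.ne_zero).resolve_left fun h ↦ ?_
    have hdvd : orderOf g ∣ p / 2 := orderOf_dvd_of_pow_eq_one (Units.ext (by simpa using h))
    rw [orderOf_eq_card_of_forall_mem_zpowers hg, Nat.card_eq_fintype_card,
      ZMod.card_units] at hdvd
    have := (Fact.out : p.Prime).two_le
    have := Nat.le_of_dvd (by omega) hdvd
    omega
  · obtain ⟨i, hi⟩ := (mem_powers_iff_mem_zpowers (x := g)).2 (hg (ZMod.unitOfCoprime a ha))
    exact ⟨i, by rw [hval, ← Units.val_pow_eq_pow_val, ← ZMod.coe_unitOfCoprime a ha, ← hi]⟩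

lemma algEquiv_pow_apply_eq_pow {K : Type*} [Field K] [Algebra ℚ K] {σ : K ≃ₐ[ℚ] K} {ζ : K} {g : ℕ}
    (hσ : σ ζ = ζ ^ g) (i : ℕ) : (σ ^ i) ζ = ζ ^ g ^ i := by
  induction i with
  | zero => simp
  | succ i ih => rw [pow_succ, AlgEquiv.mul_apply, hσ, map_pow, ih, ← pow_mul, pow_succ]

namespace IsQuadraticCyclotomic

variable {K : Type*} [Field K] [NumberField K] {l p : ℕ} {α ζ : K} {conj : K ≃ₐ[ℚ] K}

lemma algEquiv_ext (h : IsQuadraticCyclotomic l p α ζ conj) {f g : K ≃ₐ[ℚ] K} (hα : f α = g α)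
    (hζ : f ζ = g ζ) : f = g :=
  AlgEquiv.coe_toAlgHom_injective
    (h.algHom_ext (f := (f : K →ₐ[ℚ] K)) (g := (g : K →ₐ[ℚ] K)) hα hζ)

lemma algHom_eq_re (h : IsQuadraticCyclotomic l p α ζ conj) (hp : p ≠ 0) (φ : K →ₐ[ℚ] ℂ) {x : K}
    (hx : conj x = x) : φ x = (φ x).re :=
  (Complex.conj_eq_iff_re.1 ((h.star_algHom_apply hp φ x).trans (congrArg φ hx))).symm

lemma re_algHom_mul (h : IsQuadraticCyclotomic l p α ζ conj) (hp : p ≠ 0) (φ : K →ₐ[ℚ] ℂ)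
    {x y : K} (hx : conj x = x) (hy : conj y = y) :
    (φ (x * y)).re = (φ x).re * (φ y).re := by
  rw [map_mul, h.algHom_eq_re hp φ hx, h.algHom_eq_re hp φ hy, ← Complex.ofReal_mul,
    Complex.ofReal_re, Complex.ofReal_re, Complex.ofReal_re]

lemma re_algHom_prod (h : IsQuadraticCyclotomic l p α ζ conj) (hp : p ≠ 0) (φ : K →ₐ[ℚ] ℂ)
    {ι : Type*} {s : Finset ι} {f : ι → K} (hf : ∀ i, conj (f i) = f i) :
    (φ (∏ i ∈ s, f i)).re = ∏ i ∈ s, (φ (f i)).re := by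
  rw [map_prod, Finset.prod_congr rfl fun i _ ↦ h.algHom_eq_re hp φ (hf i), ← Complex.ofReal_prod,
    Complex.ofReal_re]

lemma re_algHom_ne_zero (h : IsQuadraticCyclotomic l p α ζ conj) (hp : p ≠ 0) (φ : K →ₐ[ℚ] ℂ)
    {x : K} (hx : conj x = x) (hx0 : x ≠ 0) : (φ x).re ≠ 0 := fun h0 ↦ by
  have hφ := h.algHom_eq_re hp φ hx
  rw [h0, Complex.ofReal_zero, map_eq_zero] at hφ
  exact hx0 hφ

lemma re_algHom_sq_pos (h : IsQuadraticCyclotomic l p α ζ conj) (hp : p ≠ 0) (φ : K →ₐ[ℚ] ℂ)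
    {x : K} (hx : conj x = x) (hx0 : x ≠ 0) : 0 < (φ (x ^ 2)).re := by
  rw [sq, h.re_algHom_mul hp φ hx hx]
  exact mul_self_pos.2 (h.re_algHom_ne_zero hp φ hx hx0)

lemma re_algHom_mul_inv_div_pos (h : IsQuadraticCyclotomic l p α ζ conj) (hp : p ≠ 0)
    (φ : K →ₐ[ℚ] ℂ) {x y : K} (hx : conj x = x) (hy : conj y = y) {n : ℕ} (hn : 0 < n)
    (hpos : 0 < (φ x).re * (φ y).re) : 0 < (φ (x * y⁻¹ / n)).re := by
  rw [map_div₀, map_mul, map_inv₀, map_natCast, h.algHom_eq_re hp φ hx, h.algHom_eq_re hp φ hy]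
  norm_cast
  refine div_pos ?_ (Nat.cast_pos.2 hn)
  rwa [← div_eq_mul_inv, div_pos_iff, ← mul_pos_iff]

end IsQuadraticCyclotomic

namespace HasUnitOfNormNegOne

variable {K : Type*} [Field K] [NumberField K] {q p : ℕ} {j ζ u : K} {conj τ : K ≃ₐ[ℚ] K}

lemma exists_algHom_eq_on_real (h : HasUnitOfNormNegOne q p j ζ conj τ u) (φ φ₀ : K →ₐ[ℚ] ℂ) :
    ∃ ψ : K →ₐ[ℚ] ℂ, ψ j = φ₀ j ∧ ∀ x, conj x = x → φ x = ψ x := by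
  have hsq : φ j ^ 2 = φ₀ j ^ 2 := by rw [← map_pow, ← map_pow, h.sq_eq, map_neg, map_neg]; simp
  rcases sq_eq_sq_iff_eq_or_eq_neg.1 hsq with hj | hj
  · exact ⟨φ, hj, fun x _ ↦ rfl⟩
  · exact ⟨φ.comp conj, by simp [h.conj_sqrt, hj], fun x hx ↦ by simp [hx]⟩

lemma exists_algHom_eq_comp_pow [Fact p.Prime] (h : HasUnitOfNormNegOne q p j ζ conj τ u)
    {σ : K ≃ₐ[ℚ] K} {g : ℕ} (hσj : σ j = j) (hσζ : σ ζ = ζ ^ g)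
    (hgen : ∀ a : ℕ, a.Coprime p → ∃ i, (a : ZMod p) = g ^ i) {φ φ₀ : K →ₐ[ℚ] ℂ}
    (hj : φ j = φ₀ j) : ∃ i, φ = φ₀.comp (σ ^ i : K ≃ₐ[ℚ] K) := by
  have hroot (f : K →ₐ[ℚ] ℂ) : IsPrimitiveRoot (f ζ) p :=
    h.isPrimitiveRoot.map_of_injective f.injective
  obtain ⟨a, -, hap, ha⟩ := ((hroot φ₀).isPrimitiveRoot_iff).1 (hroot φ)
  obtain ⟨i, hi⟩ := hgen a hap
  refine ⟨i, h.algHom_ext ?_ ?_⟩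
  · simp [Function.iterate_fixed hσj, hj]
  · have hmod : a ≡ g ^ i [MOD p] := (ZMod.natCast_eq_natCast_iff _ _ _).1 (by simpa using hi)
    rw [AlgHom.comp_apply, ← ha]
    change φ₀ ζ ^ a = φ₀ ((σ ^ i) ζ)
    rw [algEquiv_pow_apply_eq_pow hσζ, map_pow]
    exact pow_eq_pow_of_modEq hmod (hroot φ₀).pow_eq_one

lemma exists_algEquiv_generator [Fact p.Prime] (hp : p ≠ 2)
    (h : HasUnitOfNormNegOne q p j ζ conj τ u) :
    ∃ σ : K ≃ₐ[ℚ] K, σ j = j ∧ Commute τ σ ∧ Commute conj σ ∧ σ ^ (p / 2) = τ * conj ∧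
      ∀ φ φ₀ : K →ₐ[ℚ] ℂ, ∃ i, ∀ x, conj x = x → φ x = φ₀ ((σ ^ i) x) := by
  obtain ⟨g, hg, hghalf, hgen⟩ := exists_generator_pow_half hp
  obtain ⟨σ, hσζ, hσj⟩ := h.exists_algEquiv g hg
  refine ⟨σ, hσj, h.algEquiv_ext ?_ ?_, h.algEquiv_ext ?_ ?_, h.algEquiv_ext ?_ ?_,
    fun φ φ₀ ↦ ?_⟩
  · simp [hσj, h.tau_sqrt]
  · simp [hσζ, h.tau_root]
  · simp [hσj, h.conj_sqrt]
  · simp [hσζ, h.conj_root]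
  · simp [Function.iterate_fixed hσj, h.tau_sqrt, h.conj_sqrt]
  · rw [algEquiv_pow_apply_eq_pow hσζ,
      pow_pow_eq_inv_of_pow_eq_neg_one h.isPrimitiveRoot.pow_eq_one hghalf]
    simp [h.tau_root, h.conj_root]
  · obtain ⟨ψ, hψj, hψ⟩ := h.exists_algHom_eq_on_real φ φ₀
    obtain ⟨i, rfl⟩ := h.exists_algHom_eq_comp_pow hσj hσζ hgen hψj
    exact ⟨i, hψ⟩

lemma signBit_pow_add_half [NeZero p] (h : HasUnitOfNormNegOne q p j ζ conj τ u) {σ : K ≃ₐ[ℚ] K}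
    (hσ : σ ^ (p / 2) = τ * conj) (hcτ : Commute conj τ) {x y : K} (hx : conj x = x)
    (hy : conj y = y) (hy0 : y ≠ 0) (hxy : x * τ x = -y ^ 2) (φ : K →ₐ[ℚ] ℂ) (i : ℕ) :
    signBit (φ ((σ ^ (i + p / 2)) x)).re = signBit (φ ((σ ^ i) x)).re + 1 := by
  have hτx : conj (τ x) = τ x := by rw [← AlgEquiv.mul_apply, hcτ.eq, AlgEquiv.mul_apply, hx]
  have hflip : (σ ^ (i + p / 2)) x = (σ ^ i) (τ x) := by
    rw [pow_add, hσ, AlgEquiv.mul_apply, AlgEquiv.mul_apply, hx]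
  let ψ : K →ₐ[ℚ] ℂ := φ.comp (σ ^ i : K ≃ₐ[ℚ] K)
  rw [hflip]
  refine signBit_eq_add_one_of_mul_neg (x := (ψ x).re) (y := (ψ (τ x)).re) ?_
  rw [← h.re_algHom_mul (NeZero.ne p) ψ hx hτx, hxy, map_neg, Complex.neg_re, neg_lt_zero]
  exact h.re_algHom_sq_pos (NeZero.ne p) ψ hy hy0

lemma signBit_prod_pow_apply [NeZero p] (h : HasUnitOfNormNegOne q p j ζ conj τ u)
    {σ : K ≃ₐ[ℚ] K} (hcσ : Commute conj σ) {φ φ₀ : K →ₐ[ℚ] ℂ} {i : ℕ}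
    (hφ : ∀ x, conj x = x → φ x = φ₀ ((σ ^ i) x)) {x : K} (hx : conj x = x) (hx0 : x ≠ 0)
    (s : Finset ℕ) :
    signBit (φ (∏ k ∈ s, (σ ^ k) x)).re = ∑ k ∈ s, signBit (φ₀ ((σ ^ (i + k)) x)).re := by
  have hfix (k : ℕ) : conj ((σ ^ k) x) = (σ ^ k) x := by
    rw [← AlgEquiv.mul_apply, (hcσ.pow_right k).eq, AlgEquiv.mul_apply, hx]
  rw [h.re_algHom_prod (NeZero.ne p) φ hfix, signBit_prod fun k _ ↦ h.re_algHom_ne_zero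
    (NeZero.ne p) φ (hfix k) ((map_ne_zero (σ ^ k)).2 hx0)]
  exact Finset.sum_congr rfl fun k _ ↦ by rw [hφ _ (hfix k), pow_add, AlgEquiv.mul_apply]

lemma commute_conj_tau (h : HasUnitOfNormNegOne q p j ζ conj τ u) : Commute conj τ :=
  h.algEquiv_ext (by simp [h.conj_sqrt, h.tau_sqrt]) (by simp [h.conj_root, h.tau_root])

lemma unit_ne_zero (h : HasUnitOfNormNegOne q p j ζ conj τ u) : u ≠ 0 := fun h0 ↦ by
  simpa [h0] using h.unit_mul_tau

lemma exists_prod_mul_prod_pos [Fact p.Prime] (h : HasUnitOfNormNegOne q p j ζ conj τ u)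
    {σ : K ≃ₐ[ℚ] K} (hcσ : Commute conj σ) (hσ : σ ^ (p / 2) = τ * conj)
    (hemb : ∀ φ φ₀ : K →ₐ[ℚ] ℂ, ∃ i, ∀ x, conj x = x → φ x = φ₀ ((σ ^ i) x))
    {δ : K} (hδ : conj δ = δ) (hτδ : τ δ = -δ) (hδ0 : δ ≠ 0) :
    ∃ A B : Finset ℕ, Odd A.card ∧ Odd B.card ∧ ∀ φ : K →ₐ[ℚ] ℂ,
      0 < (φ (∏ k ∈ B, (σ ^ k) δ)).re * (φ (∏ k ∈ A, (σ ^ k) u)).re := by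
  have hp0 : p ≠ 0 := NeZero.ne p
  have hhalf : p / 2 ≠ 0 := by have := (Fact.out : p.Prime).two_le; omega
  let φ₀ : K →ₐ[ℚ] ℂ := IsAlgClosed.lift
  obtain ⟨A, B, hA, hB, hAB⟩ := exists_odd_card_sum_shift_eq hhalf
    (s := fun i ↦ signBit (φ₀ ((σ ^ i) u)).re) (s' := fun i ↦ signBit (φ₀ ((σ ^ i) δ)).re)
    (h.signBit_pow_add_half hσ h.commute_conj_tau h.conj_unit (map_one conj) one_ne_zero
      (by rw [h.unit_mul_tau, one_pow]) φ₀)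
    (h.signBit_pow_add_half hσ h.commute_conj_tau hδ hδ hδ0 (by rw [hτδ]; ring) φ₀)
  have hfix {x : K} (hx : conj x = x) (s : Finset ℕ) :
      conj (∏ k ∈ s, (σ ^ k) x) = ∏ k ∈ s, (σ ^ k) x := by
    rw [map_prod]
    exact Finset.prod_congr rfl fun k _ ↦ by
      rw [← AlgEquiv.mul_apply, (hcσ.pow_right k).eq, AlgEquiv.mul_apply, hx]
  have hne {x : K} (hx : x ≠ 0) (s : Finset ℕ) : ∏ k ∈ s, (σ ^ k) x ≠ 0 :=
    Finset.prod_ne_zero_iff.2 fun k _ ↦ (map_ne_zero (σ ^ k)).2 hx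
  refine ⟨A, B, hA, hB, fun φ ↦ ?_⟩
  obtain ⟨i, hi⟩ := hemb φ φ₀
  refine mul_pos_of_signBit_eq (h.re_algHom_ne_zero hp0 φ (hfix hδ B) (hne hδ0 B))
    (h.re_algHom_ne_zero hp0 φ (hfix h.conj_unit A) (hne h.unit_ne_zero A)) ?_
  rw [h.signBit_prod_pow_apply hcσ hi hδ hδ0, h.signBit_prod_pow_apply hcσ hi h.conj_unit
    h.unit_ne_zero, hAB]

end HasUnitOfNormNegOne

lemma isIntegralUnit_of_mul_algEquiv_eq_neg_one {K : Type*} [Field K] [Algebra ℚ K]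
    {τ : K ≃ₐ[ℚ] K} {u : K} (hu : IsIntegral ℤ u) (h : u * τ u = -1) : IsIntegralUnit u := by
  have hinv : u⁻¹ = -τ u := inv_eq_of_mul_eq_one_right (by rw [mul_neg, h, neg_neg])
  exact ⟨fun h0 ↦ by simp [h0] at h, hu, hinv ▸ (map_isIntegral_int τ hu).neg⟩

section Weight

variable {K : Type*} [Field K] [NumberField K] {q p : ℕ} {j ζ u : K} {conj τ : K ≃ₐ[ℚ] K}

/-- A totally positive element `d` of the field `ℚ(√-q, ζ_p)` for which the ring of integers is
self-dual under the form `Tr(d x ȳ)`, together with a unit `v` such that the semilinear map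
`x ↦ v * τ x` has square `-1` and is skew-adjoint for that form. -/
structure IsTwistedSelfDualWeight (q p : ℕ) (j ζ : K) (conj τ : K ≃ₐ[ℚ] K) (d v : K) : Prop
    extends IsQuadraticCyclotomic q p j ζ conj where
  tau_sqrt : τ j = -j
  tau_root : τ ζ = ζ
  conj_weight : conj d = d
  tau_weight : τ d = d * v ^ 2
  isIntegral_unit : IsIntegral ℤ v
  unit_mul_tau : v * τ v = -1
  conj_unit : conj v = v
  re_pos (φ : K →ₐ[ℚ] ℂ) : 0 < (φ d).re
  selfDual (y : K) :
    (∀ z, IsIntegral ℤ z → ∃ n : ℤ, Algebra.trace ℚ K (d * y * z) = n) ↔ IsIntegral ℤ y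

lemma IsQuadraticCyclotomic.forall_trace_isInt_iff_isIntegral [Fact p.Prime]
    (h : IsQuadraticCyclotomic q p j ζ conj) (hp : p % 4 = 1) (hq : Squarefree q) (hpq : ¬ p ∣ q)
    (hq3 : q % 4 = 3) {d : K} (hd : IsIntegralUnit (p / (ζ - 1) * (j * d))) (y : K) :
    (∀ z, IsIntegral ℤ z → ∃ n : ℤ, Algebra.trace ℚ K (d * y * z) = n) ↔ IsIntegral ℤ y := by
  rw [h.forall_trace_isInt_iff hp hq hpq hq3, ← mul_assoc, ← mul_assoc, mul_assoc _ j d,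
    hd.isIntegral_mul_iff]

lemma IsQuadraticCyclotomic.conj_mul_sub_inv (h : IsQuadraticCyclotomic q p j ζ conj) :
    conj (j * (ζ - ζ⁻¹)) = j * (ζ - ζ⁻¹) := by
  simp only [map_mul, map_sub, map_inv₀, h.conj_sqrt, h.conj_root, inv_inv]
  ring

lemma HasUnitOfNormNegOne.isTwistedSelfDualWeight [Fact p.Prime] [Fact q.Prime]
    (h : HasUnitOfNormNegOne q p j ζ conj τ u) (hp : p % 4 = 1) (hq : q % 4 = 3) (hpq : ¬ p ∣ q)
    {v ρ : K} (hv : IsIntegral ℤ v) (hvτ : v * τ v = -1) (hvc : conj v = v)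
    (hρ : IsIntegralUnit ρ) (hρτ : τ ρ = ρ) (hρc : conj ρ = ρ)
    (hpos : ∀ φ : K →ₐ[ℚ] ℂ, 0 < (φ (ρ * (j * (ζ - ζ⁻¹)))).re * (φ v).re) :
    IsTwistedSelfDualWeight q p j ζ conj τ (ρ * (j * (ζ - ζ⁻¹)) * v⁻¹ / (p * q : ℕ)) v := by
  set d := ρ * (j * (ζ - ζ⁻¹)) * v⁻¹ / (p * q : ℕ) with hd
  have hp0 : (p : K) ≠ 0 := NeZero.ne _
  have hq0 : (q : K) ≠ 0 := Nat.cast_ne_zero.2 h.pos.ne'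
  have hp1 : 1 < p := (Fact.out : p.Prime).one_lt
  have hodd : Odd p := Nat.odd_iff.2 (by omega)
  have hvunit := isIntegralUnit_of_mul_algEquiv_eq_neg_one hv hvτ
  have hv0 : v ≠ 0 := hvunit.1
  have hτv : τ v = -v⁻¹ := by field_simp; linear_combination hvτ
  have hdc : conj d = d := by
    rw [hd, map_div₀, map_mul, map_mul, h.conj_mul_sub_inv, hρc, map_inv₀, hvc, map_natCast]
  refine { h.toIsQuadraticCyclotomic with
    tau_sqrt := h.tau_sqrt, tau_root := h.tau_root, isIntegral_unit := hv, unit_mul_tau := hvτ,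
    conj_unit := hvc, conj_weight := hdc, tau_weight := ?_, re_pos := fun φ ↦ ?_, selfDual := ?_ }
  · simp only [hd, map_div₀, map_mul, map_sub, map_inv₀, map_natCast, h.tau_sqrt, h.tau_root, hρτ,
      hτv]
    field_simp
  · exact h.re_algHom_mul_inv_div_pos (NeZero.ne p) φ (by rw [map_mul, hρc, h.conj_mul_sub_inv]) hvc
      (Nat.mul_pos (NeZero.pos p) h.pos) (hpos φ)
  · have hζ1 : ζ - 1 ≠ 0 := sub_ne_zero.2 (h.isPrimitiveRoot.ne_one hp1)
    have hunit : (p : K) / (ζ - 1) * (j * d) = -1 * ((ζ - ζ⁻¹) / (ζ - 1)) * ρ * v⁻¹ := by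
      simp only [hd, Nat.cast_mul]
      field_simp
      linear_combination ρ * (ζ ^ 2 - 1) * ζ⁻¹ * h.sq_eq
    refine h.forall_trace_isInt_iff_isIntegral hp (Fact.out : q.Prime).squarefree hpq hq ?_
    rw [hunit]
    exact (((isIntegralUnit_of_pow_eq_one two_ne_zero neg_one_sq).mul
      (isIntegralUnit_sub_inv_div_sub_one h.isPrimitiveRoot hp1 hodd)).mul hρ).mul hvunit.inv

namespace HasUnitOfNormNegOne

lemma isIntegralUnit_prod_pow_apply_div (h : HasUnitOfNormNegOne q p j ζ conj τ u) (hp : 1 < p)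
    (hodd : Odd p) {σ : K ≃ₐ[ℚ] K} (hσ : σ j = j) (s : Finset ℕ) :
    IsIntegralUnit (∏ k ∈ s, (σ ^ k) (j * (ζ - ζ⁻¹)) / (j * (ζ - ζ⁻¹))) := by
  refine IsIntegralUnit.prod fun k _ ↦ ?_
  have hroot : IsPrimitiveRoot ((σ ^ k) ζ) p :=
    h.isPrimitiveRoot.map_of_injective (σ ^ k).injective
  have hσk : (σ ^ k) j = j := by rw [AlgEquiv.coe_pow, Function.iterate_fixed hσ]
  rw [map_mul, hσk, mul_div_mul_left _ _ h.sqrt_ne_zero, map_sub, map_inv₀]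
  exact isIntegralUnit_sub_inv_div_sub_inv hroot h.isPrimitiveRoot hp hodd

lemma prod_pow_apply_mul_tau (h : HasUnitOfNormNegOne q p j ζ conj τ u) {σ : K ≃ₐ[ℚ] K}
    (hτσ : Commute τ σ) {s : Finset ℕ} (hs : Odd s.card) :
    (∏ k ∈ s, (σ ^ k) u) * τ (∏ k ∈ s, (σ ^ k) u) = -1 := by
  have hfactor (k : ℕ) : (σ ^ k) u * τ ((σ ^ k) u) = -1 := by
    rw [← AlgEquiv.mul_apply τ, (hτσ.pow_right k).eq, AlgEquiv.mul_apply, ← map_mul,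
      h.unit_mul_tau, map_neg, map_one]
  rw [map_prod, ← Finset.prod_mul_distrib, Finset.prod_congr rfl fun k _ ↦ hfactor k,
    Finset.prod_const, hs.neg_one_pow]

lemma exists_isTwistedSelfDualWeight [Fact p.Prime] [Fact q.Prime]
    (h : HasUnitOfNormNegOne q p j ζ conj τ u) (hp : p % 4 = 1) (hq : q % 4 = 3) (hpq : ¬ p ∣ q) :
    ∃ d v : K, IsTwistedSelfDualWeight q p j ζ conj τ d v := by
  have hp2 : 2 < p := by have := (Fact.out : p.Prime).two_le; omega
  obtain ⟨σ, hσj, hτσ, hcσ, hσ, hemb⟩ := h.exists_algEquiv_generator hp2.ne'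
  set δ := j * (ζ - ζ⁻¹) with hδ
  have hδ0 : δ ≠ 0 := mul_ne_zero h.sqrt_ne_zero
    (sub_ne_zero.2 (ne_inv_of_isPrimitiveRoot h.isPrimitiveRoot hp2))
  have hδc : conj δ = δ := h.conj_mul_sub_inv
  have hδτ : τ δ = -δ := by simp [hδ, h.tau_sqrt, h.tau_root]
  obtain ⟨A, B, hA, ⟨m, hm⟩, hpos⟩ := h.exists_prod_mul_prod_pos hcσ hσ hemb hδc hδτ hδ0
  have hcomm {f : K ≃ₐ[ℚ] K} (hf : Commute f σ) (k : ℕ) (x : K) :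
      f ((σ ^ k) x) = (σ ^ k) (f x) := DFunLike.congr_fun (hf.pow_right k).eq x
  have hρδ : (∏ k ∈ B, (σ ^ k) δ) = (∏ k ∈ B, (σ ^ k) δ / δ) * δ * (δ ^ m) ^ 2 := by
    rw [Finset.prod_div_distrib, Finset.prod_const, hm]
    field_simp
    ring
  have hρc : conj (∏ k ∈ B, (σ ^ k) δ / δ) = ∏ k ∈ B, (σ ^ k) δ / δ := by
    simp only [map_prod, map_div₀, hcomm hcσ, hδc]
  refine ⟨_, ∏ k ∈ A, (σ ^ k) u, h.isTwistedSelfDualWeight hp hq hpq (IsIntegral.prod _ fun k _ ↦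
    map_isIntegral_int (σ ^ k) h.isIntegral_unit) (h.prod_pow_apply_mul_tau hτσ hA) ?_
    (h.isIntegralUnit_prod_pow_apply_div (by omega) (Nat.odd_iff.2 (by omega)) hσj B) ?_ hρc
    fun φ ↦ ?_⟩
  · simp only [map_prod, hcomm hcσ, h.conj_unit]
  · simp only [map_prod, map_div₀, hcomm hτσ, ← hδ, hδτ, map_neg, neg_div_neg_eq]
  · have hsq := h.re_algHom_sq_pos (NeZero.ne p) φ (x := δ ^ m) (by rw [map_pow, hδc])
      (pow_ne_zero m hδ0)
    have := hpos φ
    rw [hρδ, h.re_algHom_mul (NeZero.ne p) φ (by rw [map_mul, hρc, hδc])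
      (by rw [map_pow, map_pow, hδc]), mul_right_comm] at this
    exact (mul_pos_iff_of_pos_right hsq).1 this

end HasUnitOfNormNegOne

lemma exists_isTwistedSelfDualWeight {p q : ℕ} [Fact p.Prime] [Fact q.Prime] (hp : p % 4 = 1)
    (hq : q % 4 = 3) (hqp : ¬ IsSquare (q : ZMod p)) :
    ∃ (K : Type) (_ : Field K) (_ : NumberField K) (j ζ d v : K) (conj τ : K ≃ₐ[ℚ] K),
      IsTwistedSelfDualWeight q p j ζ conj τ d v := by
  have hq0 : (q : ZMod p) ≠ 0 := fun h0 ↦ hqp (h0 ▸ IsSquare.zero)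
  have hhalf := (ZMod.pow_div_two_eq_neg_one_or_one p hq0).resolve_left
    ((ZMod.euler_criterion p hq0).not.1 hqp)
  obtain ⟨K, _, _, j, ζ, u, conj, τ, h⟩ := exists_hasUnitOfNormNegOne hp hq hhalf
  obtain ⟨d, v, hdv⟩ := h.exists_isTwistedSelfDualWeight hp hq
    (mt (ZMod.natCast_eq_zero_iff q p).2 hq0)
  exact ⟨K, _, _, j, ζ, d, v, conj, τ, hdv⟩

end Weight

section LatticeExtension

variable {R S M : Type*} [CommRing R] [Field S] [Algebra R S] [AddCommGroup M] [Module R M]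
  [Module S M] [IsScalarTower R S M] {b : LinearMap.BilinForm S M} {Λ : Submodule R M}
  {Y Y' P P' : Module.End S M} {n c m k : R}

/-- The lattice `Λ + YΛ`. It is stable under `Y` as soon as `Y` is a root of a monic quadratic
polynomial over `R`. -/
def latticeExtension (Λ : Submodule R M) (Y : Module.End S M) : Submodule R M :=
  Λ ⊔ Λ.map (Y.restrictScalars R)

lemma mem_latticeExtension {x : M} :
    x ∈ latticeExtension Λ Y ↔ ∃ y ∈ Λ, ∃ z ∈ Λ, y + Y z = x := by
  simp [latticeExtension, Submodule.mem_sup]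

lemma apply_mem_latticeExtension (hadd : Y + Y' = algebraMap R _ c)
    (hmul : Y' * Y = algebraMap R _ m)
    {x : M} (hx : x ∈ latticeExtension Λ Y) : Y x ∈ latticeExtension Λ Y := by
  obtain ⟨y, hy, z, hz, rfl⟩ := mem_latticeExtension.1 hx
  have hsq : Y (Y z) = c • Y z - m • z := by
    have h₁ := LinearMap.congr_fun hadd (Y z)
    have h₂ := LinearMap.congr_fun hmul z
    simp only [LinearMap.add_apply, Module.End.mul_apply, Module.algebraMap_end_apply] at h₁ h₂
    rw [← h₁, ← h₂, add_sub_cancel_right]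
  refine mem_latticeExtension.2 ⟨-(m • z), Λ.neg_mem (Λ.smul_mem m hz), y + c • z,
    Λ.add_mem hy (Λ.smul_mem c hz), ?_⟩
  rw [map_add, map_add, hsq, LinearMap.map_smul_of_tower]
  abel

theorem dualSubmodule_latticeExtension (hΛ : b.dualSubmodule Λ = Λ)
    (hY : LinearMap.IsAdjointPair b b Y Y') (hY' : LinearMap.IsAdjointPair b b Y' Y)
    (hnY : ∀ x ∈ Λ, n • Y x ∈ Λ) (hP : ∀ x ∈ Λ, P x ∈ Λ) (hP' : ∀ x ∈ Λ, P' x ∈ Λ)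
    (hmul : Y' * Y = algebraMap R _ m) (hone : n • (algebraMap R _ k + Y * P + P' * Y') = 1) :
    (n • b).dualSubmodule (latticeExtension Λ Y) = latticeExtension Λ Y := by
  have hint {x y : M} (hx : x ∈ Λ) (hy : y ∈ Λ) : b x y ∈ (1 : Submodule R S) :=
    LinearMap.BilinForm.mem_dualSubmodule b |>.1 (hΛ.ge hx) y hy
  have hdual {x : M} (hx : ∀ y ∈ Λ, b x y ∈ (1 : Submodule R S)) : x ∈ Λ := hΛ.le hx
  ext x
  refine ⟨fun hx ↦ ?_, fun hx y hy ↦ ?_⟩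
  · have hnx : n • x ∈ Λ := hdual fun y hy ↦ by
      simpa using hx y (mem_latticeExtension.2 ⟨y, hy, 0, Λ.zero_mem, by simp⟩)
    have hnY'x : n • Y' x ∈ Λ := hdual fun y hy ↦ by
      simpa [hY' x y] using hx (Y y) (mem_latticeExtension.2 ⟨0, Λ.zero_mem, y, hy, by simp⟩)
    refine mem_latticeExtension.2 ⟨k • n • x + P' (n • Y' x),
      Λ.add_mem (Λ.smul_mem k hnx) (hP' _ hnY'x), P (n • x), hP _ hnx, ?_⟩
    have hx1 := LinearMap.congr_fun hone x
    simp only [LinearMap.smul_apply, LinearMap.add_apply, Module.End.mul_apply,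
      Module.algebraMap_end_apply, Module.End.one_apply, smul_add] at hx1
    simp only [LinearMap.map_smul_of_tower, smul_comm k n]
    exact (add_right_comm _ _ _).trans hx1
  · obtain ⟨x₀, hx₀, x₁, hx₁, rfl⟩ := mem_latticeExtension.1 hx
    obtain ⟨y₀, hy₀, y₁, hy₁, rfl⟩ := mem_latticeExtension.1 hy
    have hYY : b (Y x₁) (Y y₁) = m • b x₁ y₁ := by
      rw [hY, ← Module.End.mul_apply, hmul, Module.algebraMap_end_apply,
        LinearMap.map_smul_of_tower]
    have hexpand : (n • b) (x₀ + Y x₁) (y₀ + Y y₁) =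
        n • b x₀ y₀ + b x₀ (n • Y y₁) + b (n • Y x₁) y₀ + (n * m) • b x₁ y₁ := by
      simp only [LinearMap.smul_apply, map_add, LinearMap.add_apply, LinearMap.map_smul_of_tower,
        hYY, mul_smul]
      abel
    rw [hexpand]
    exact add_mem (add_mem (add_mem (Submodule.smul_mem _ _ (hint hx₀ hy₀))
      (hint hx₀ (hnY _ hy₁))) (hint (hnY _ hx₁) hy₀)) (Submodule.smul_mem _ _ (hint hx₁ hy₁))

end LatticeExtension

section QuadraticLatticeExtension

variable {V : Type*} [AddCommGroup V] [Module ℚ V] {b : LinearMap.BilinForm ℚ V}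
  {Λ : Submodule ℤ V} {X Y P : Module.End ℚ V} {c m l z k g : ℤ}

lemma sub_mul_self_eq_of_sq_eq_neg (hc : c = 0 ∨ c = 1) (hm : (1 + c) ^ 2 * m = c + l)
    (hX : X * X = algebraMap ℤ _ (-l)) (hY : (1 + c) • Y = algebraMap ℤ _ c + X) :
    (algebraMap ℤ _ c - Y) * Y = algebraMap ℤ _ m := by
  simp only [algebraMap_int_eq, eq_intCast] at hX hY ⊢
  rcases hc with rfl | rfl
  · obtain rfl : Y = X := by simpa using hY
    obtain rfl : m = l := by simpa using hm
    simp [hX]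
  · obtain rfl : X = 2 * Y - 1 := by
      rw [eq_sub_iff_add_eq', ← Int.cast_one, ← hY, one_add_one_eq_two, two_mul, two_zsmul]
    have hsq : 4 * ((1 - Y) * Y) = 1 - (2 * Y - 1) * (2 * Y - 1) := by noncomm_ring
    have h4 : (4 : ℤ) • ((1 - Y) * Y) = (4 : ℤ) • (m : Module.End ℚ V) := by
      obtain rfl : l = 4 * m - 1 := by omega
      rw [zsmul_eq_mul, zsmul_eq_mul, Int.cast_ofNat, hsq, hX]
      push_cast
      abel
    rw [Int.cast_one]
    have : Module.IsTorsionFree ℤ V := .trans_faithfulSMul ℤ ℚ V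
    exact LinearMap.ext fun x ↦
      smul_right_injective V (four_ne_zero' ℤ) (LinearMap.congr_fun h4 x)

lemma isAdjointPair_sub_of_isAdjointPair_neg (hc : c = 0 ∨ c = 1)
    (hX : LinearMap.IsAdjointPair b b X (-X)) (hY : (1 + c) • Y = algebraMap ℤ _ c + X) :
    LinearMap.IsAdjointPair b b Y (algebraMap ℤ (Module.End ℚ V) c - Y) := fun x y ↦ by
  have happly (w : V) : X w = (1 + c) • Y w - c • w := by
    rw [eq_sub_iff_add_eq']
    exact (LinearMap.congr_fun hY w).symm
  have hxy := hX x y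
  simp only [Pi.neg_apply, happly, map_sub, map_neg, map_zsmul, LinearMap.sub_apply,
    LinearMap.smul_apply] at hxy
  simp only [Pi.sub_apply, Module.algebraMap_end_apply, map_sub, map_zsmul]
  rcases hc with rfl | rfl
  · simp only [add_zero, one_smul, zero_smul, sub_zero] at hxy
    simp [hxy]
  · simp only [one_add_one_eq_two, two_smul, one_smul] at hxy ⊢
    linear_combination hxy / 2

theorem dualSubmodule_latticeExtension_of_isAdjointPair_neg (hΛ : b.dualSubmodule Λ = Λ)
    (hc : c = 0 ∨ c = 1) (hm : (1 + c) ^ 2 * m = c + l) (hX : X * X = algebraMap ℤ _ (-l))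
    (hadj : LinearMap.IsAdjointPair b b X (-X)) (hY : (1 + c) • Y = algebraMap ℤ _ c + X)
    (hzX : ∀ x ∈ Λ, z • X x ∈ Λ) (hP : ∀ x ∈ Λ, P x ∈ Λ)
    (hXP : z • (X * P + P * X) = algebraMap ℤ _ g) (hg : (1 + c) * z * k + g = 1) :
    (((1 + c) * z) • b).dualSubmodule (latticeExtension Λ Y) = latticeExtension Λ Y := by
  have hadjY := isAdjointPair_sub_of_isAdjointPair_neg hc hadj hY
  refine dualSubmodule_latticeExtension (P := P) (P' := -P) (k := k) hΛ hadjY (fun x y ↦ ?_)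
    (fun x hx ↦ ?_) hP (fun x hx ↦ Λ.neg_mem (hP x hx))
    (sub_mul_self_eq_of_sq_eq_neg hc hm hX hY) ?_
  · have hxy := hadjY x y
    simp only [Pi.sub_apply, LinearMap.sub_apply, Module.algebraMap_end_apply, map_sub, map_zsmul,
      LinearMap.smul_apply] at hxy ⊢
    linear_combination -hxy
  · rw [mul_comm, mul_smul, ← LinearMap.smul_apply (1 + c), hY, LinearMap.add_apply,
      Module.algebraMap_end_apply, smul_add]
    exact Λ.add_mem (Λ.smul_mem z (Λ.smul_mem c hx)) (hzX x hx)
  · have hYP : (1 + c) • (Y * P + -P * (algebraMap ℤ _ c - Y)) = X * P + P * X := by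
      simp only [algebraMap_int_eq, eq_intCast] at hY ⊢
      rcases hc with rfl | rfl
      · obtain rfl : Y = X := by simpa using hY
        simp
      · obtain rfl : X = 2 * Y - 1 := by
          rw [eq_sub_iff_add_eq', ← Int.cast_one, ← hY, one_add_one_eq_two, two_mul, two_zsmul]
        rw [Int.cast_one]
        noncomm_ring
    rw [add_assoc, smul_add, mul_comm (1 + c) z, mul_smul z (1 + c) (_ + _), hYP, hXP,
      Algebra.algebraMap_eq_smul_one, Algebra.algebraMap_eq_smul_one, smul_smul, ← add_smul,
      mul_comm z, hg, one_smul]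

end QuadraticLatticeExtension

section SemilinearMaps

variable {K : Type*} [Field K] [NumberField K] {q p : ℕ} {j ζ d v : K} {conj τ : K ≃ₐ[ℚ] K}

/-- The hermitian trace form `(x, y) ↦ Tr(d x ȳ)`. -/
noncomputable def conjTraceForm (conj : K ≃ₐ[ℚ] K) (d : K) : LinearMap.BilinForm ℚ K :=
  (Algebra.traceForm ℚ K).compl₁₂ (LinearMap.mulLeft ℚ d) conj.toLinearMap

lemma conjTraceForm_apply (conj : K ≃ₐ[ℚ] K) (d x y : K) :
    conjTraceForm conj d x y = Algebra.trace ℚ K (d * x * conj y) := rfl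

/-- The map `x ↦ a * τ x`, which is semilinear with respect to `τ`. -/
noncomputable def twist (a : K) (τ : K ≃ₐ[ℚ] K) : Module.End ℚ K :=
  LinearMap.mulLeft ℚ a * τ.toLinearMap

lemma twist_apply (a : K) (τ : K ≃ₐ[ℚ] K) (x : K) : twist a τ x = a * τ x := rfl

namespace IsTwistedSelfDualWeight

lemma tau_tau (h : IsTwistedSelfDualWeight q p j ζ conj τ d v) (x : K) : τ (τ x) = x :=
  DFunLike.congr_fun (h.algEquiv_ext (f := τ * τ) (g := 1) (by simp [h.tau_sqrt])
    (by simp [h.tau_root])) x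

lemma conj_tau (h : IsTwistedSelfDualWeight q p j ζ conj τ d v) (x : K) :
    conj (τ x) = τ (conj x) :=
  DFunLike.congr_fun (h.algEquiv_ext (f := conj * τ) (g := τ * conj)
    (by simp [h.tau_sqrt, h.conj_sqrt]) (by simp [h.tau_root, h.conj_root])) x

lemma twist_mul_twist (h : IsTwistedSelfDualWeight q p j ζ conj τ d v) (a b : K) :
    twist (a * v) τ * twist (b * v) τ = LinearMap.mulLeft ℚ (-(a * τ b)) := by
  ext x
  simp only [Module.End.mul_apply, twist_apply, LinearMap.mulLeft_apply, map_mul, h.tau_tau]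
  linear_combination a * τ b * x * h.unit_mul_tau

lemma isAdjointPair_twist (h : IsTwistedSelfDualWeight q p j ζ conj τ d v) {ν : K}
    (hν : conj (τ ν) = ν) :
    LinearMap.IsAdjointPair (conjTraceForm conj d) (conjTraceForm conj d) (twist (ν * v) τ)
      (-twist (ν * v) τ) := fun x y ↦ by
  have hconjν : conj ν = τ ν := by rw [← hν, h.conj_conj, hν]
  simp only [conjTraceForm_apply, Pi.neg_apply, twist_apply]
  rw [← Algebra.trace_eq_of_algEquiv τ]
  congr 1
  simp only [map_mul, map_neg, h.tau_tau, h.tau_weight, h.conj_unit, h.conj_tau, hconjν]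
  linear_combination d * v * τ ν * x * τ (conj y) * h.unit_mul_tau

lemma dualSubmodule_integralClosure (h : IsTwistedSelfDualWeight q p j ζ conj τ d v) :
    (conjTraceForm conj d).dualSubmodule (Subalgebra.toSubmodule (integralClosure ℤ K)) =
      Subalgebra.toSubmodule (integralClosure ℤ K) := by
  ext y
  simp only [LinearMap.BilinForm.mem_dualSubmodule, Subalgebra.mem_toSubmodule,
    mem_integralClosure_iff, Submodule.mem_one, conjTraceForm_apply]
  rw [← h.selfDual y]
  refine ⟨fun hy z hz ↦ ?_, fun hy z hz ↦ ?_⟩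
  · obtain ⟨n, hn⟩ := hy (conj z) (map_isIntegral_int conj hz)
    exact ⟨n, by rw [← h.conj_conj z, ← hn, eq_intCast]⟩
  · obtain ⟨n, hn⟩ := hy (conj z) (map_isIntegral_int conj hz)
    exact ⟨n, by rw [hn, eq_intCast]⟩

lemma twist_mem_integralClosure (h : IsTwistedSelfDualWeight q p j ζ conj τ d v) {ν x : K}
    (hν : IsIntegral ℤ ν) (hx : IsIntegral ℤ x) : IsIntegral ℤ (twist (ν * v) τ x) :=
  (hν.mul h.isIntegral_unit).mul (map_isIntegral_int τ hx)

section HalfIntegers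

variable {θ : K} {Q : ℕ}

lemma tau_half (h : IsTwistedSelfDualWeight q p j ζ conj τ d v) (hθ : 2 * θ = 1 + j) :
    τ θ = 1 - θ := by
  have h2 := congrArg τ hθ
  simp only [map_mul, map_add, map_ofNat, map_one, h.tau_sqrt] at h2
  linear_combination (h2 + hθ) / 2

lemma conj_half (h : IsTwistedSelfDualWeight q p j ζ conj τ d v) (hθ : 2 * θ = 1 + j) :
    conj θ = 1 - θ := by
  have h2 := congrArg conj hθ
  simp only [map_mul, map_add, map_ofNat, map_one, h.conj_sqrt] at h2
  linear_combination (h2 + hθ) / 2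

lemma half_sq (h : IsTwistedSelfDualWeight q p j ζ conj τ d v) (hθ : 2 * θ = 1 + j)
    (hQ : q + 1 = 4 * Q) : θ ^ 2 = θ - Q := by
  have hQ' : (q : K) + 1 = 4 * Q := mod_cast congrArg (Nat.cast : ℕ → K) hQ
  have hj : j = 2 * θ - 1 := by rw [hθ]; ring
  have hsq := h.sq_eq
  rw [hj] at hsq
  linear_combination (hsq - hQ') / 4

lemma conj_tau_add_mul_half (h : IsTwistedSelfDualWeight q p j ζ conj τ d v)
    (hθ : 2 * θ = 1 + j) (a t : ℤ) : conj (τ (a + t * θ)) = a + t * θ := by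
  simp only [map_add, map_mul, map_sub, map_one, map_intCast, h.tau_half hθ, h.conj_half hθ]
  ring

lemma twist_half_mul_twist_half (h : IsTwistedSelfDualWeight q p j ζ conj τ d v)
    (hθ : 2 * θ = 1 + j) (hQ : q + 1 = 4 * Q) (a t : ℤ) :
    twist ((a + t * θ) * v) τ * twist ((a + t * θ) * v) τ =
      algebraMap ℤ _ (-(a ^ 2 + a * t + Q * t ^ 2)) := by
  rw [h.twist_mul_twist]
  ext x
  simp only [LinearMap.mulLeft_apply, Module.algebraMap_end_apply, zsmul_eq_mul, map_add, map_mul,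
    map_intCast, h.tau_half hθ]
  push_cast
  linear_combination x * t ^ 2 * h.half_sq hθ hQ

lemma twist_half_mul_add_mul_twist_half (h : IsTwistedSelfDualWeight q p j ζ conj τ d v)
    (hθ : 2 * θ = 1 + j) (hQ : q + 1 = 4 * Q) (a t k₁ k₂ : ℤ) :
    twist ((a + t * θ) * v) τ * twist ((k₁ + k₂ * θ) * v) τ +
        twist ((k₁ + k₂ * θ) * v) τ * twist ((a + t * θ) * v) τ =
      algebraMap ℤ _ (-((2 * a + t) * k₁ + (a + 2 * Q * t) * k₂)) := by
  rw [h.twist_mul_twist, h.twist_mul_twist]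
  ext x
  simp only [LinearMap.add_apply, LinearMap.mulLeft_apply, Module.algebraMap_end_apply,
    zsmul_eq_mul, map_add, map_mul, map_intCast, h.tau_half hθ]
  push_cast
  linear_combination 2 * x * t * k₂ * h.half_sq hθ hQ

end HalfIntegers

end IsTwistedSelfDualWeight

end SemilinearMaps

section Positivity

variable {K : Type*} [Field K] [NumberField K] {l p : ℕ} {α ζ d : K} {conj : K ≃ₐ[ℚ] K}

namespace IsQuadraticCyclotomic

lemma trace_mul_conj_eq_sum (h : IsQuadraticCyclotomic l p α ζ conj) (hp : p ≠ 0)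
    (hd : conj d = d) (x : K) :
    (Algebra.trace ℚ K (d * x * conj x) : ℝ) = ∑ φ : K →ₐ[ℚ] ℂ, (φ d).re * ‖φ x‖ ^ 2 := by
  have hterm (φ : K →ₐ[ℚ] ℂ) : φ (d * x * conj x) = ((φ d).re * ‖φ x‖ ^ 2 : ℝ) := by
    rw [map_mul, map_mul, ← h.star_algHom_apply hp, Complex.ofReal_mul, ← h.algHom_eq_re hp φ hd,
      mul_assoc, ← Complex.normSq_eq_norm_sq, ← Complex.mul_conj]
    rfl
  have hsum := trace_eq_sum_embeddings (K := ℚ) ℂ (x := d * x * conj x)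
  rw [Finset.sum_congr rfl fun φ _ ↦ hterm φ, eq_ratCast] at hsum
  exact_mod_cast hsum

lemma trace_mul_conj_pos (h : IsQuadraticCyclotomic l p α ζ conj) (hp : p ≠ 0)
    (hd : conj d = d) (hpos : ∀ φ : K →ₐ[ℚ] ℂ, 0 < (φ d).re) {x : K} (hx : x ≠ 0) :
    0 < Algebra.trace ℚ K (d * x * conj x) := by
  have hsum := h.trace_mul_conj_eq_sum hp hd x
  have : 0 < ∑ φ : K →ₐ[ℚ] ℂ, (φ d).re * ‖φ x‖ ^ 2 :=
    Finset.sum_pos (fun φ _ ↦ mul_pos (hpos φ) (pow_pos (norm_pos_iff.2 ((map_ne_zero φ).2 hx)) 2))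
      ⟨IsAlgClosed.lift, Finset.mem_univ _⟩
  exact_mod_cast hsum ▸ this

lemma sum_re_mul_norm_sq_nonneg (h : IsQuadraticCyclotomic l p α ζ conj) (hp : p ≠ 0)
    (hd : conj d = d) (hpos : ∀ x ≠ 0, 0 < Algebra.trace ℚ K (d * x * conj x))
    (y : (v : InfinitePlace K) → WithAbs v.1) :
    0 ≤ ∑ φ : K →ₐ[ℚ] ℂ, (φ d).re * ‖y (InfinitePlace.mk φ.toRingHom)‖ ^ 2 := by
  refine (InfinitePlace.denseRange_algebraMap_pi K).induction_on y
    (isClosed_le continuous_const (by fun_prop)) fun x ↦ ?_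
  change 0 ≤ ∑ φ : K →ₐ[ℚ] ℂ, (φ d).re * ‖φ x‖ ^ 2
  rw [← h.trace_mul_conj_eq_sum hp hd]
  rcases eq_or_ne x 0 with rfl | hx
  · simp
  · exact_mod_cast (hpos x hx).le

lemma re_algHom_pos_of_trace_mul_conj_pos (h : IsQuadraticCyclotomic l p α ζ conj) (hp : p ≠ 0)
    (hd : conj d = d) (hpos : ∀ x ≠ 0, 0 < Algebra.trace ℚ K (d * x * conj x))
    (ψ : K →ₐ[ℚ] ℂ) : 0 < (ψ d).re := by
  classical
  have hd0 : d ≠ 0 := by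
    rintro rfl
    simpa using hpos 1 one_ne_zero
  refine (h.re_algHom_ne_zero hp ψ hd hd0).symm.lt_of_le (not_lt.1 fun hneg ↦ ?_)
  refine (h.sum_re_mul_norm_sq_nonneg hp hd hpos
    (Pi.single (InfinitePlace.mk ψ.toRingHom) 1)).not_gt ?_
  refine Finset.sum_neg' (fun φ _ ↦ ?_) ⟨ψ, Finset.mem_univ _, ?_⟩
  swap
  · rwa [Pi.single_eq_same, norm_one, one_pow, mul_one]
  by_cases hφ : InfinitePlace.mk φ.toRingHom = InfinitePlace.mk ψ.toRingHom
  · have hre : (φ d).re = (ψ d).re := by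
      rcases InfinitePlace.mk_eq_iff.1 hφ with hφ | hφ
      · exact congrArg Complex.re (RingHom.congr_fun hφ d)
      · simpa [ComplexEmbedding.conjugate_coe_eq] using
          congrArg Complex.re (RingHom.congr_fun hφ d)
    rw [hre]
    exact mul_nonpos_of_nonpos_of_nonneg hneg.le (sq_nonneg _)
  · rw [Pi.single_eq_of_ne hφ, norm_zero, zero_pow two_ne_zero, mul_zero]

end IsQuadraticCyclotomic

end Positivity

section UnimodularModel

/-- A unimodular lattice `Λ` for the positive definite form `b` on `K`, together with commuting
actions of `ζ` (isometric, by multiplication) and of a skew-adjoint square root `X` of `-l`, under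
which `Λ` is stable for `ζ` and for the generator `Y` of the ring of integers of `ℚ(√-l)`. -/
structure IsUnimodularModel {K : Type*} [Field K] [NumberField K] (l p : ℕ) (ζ : K)
    (b : LinearMap.BilinForm ℚ K) (X Y : Module.End ℚ K) (Λ : Submodule ℤ K) : Prop where
  isPrimitiveRoot : IsPrimitiveRoot ζ p
  finrank_eq : Module.finrank ℚ K = 2 * (p - 1)
  sq_eq : X * X = -(l : Module.End ℚ K)
  apply_root_mul (x : K) : X (ζ * x) = ζ * X x
  isGenerator : IsQuadraticIntegerGenerator l X Y
  isAdjointPair : LinearMap.IsAdjointPair b b X (-X)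
  root_mul_left (x y : K) : b (ζ * x) y = b x (ζ⁻¹ * y)
  isSymm (x y : K) : b x y = b y x
  pos (x : K) (hx : x ≠ 0) : 0 < b x x
  fg : Λ.FG
  root_mul_mem {x : K} (hx : x ∈ Λ) : ζ * x ∈ Λ
  apply_mem {x : K} (hx : x ∈ Λ) : Y x ∈ Λ
  dualSubmodule_eq : b.dualSubmodule Λ = Λ

variable {K : Type*} [Field K] [NumberField K] {q p l Q : ℕ} {j ζ d v θ : K}
  {conj τ : K ≃ₐ[ℚ] K} {X Y : Module.End ℚ K} {c m z k₀ k₁ k₂ a t : ℤ}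

lemma mul_self_eq_of_smul_mul_smul (hz : z ≠ 0) {e : ℤ}
    (hX : (z • X) * (z • X) = algebraMap ℤ _ (e * z ^ 2)) : X * X = algebraMap ℤ _ e := by
  have hX' : (z * z) • (X * X) = (z * z) • algebraMap ℤ (Module.End ℚ K) e := by
    rw [← smul_mul_smul_comm, hX, Algebra.smul_def, ← map_mul, sq, mul_comm]
  exact LinearMap.ext fun x ↦
    smul_right_injective K (mul_ne_zero hz hz) (LinearMap.congr_fun hX' x)

lemma isAdjointPair_neg_of_smul {b : LinearMap.BilinForm ℚ K} (hz : z ≠ 0)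
    (hX : LinearMap.IsAdjointPair b b (z • X) (-(z • X))) :
    LinearMap.IsAdjointPair b b X (-X) := fun x y ↦ by
  have hxy := hX x y
  simp only [Pi.neg_apply, Pi.smul_apply, map_neg, map_zsmul, LinearMap.smul_apply,
    ← smul_neg] at hxy ⊢
  exact smul_right_injective ℚ hz hxy

lemma apply_mul_of_smul_apply_mul (hz : z ≠ 0) (hX : ∀ w, (z • X) (ζ * w) = ζ * (z • X) w)
    (w : K) : X (ζ * w) = ζ * X w :=
  smul_right_injective K hz <| (hX w).trans (mul_smul_comm z ζ (X w))

lemma conjTraceForm_isSymm (hconj : ∀ x, conj (conj x) = x) (hd : conj d = d) (x y : K) :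
    conjTraceForm conj d x y = conjTraceForm conj d y x := by
  rw [conjTraceForm_apply, conjTraceForm_apply, ← Algebra.trace_eq_of_algEquiv conj]
  congr 1
  rw [map_mul, map_mul, hconj, hd, mul_right_comm]

lemma conjTraceForm_root_mul (hζ : conj ζ = ζ⁻¹) (x y : K) :
    conjTraceForm conj d (ζ * x) y = conjTraceForm conj d x (ζ⁻¹ * y) := by
  rw [conjTraceForm_apply, conjTraceForm_apply, map_mul conj, map_inv₀, hζ, inv_inv]
  congr 1
  ring

lemma mul_mem_latticeExtension_integralClosure (hζ : IsIntegral ℤ ζ)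
    (hY : ∀ w, Y (ζ * w) = ζ * Y w) {x : K}
    (hx : x ∈ latticeExtension (Subalgebra.toSubmodule (integralClosure ℤ K)) Y) :
    ζ * x ∈ latticeExtension (Subalgebra.toSubmodule (integralClosure ℤ K)) Y := by
  obtain ⟨y, hy, w, hw, rfl⟩ := mem_latticeExtension.1 hx
  exact mem_latticeExtension.2 ⟨ζ * y, hζ.mul hy, ζ * w, hζ.mul hw, by rw [hY, mul_add]⟩

lemma fg_latticeExtension_integralClosure :
    (latticeExtension (Subalgebra.toSubmodule (integralClosure ℤ K)) Y).FG := by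
  have hfg : (Subalgebra.toSubmodule (integralClosure ℤ K)).FG :=
    Module.Finite.iff_fg.1 (inferInstanceAs (Module.Finite ℤ (𝓞 K)))
  exact hfg.sup (hfg.map _)

namespace IsTwistedSelfDualWeight

lemma mul_self_eq_of_smul_eq_twist (h : IsTwistedSelfDualWeight q p j ζ conj τ d v)
    (hθ : 2 * θ = 1 + j) (hQ : q + 1 = 4 * Q) (hz : z ≠ 0)
    (hsol : a ^ 2 + a * t + Q * t ^ 2 = l * z ^ 2) (hX : z • X = twist ((a + t * θ) * v) τ) :
    X * X = algebraMap ℤ _ (-l : ℤ) :=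
  mul_self_eq_of_smul_mul_smul hz <| by
    rw [hX, h.twist_half_mul_twist_half hθ hQ, hsol, neg_mul]

lemma isAdjointPair_of_smul_eq_twist (h : IsTwistedSelfDualWeight q p j ζ conj τ d v)
    (hθ : 2 * θ = 1 + j) (hz : z ≠ 0) (hX : z • X = twist ((a + t * θ) * v) τ) :
    LinearMap.IsAdjointPair (conjTraceForm conj d) (conjTraceForm conj d) X (-X) :=
  isAdjointPair_neg_of_smul hz <| by
    rw [← LinearMap.coe_smul, hX]
    exact h.isAdjointPair_twist (h.conj_tau_add_mul_half hθ a t)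

lemma dualSubmodule_latticeExtension_eq (h : IsTwistedSelfDualWeight q p j ζ conj τ d v)
    (hθ : 2 * θ = 1 + j) (hQ : q + 1 = 4 * Q) (hz : z ≠ 0) (hc : c = 0 ∨ c = 1)
    (hm : (1 + c) ^ 2 * m = c + l) (hsol : a ^ 2 + a * t + Q * t ^ 2 = l * z ^ 2)
    (hk : (1 + c) * z * k₀ + (2 * a + t) * k₁ + (a + 2 * Q * t) * k₂ = 1)
    (hX : z • X = twist ((a + t * θ) * v) τ) (hY : (1 + c) • Y = algebraMap ℤ _ c + X) :
    (((1 + c) * z) • conjTraceForm conj d).dualSubmodule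
        (latticeExtension (Subalgebra.toSubmodule (integralClosure ℤ K)) Y) =
      latticeExtension (Subalgebra.toSubmodule (integralClosure ℤ K)) Y := by
  have hint (a t : ℤ) : IsIntegral ℤ (a + t * θ) :=
    isIntegral_algebraMap.add (isIntegral_algebraMap.mul
      (isIntegral_quadraticIntegerGenerator h.sq_eq (.inl ⟨by omega, hθ⟩)))
  refine dualSubmodule_latticeExtension_of_isAdjointPair_neg (z := z)
    (P := twist (((-k₁ : ℤ) + (-k₂ : ℤ) * θ) * v) τ) (k := k₀)
    (g := (2 * a + t) * k₁ + (a + 2 * Q * t) * k₂) h.dualSubmodule_integralClosure hc hm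
    (h.mul_self_eq_of_smul_eq_twist hθ hQ hz hsol hX) (h.isAdjointPair_of_smul_eq_twist hθ hz hX)
    hY (fun x hx ↦ ?_) (fun x hx ↦ h.twist_mem_integralClosure (hint _ _) hx) ?_
    (by rwa [← add_assoc])
  · rw [← LinearMap.smul_apply, hX]
    exact h.twist_mem_integralClosure (hint a t) hx
  · rw [smul_add, ← smul_mul_assoc, ← mul_smul_comm, hX,
      h.twist_half_mul_add_mul_twist_half hθ hQ]
    congr 1
    ring

lemma isUnimodularModel [Fact p.Prime] (h : IsTwistedSelfDualWeight q p j ζ conj τ d v)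
    (hp : p % 4 = 1) (hθ : 2 * θ = 1 + j) (hQ : q + 1 = 4 * Q) (hz : 0 < z)
    (hc : l % 4 = 3 ∧ c = 1 ∨ l % 4 ≠ 3 ∧ c = 0) (hm : (1 + c) ^ 2 * m = c + l)
    (hsol : a ^ 2 + a * t + Q * t ^ 2 = l * z ^ 2)
    (hk : (1 + c) * z * k₀ + (2 * a + t) * k₁ + (a + 2 * Q * t) * k₂ = 1)
    (hX : z • X = twist ((a + t * θ) * v) τ) (hY : (1 + c) • Y = algebraMap ℤ _ c + X) :
    IsUnimodularModel l p ζ (((1 + c) * z) • conjTraceForm conj d) X Y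
      (latticeExtension (Subalgebra.toSubmodule (integralClosure ℤ K)) Y) :=
  have hc' : c = 0 ∨ c = 1 := by tauto
  have hn : 0 < (1 + c) * z := mul_pos (by omega) hz
  have hsq := h.mul_self_eq_of_smul_eq_twist hθ hQ hz.ne' hsol hX
  have hXζ : ∀ w, X (ζ * w) = ζ * X w := apply_mul_of_smul_apply_mul hz.ne' fun w ↦ by
    rw [hX, twist_apply, twist_apply, map_mul, h.tau_root, mul_left_comm]
  have hYζ : ∀ w, Y (ζ * w) = ζ * Y w :=
    apply_mul_of_smul_apply_mul (show 1 + c ≠ 0 by omega) fun w ↦ by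
      rw [hY, LinearMap.add_apply, LinearMap.add_apply, hXζ, mul_add, Module.algebraMap_end_apply,
        Module.algebraMap_end_apply, mul_smul_comm]
  { isPrimitiveRoot := h.isPrimitiveRoot
    finrank_eq := h.finrank_eq hp
    sq_eq := by simpa using hsq
    apply_root_mul := hXζ
    isGenerator := hc.imp
      (fun ⟨hl, hc1⟩ ↦ ⟨hl, by simpa [hc1, two_mul, two_zsmul, one_add_one_eq_two] using hY⟩)
      (fun ⟨hl, hc0⟩ ↦ ⟨hl, by simpa [hc0] using hY⟩)
    isAdjointPair := fun x y ↦ congrArg (((1 + c) * z) • ·)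
      (h.isAdjointPair_of_smul_eq_twist hθ hz.ne' hX x y)
    root_mul_left := fun x y ↦
      congrArg (((1 + c) * z) • ·) (conjTraceForm_root_mul h.conj_root x y)
    isSymm := fun x y ↦
      congrArg (((1 + c) * z) • ·) (conjTraceForm_isSymm h.conj_conj h.conj_weight x y)
    pos := fun _ hx ↦
      smul_pos hn (h.trace_mul_conj_pos (by omega) h.conj_weight h.re_pos hx)
    fg := fg_latticeExtension_integralClosure
    root_mul_mem :=
      mul_mem_latticeExtension_integralClosure (h.isPrimitiveRoot.isIntegral (by omega)) hYζ
    apply_mem := apply_mem_latticeExtension (Y' := algebraMap ℤ _ c - Y) (add_sub_cancel _ _)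
      (sub_mul_self_eq_of_sq_eq_neg hc' hm hsq hY)
    dualSubmodule_eq := h.dualSubmodule_latticeExtension_eq hθ hQ hz.ne' hc' hm hsol hk hX hY }

end IsTwistedSelfDualWeight

theorem exists_isUnimodularModel {p l : ℕ} [Fact p.Prime] (hp : p % 4 = 1) (hl : 0 < l)
    (hpl : ¬ p ∣ l) :
    ∃ (K : Type) (_ : Field K) (_ : NumberField K) (ζ : K) (b : LinearMap.BilinForm ℚ K)
      (X Y : Module.End ℚ K) (Λ : Submodule ℤ K), IsUnimodularModel l p ζ b X Y Λ := by
  obtain ⟨q, Q, hq, hQ, hqp, a, t, z, hz, hsol, hcop⟩ :=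
    exists_prime_and_primitive_solution (by omega) hl hpl
  have : Fact q.Prime := ⟨hq⟩
  obtain ⟨K, _, _, j, ζ, d, v, conj, τ, h⟩ :=
    exists_isTwistedSelfDualWeight hp (by omega : q % 4 = 3) hqp
  obtain ⟨c, m, hc, hm⟩ : ∃ c m : ℤ, (l % 4 = 3 ∧ c = 1 ∨ l % 4 ≠ 3 ∧ c = 0) ∧
      (1 + c) ^ 2 * m = c + l := by
    by_cases hl3 : l % 4 = 3
    · exact ⟨1, (1 + l) / 4, .inl ⟨hl3, rfl⟩, by omega⟩
    · exact ⟨0, l, .inr ⟨hl3, rfl⟩, by ring⟩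
  obtain ⟨k₀, k₁, k₂, hk⟩ := hcop ((1 + c) * z) <| by
    rcases hc with ⟨hl3, rfl⟩ | ⟨-, rfl⟩
    · exact .inr ⟨rfl, Nat.odd_iff.2 (by omega)⟩
    · exact .inl (by ring)
  have hdiv {n : ℤ} (hn : n ≠ 0) (T : Module.End ℚ K) : n • (n : ℚ)⁻¹ • T = T := by
    rw [← Int.cast_smul_eq_zsmul ℚ, smul_inv_smul₀ (Int.cast_ne_zero.2 hn)]
  exact ⟨K, _, _, ζ, _, _, _, _, h.isUnimodularModel hp (mul_div_cancel₀ _ two_ne_zero) hQ hz hc hm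
    hsol hk (hdiv hz.ne' _) (hdiv (by omega) _)⟩

end UnimodularModel

section Transfer

variable {K : Type*} [Field K] [NumberField K] {l p : ℕ} {α ζ : K} {conj : K ≃ₐ[ℚ] K}

namespace IsQuadraticCyclotomic

lemma exists_algHom_of_comm [Fact p.Prime] (h : IsQuadraticCyclotomic l p α ζ conj)
    (hp : p % 4 = 1) {A : Type*} [CommRing A] [Algebra ℚ A] {X Z : A} (hX : X ^ 2 = -l)
    (hZ : Polynomial.aeval Z (Polynomial.cyclotomic p ℚ) = 0) :
    ∃ ρ : K →ₐ[ℚ] A, ρ α = X ∧ ρ ζ = Z := by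
  let C := IntermediateField.adjoin ℚ {ζ}
  let Bζ := IntermediateField.adjoin.powerBasis (K := ℚ) (Algebra.IsIntegral.isIntegral ζ)
  have hminζ : Polynomial.aeval Z (minpoly ℚ Bζ.gen) = 0 := by
    rwa [IntermediateField.adjoin.powerBasis_gen,
      ← Polynomial.cyclotomic_eq_minpoly_rat
        (isPrimitiveRoot_adjoinSimple_gen h.isPrimitiveRoot) (NeZero.pos p)]
  let g : C →ₐ[ℚ] A := Bζ.lift Z hminζ
  let _ : Algebra C A := g.toRingHom.toAlgebra
  have _ : IsScalarTower ℚ C A := .of_algebraMap_eq fun x ↦ (g.commutes x).symm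
  let Bα := PowerBasis.ofAdjoinEqTop (Algebra.IsIntegral.isIntegral (R := C) α)
    (adjoin_adjoin_simple_eq_top h.adjoin_eq_top)
  have hminα : minpoly C α = .X ^ 2 - .C 0 * .X - .C (-l : C) :=
    minpoly_eq_of_sq_eq (by simpa using h.sqrt_notMem_adjoin_root hp) (by simp [h.sq_eq])
  have hα : Polynomial.aeval X (minpoly C Bα.gen) = 0 := by
    simp [Bα, hminα, hX]
  refine ⟨(Bα.lift X hα).restrictScalars ℚ, ?_, ?_⟩
  · simpa [Bα] using Bα.lift_gen X hα
  · exact ((Bα.lift X hα).commutes (IntermediateField.AdjoinSimple.gen ℚ ζ)).trans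
      (Bζ.lift_gen Z hminζ)

open scoped IsMulCommutative in
lemma exists_algHom [Fact p.Prime] (h : IsQuadraticCyclotomic l p α ζ conj)
    (hp : p % 4 = 1) {A : Type*} [Ring A] [Algebra ℚ A] {X Z : A} (hXZ : Commute X Z)
    (hX : X * X = -l) (hZ : Polynomial.aeval Z (Polynomial.cyclotomic p ℚ) = 0) :
    ∃ ρ : K →ₐ[ℚ] A, ρ α = X ∧ ρ ζ = Z := by
  let S := Algebra.adjoin ℚ {X, Z}
  have _ : IsMulCommutative S := Algebra.isMulCommutative_adjoin ℚ <| by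
    rintro _ (rfl | rfl) _ (rfl | rfl)
    exacts [rfl, hXZ, hXZ.symm, rfl]
  let XS : S := ⟨X, Algebra.subset_adjoin (by simp)⟩
  let ZS : S := ⟨Z, Algebra.subset_adjoin (by simp)⟩
  obtain ⟨ρ, hρα, hρζ⟩ := h.exists_algHom_of_comm hp (X := XS) (Z := ZS)
    (Subtype.ext <| by simpa [XS, sq] using hX)
    (Subtype.ext <| by simpa [ZS] using hZ)
  exact ⟨S.val.comp ρ, congrArg S.val hρα, congrArg S.val hρζ⟩

lemma exists_linearEquiv [Fact p.Prime] (h : IsQuadraticCyclotomic l p α ζ conj)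
    (hp : p % 4 = 1) {K' : Type*} [Field K'] [NumberField K'] {ζ' : K'}
    (hζ' : IsPrimitiveRoot ζ' p) (hfin : Module.finrank ℚ K' = Module.finrank ℚ K)
    {X : Module.End ℚ K'} (hX : X * X = -(l : Module.End ℚ K'))
    (hXζ : ∀ x, X (ζ' * x) = ζ' * X x) :
    ∃ f : K ≃ₗ[ℚ] K', (∀ x, f (α * x) = X (f x)) ∧ ∀ x, f (ζ * x) = ζ' * f x := by
  have hZ : Polynomial.aeval (Algebra.lmul ℚ K' ζ') (Polynomial.cyclotomic p ℚ) = 0 := by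
    rw [Polynomial.aeval_algHom_apply, Polynomial.cyclotomic_eq_minpoly_rat hζ' (NeZero.pos p),
      minpoly.aeval, map_zero]
  obtain ⟨ρ, hρα, hρζ⟩ := h.exists_algHom hp (Z := Algebra.lmul ℚ K' ζ') (LinearMap.ext hXζ) hX hZ
  let f : K →ₗ[ℚ] K' := LinearMap.applyₗ 1 ∘ₗ ρ.toLinearMap
  have hmul (x y : K) : f (x * y) = ρ x (f y) := LinearMap.congr_fun (map_mul ρ x y) 1
  have hinj : Function.Injective f := (injective_iff_map_eq_zero f).2 fun x hx ↦ by
    by_contra hx0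
    have h1 := hmul x⁻¹ x
    rw [hx, map_zero, inv_mul_cancel₀ hx0] at h1
    exact one_ne_zero ((LinearMap.congr_fun (map_one ρ) 1).symm.trans h1)
  exact ⟨LinearEquiv.ofInjectiveOfFinrankEq f hinj hfin.symm,
    fun x ↦ (hmul α x).trans (by rw [hρα]; rfl), fun x ↦ (hmul ζ x).trans (by rw [hρζ]; rfl)⟩

end IsQuadraticCyclotomic

lemma exists_eq_conjTraceForm (hconj : ∀ x, conj (conj x) = x) {B : LinearMap.BilinForm ℚ K}
    (hmul : ∀ a x y, B (a * x) y = B x (conj a * y)) (hsymm : ∀ x y, B x y = B y x) :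
    ∃ d, conj d = d ∧ B = conjTraceForm conj d := by
  let d := ((Algebra.traceForm ℚ K).toDual (traceForm_nondegenerate ℚ K)).symm (B.flip 1)
  have hd (x : K) : Algebra.trace ℚ K (d * x) = B x 1 :=
    LinearMap.BilinForm.apply_toDual_symm_apply (hB := traceForm_nondegenerate ℚ K) _ x
  refine ⟨d, sub_eq_zero.1 ?_, ?_⟩
  · refine (traceForm_nondegenerate ℚ K).1 _ fun x ↦ ?_
    have hx : Algebra.trace ℚ K (conj d * x) = Algebra.trace ℚ K (d * x) := by
      rw [← Algebra.trace_eq_of_algEquiv conj, map_mul, hconj, hd, hd, hsymm, ← mul_one (conj x),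
        ← hmul, mul_one]
    rw [Algebra.traceForm_apply, sub_mul, map_sub, hx, sub_self]
  · ext x y
    rw [conjTraceForm_apply, mul_assoc, hd, mul_comm x, hmul, hconj, mul_one]

lemma exists_fractionalIdeal_mem_iff {M : Submodule ℤ K} (hfg : M.FG)
    (hmul : ∀ a x, IsIntegral ℤ a → x ∈ M → a * x ∈ M) :
    ∃ 𝒜 : FractionalIdeal (𝓞 K)⁰ K, ∀ x, x ∈ 𝒜 ↔ x ∈ M := by
  let A : Submodule (𝓞 K) K :=
    { M with smul_mem' := fun a x hx ↦ hmul a x a.isIntegral_coe hx }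
  have hA : A.FG := .of_restrictScalars ℤ hfg
  exact ⟨⟨A, FractionalIdeal.isFractional_of_fg hA⟩, fun x ↦ Iff.rfl⟩

namespace IsQuadraticCyclotomic

lemma exists_isIntegral_add_conj_eq_one [Fact p.Prime] (h : IsQuadraticCyclotomic l p α ζ conj)
    (hp : p ≠ 2) : ∃ r, IsIntegral ℤ r ∧ r + conj r = 1 := by
  have hp1 : 1 < p := (Fact.out : p.Prime).one_lt
  have hζ2 : IsPrimitiveRoot (ζ ^ 2) p := h.isPrimitiveRoot.pow_of_coprime 2
    ((Nat.coprime_primes Nat.prime_two Fact.out).2 hp.symm)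
  have hζ0 : ζ ≠ 0 := h.isPrimitiveRoot.ne_zero (NeZero.ne p)
  have hsub : ζ - 1 ≠ 0 := sub_ne_zero.2 (h.isPrimitiveRoot.ne_one hp1)
  have hadd : ζ + 1 ≠ 0 := fun h0 ↦ hζ2.ne_one hp1 (by linear_combination (ζ - 1) * h0)
  have hr : (ζ - 1) / (ζ ^ 2 - 1) = (ζ + 1)⁻¹ := by
    rw [show ζ ^ 2 - 1 = (ζ - 1) * (ζ + 1) by ring]
    field_simp
  refine ⟨(ζ + 1)⁻¹, hr ▸ isIntegral_sub_one_div_sub_one h.isPrimitiveRoot.pow_eq_one hζ2 hp1, ?_⟩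
  rw [map_inv₀, map_add, map_one, h.conj_root, show ζ⁻¹ + 1 = ζ⁻¹ * (ζ + 1) by field_simp; ring]
  field_simp
  ring

lemma exists_trace_eq_two_mul [Fact p.Prime] (h : IsQuadraticCyclotomic l p α ζ conj)
    (hp : p ≠ 2) {d x : K} (hd : conj d = d)
    (hx : ∀ r, IsIntegral ℤ r → ∃ n : ℤ, Algebra.trace ℚ K (d * (r * x) * conj x) = n) :
    ∃ n : ℤ, Algebra.trace ℚ K (d * x * conj x) = 2 * n := by
  obtain ⟨r, hr, hr1⟩ := h.exists_isIntegral_add_conj_eq_one hp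
  obtain ⟨n, hn⟩ := hx r hr
  have hn' : Algebra.trace ℚ K (d * (conj r * x) * conj x) = n := by
    rw [← hn, ← Algebra.trace_eq_of_algEquiv conj]
    congr 1
    simp only [map_mul, h.conj_conj, hd]
    ring
  have hsum : d * x * conj x = d * (r * x) * conj x + d * (conj r * x) * conj x := by
    linear_combination -(d * x * conj x) * hr1
  exact ⟨n, by rw [hsum, map_add, hn, hn', two_mul]⟩

lemma bilinForm_mul_left (h : IsQuadraticCyclotomic l p α ζ conj) {B : LinearMap.BilinForm ℚ K}
    (hα : ∀ x y, B (α * x) y = B x (conj α * y)) (hζ : ∀ x y, B (ζ * x) y = B x (conj ζ * y))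
    (a x y : K) : B (a * x) y = B x (conj a * y) := by
  have ha : a ∈ IntermediateField.adjoin ℚ {α, ζ} := h.adjoin_eq_top ▸ trivial
  induction ha using IntermediateField.adjoin_induction generalizing x y with
  | mem a ha =>
    obtain rfl | rfl := ha
    exacts [hα x y, hζ x y]
  | algebraMap r =>
    simp only [AlgEquiv.commutes, ← Algebra.smul_def, map_smul, LinearMap.smul_apply]
  | add a b _ _ ha hb =>
    simp only [add_mul, map_add, LinearMap.add_apply, ha, hb]
  | inv a _ ha =>
    rcases eq_or_ne a 0 with rfl | ha0
    · simp
    · have hca : conj a ≠ 0 := (map_ne_zero conj).2 ha0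
      rw [map_inv₀, ← mul_inv_cancel_left₀ hca y, ← ha, mul_inv_cancel_left₀ ha0,
        mul_inv_cancel_left₀ hca]
  | mul a b _ _ ha hb =>
    rw [mul_assoc, ha, hb, map_mul conj, mul_left_comm, ← mul_assoc]

lemma mul_mem_of_isIntegral [Fact p.Prime] (h : IsQuadraticCyclotomic l p α ζ conj)
    (hp : p ≠ 2) (hl : Squarefree l) (hpl : ¬ p ∣ l) {ω : K}
    (hω : IsQuadraticIntegerGenerator l α ω) {M : Submodule ℤ K} (hζM : ∀ x ∈ M, ζ * x ∈ M)
    (hωM : ∀ x ∈ M, ω * x ∈ M) {a x : K} (ha : IsIntegral ℤ a) (hx : x ∈ M) : a * x ∈ M := by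
  replace ha := h.mem_adjoin_of_isIntegral hp hl hpl hω ha
  induction ha using Algebra.adjoin_induction generalizing x with
  | mem a ha =>
    obtain rfl | rfl := ha
    exacts [hζM x hx, hωM x hx]
  | algebraMap n => exact Algebra.smul_def n x ▸ M.smul_mem n hx
  | add a b _ _ ha hb => exact add_mul a b x ▸ M.add_mem (ha hx) (hb hx)
  | mul a b _ _ ha hb => exact mul_assoc a b x ▸ ha (hb hx)

lemma exists_isQuadraticIntegerGenerator_apply_mul {K' : Type*} [AddCommGroup K'] [Module ℚ K']
    {X Y : Module.End ℚ K'} (hXY : IsQuadraticIntegerGenerator l X Y) {f : K →ₗ[ℚ] K'}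
    (hf : ∀ x, f (α * x) = X (f x)) :
    ∃ ω, IsQuadraticIntegerGenerator l α ω ∧ ∀ x, f (ω * x) = Y (f x) := by
  rcases hXY with ⟨hl, hY⟩ | ⟨hl, rfl⟩
  · refine ⟨(1 + α) / 2, .inl ⟨hl, by ring⟩, fun x ↦ ?_⟩
    have hY2 : (2 : ℚ) • Y (f x) = f x + X (f x) := by
      simpa [two_mul, two_smul] using LinearMap.congr_fun hY (f x)
    have hω : (2 : ℚ) • ((1 + α) / 2 * x) = x + α * x := by
      rw [Algebra.smul_def, map_ofNat]
      ring
    apply smul_right_injective K' (two_ne_zero (α := ℚ))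
    simp only
    rw [hY2, ← map_smul, hω, map_add, hf]
  · exact ⟨α, .inr ⟨hl, rfl⟩, hf⟩

section Pullback

variable {K' : Type*} [Field K'] [NumberField K'] {ζ' : K'} {b : LinearMap.BilinForm ℚ K'}
  {X Y : Module.End ℚ K'} {Λ : Submodule ℤ K'} {f : K ≃ₗ[ℚ] K'} [Fact p.Prime]

lemma exists_trace_eq_apply (h : IsQuadraticCyclotomic l p α ζ conj)
    (hΛ : IsUnimodularModel l p ζ' b X Y Λ) (hfα : ∀ x, f (α * x) = X (f x))
    (hfζ : ∀ x, f (ζ * x) = ζ' * f x) :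
    ∃ d, conj d = d ∧ ∀ x y, Algebra.trace ℚ K (d * x * conj y) = b (f x) (f y) := by
  have hfζ_inv (x : K) : f (ζ⁻¹ * x) = ζ'⁻¹ * f x := by
    rw [eq_inv_mul_iff_mul_eq₀ (hΛ.isPrimitiveRoot.ne_zero (NeZero.ne p)), ← hfζ,
      mul_inv_cancel_left₀ (h.isPrimitiveRoot.ne_zero (NeZero.ne p))]
  obtain ⟨d, hd, hB⟩ := exists_eq_conjTraceForm (conj := conj) (B := b.compl₁₂ f f) h.conj_conj
    (h.bilinForm_mul_left
      (fun x y ↦ by simp [hfα, h.conj_sqrt, hΛ.isAdjointPair (f x) (f y)])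
      (fun x y ↦ by simp [hfζ, h.conj_root, hΛ.root_mul_left, hfζ_inv]))
    (fun x y ↦ hΛ.isSymm (f x) (f y))
  exact ⟨d, hd, fun x y ↦
    (conjTraceForm_apply ..).symm.trans (LinearMap.congr_fun₂ hB x y).symm⟩

lemma exists_fractionalIdeal_mem_iff_apply_mem (h : IsQuadraticCyclotomic l p α ζ conj)
    (hp : p ≠ 2) (hl : Squarefree l) (hpl : ¬ p ∣ l) (hΛ : IsUnimodularModel l p ζ' b X Y Λ)
    (hfα : ∀ x, f (α * x) = X (f x)) (hfζ : ∀ x, f (ζ * x) = ζ' * f x) :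
    ∃ 𝒜 : FractionalIdeal (𝓞 K)⁰ K, ∀ x, x ∈ 𝒜 ↔ f x ∈ Λ := by
  obtain ⟨ω, hω, hfω⟩ := exists_isQuadraticIntegerGenerator_apply_mul hΛ.isGenerator
    (f := f.toLinearMap) hfα
  let M := Λ.map (f.symm.restrictScalars ℤ).toLinearMap
  have hM (x : K) : x ∈ M ↔ f x ∈ Λ := Submodule.mem_map_equiv _
  obtain ⟨𝒜, h𝒜⟩ := exists_fractionalIdeal_mem_iff (M := M) (hΛ.fg.map _) fun a x ha hx ↦
    h.mul_mem_of_isIntegral hp hl hpl hω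
      (fun x hx ↦ (hM _).2 (hfζ x ▸ hΛ.root_mul_mem ((hM x).1 hx)))
      (fun x hx ↦ (hM _).2 ((hfω x).symm ▸ hΛ.apply_mem ((hM x).1 hx))) ha hx
  exact ⟨𝒜, fun x ↦ (h𝒜 x).trans (hM x)⟩

end Pullback

theorem exists_fractionalIdeal_dual_eq [Fact p.Prime] (h : IsQuadraticCyclotomic l p α ζ conj)
    (hp : p % 4 = 1) (hl : Squarefree l) (hpl : ¬ p ∣ l) :
    ∃ (𝒜 : FractionalIdeal (𝓞 K)⁰ K) (d : K), conj d = d ∧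
      (∀ x, x ≠ 0 → 0 < Algebra.trace ℚ K (d * x * conj x)) ∧
      ∀ y, (∀ x ∈ 𝒜, ∃ n : ℤ, Algebra.trace ℚ K (d * x * conj y) = n) ↔ y ∈ 𝒜 := by
  obtain ⟨K', _, _, ζ', b, X, Y, Λ, hΛ⟩ := exists_isUnimodularModel hp h.pos hpl
  obtain ⟨f, hfα, hfζ⟩ := h.exists_linearEquiv hp hΛ.isPrimitiveRoot
    (hΛ.finrank_eq.trans (h.finrank_eq hp).symm) hΛ.sq_eq hΛ.apply_root_mul
  obtain ⟨d, hd, hdb⟩ := h.exists_trace_eq_apply hΛ hfα hfζ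
  obtain ⟨𝒜, h𝒜⟩ :=
    h.exists_fractionalIdeal_mem_iff_apply_mem (by omega) hl hpl hΛ hfα hfζ
  refine ⟨𝒜, d, hd, fun x hx ↦ hdb x x ▸ hΛ.pos _ (f.map_ne_zero_iff.2 hx), fun y ↦ ?_⟩
  rw [h𝒜, ← hΛ.dualSubmodule_eq, LinearMap.BilinForm.mem_dualSubmodule, f.toEquiv.forall_congr_left]
  simp [h𝒜, hdb, hΛ.isSymm _ (f y), Submodule.mem_one, eq_comm]

lemma half {m : ℕ} (h : IsQuadraticCyclotomic (4 * m) p α ζ conj) :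
    IsQuadraticCyclotomic m p (α / 2) ζ conj where
  pos := by have := h.pos; omega
  sq_eq := by
    rw [div_pow, h.sq_eq]
    push_cast
    ring
  isPrimitiveRoot := h.isPrimitiveRoot
  adjoin_eq_top := by
    rw [eq_top_iff, ← h.adjoin_eq_top, IntermediateField.adjoin_le_iff]
    rintro x (rfl | hx)
    · have hx : x / 2 ∈ IntermediateField.adjoin ℚ {x / 2, ζ} :=
        IntermediateField.subset_adjoin _ _ (Set.mem_insert _ _)
      simpa only [add_halves, SetLike.mem_coe] using add_mem hx hx
    · exact IntermediateField.subset_adjoin _ _ (Set.mem_insert_of_mem _ hx)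
  conj_sqrt := by rw [map_div₀, h.conj_sqrt, map_ofNat, neg_div]
  conj_root := h.conj_root

end IsQuadraticCyclotomic

lemma mem_fixedField_zpowers_iff {F E : Type*} [Field F] [Field E] [Algebra F E] {σ : E ≃ₐ[F] E}
    {x : E} : x ∈ IntermediateField.fixedField (Subgroup.zpowers σ) ↔ σ x = x := by
  have hle : Subgroup.zpowers σ ≤ MulAction.stabilizer (E ≃ₐ[F] E) x ↔ σ x = x := by
    rw [Subgroup.zpowers_le, MulAction.mem_stabilizer_iff, AlgEquiv.smul_def]
  rw [IntermediateField.mem_fixedField_iff, ← hle]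
  rfl

lemma exists_ringHom_complex_algebraMap_eq {F E : Type*} [Field F] [Field E] [Algebra F E]
    [Algebra.IsAlgebraic F E] (φ : F →+* ℝ) :
    ∃ ψ : E →+* ℂ, ∀ x, ψ (algebraMap F E x) = φ x := by
  let _ : Algebra F ℂ := (Complex.ofRealHom.comp φ).toAlgebra
  exact ⟨(IsAlgClosed.lift : E →ₐ[F] ℂ), (IsAlgClosed.lift : E →ₐ[F] ℂ).commutes⟩

end Transfer

/-- There exist a fractional `O_K`-ideal `𝒜` and a totally positive
`d ∈ F` such that `b_d(x,y) = Tr_{K/ℚ}(d x ȳ)` makes `(𝒜, b_d)` a positive definite even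
unimodular `ℤ`-lattice of rank `2(p-1)`. -/
theorem exists_even_unimodular_ideal_lattice (ℓ : ℕ) (hℓpos : 0 < ℓ)
    (hfund : (ℓ % 4 = 3 ∧ Squarefree ℓ) ∨
      ∃ m : ℕ, ℓ = 4 * m ∧ Squarefree m ∧ (m % 4 = 1 ∨ m % 4 = 2))
    (p : ℕ) (hp : p.Prime) (hp1 : p % 4 = 1) (hpℓ : ¬ p ∣ ℓ)
    (K : Type) [Field K] [NumberField K]
    (α ζ : K) (hα : α ^ 2 = -(ℓ : K)) (hζ : IsPrimitiveRoot ζ p)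
    (hgen : IntermediateField.adjoin ℚ {α, ζ} = ⊤)
    (conj : K ≃ₐ[ℚ] K) (hconjα : conj α = -α) (hconjζ : conj ζ = ζ⁻¹)
    (F : IntermediateField ℚ K)
    (hF : F = IntermediateField.fixedField (Subgroup.zpowers conj)) :
    ∃ (𝒜 : FractionalIdeal (𝓞 K)⁰ K) (d : F), 𝒜 ≠ 0 ∧
      (∀ φ : F →+* ℝ, 0 < φ d) ∧
      (∀ x ∈ 𝒜, ∃ n : ℤ, Algebra.trace ℚ K ((d : K) * x * conj x) = 2 * (n : ℚ)) ∧
      (∀ x ∈ 𝒜, x ≠ 0 → 0 < Algebra.trace ℚ K ((d : K) * x * conj x)) ∧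
      ({y : K | ∀ x ∈ 𝒜, ∃ n : ℤ, Algebra.trace ℚ K ((d : K) * x * conj y) = (n : ℚ)} =
        {y : K | y ∈ 𝒜}) ∧
      Module.finrank ℚ K = 2 * (p - 1) := by
  have : Fact p.Prime := ⟨hp⟩
  have hK : IsQuadraticCyclotomic ℓ p α ζ conj := ⟨hℓpos, hα, hζ, hgen, hconjα, hconjζ⟩
  obtain ⟨𝒜, d, hd, hpos, hdual⟩ : ∃ (𝒜 : FractionalIdeal (𝓞 K)⁰ K) (d : K), conj d = d ∧
      (∀ x, x ≠ 0 → 0 < Algebra.trace ℚ K (d * x * conj x)) ∧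
      ∀ y, (∀ x ∈ 𝒜, ∃ n : ℤ, Algebra.trace ℚ K (d * x * conj y) = n) ↔ y ∈ 𝒜 := by
    rcases hfund with ⟨-, hℓ⟩ | ⟨m, rfl, hm, -⟩
    · exact hK.exists_fractionalIdeal_dual_eq hp1 hℓ hpℓ
    · exact hK.half.exists_fractionalIdeal_dual_eq hp1 hm fun h ↦ hpℓ (h.mul_left 4)
  have hdF : d ∈ F := hF ▸ mem_fixedField_zpowers_iff.2 hd
  refine ⟨𝒜, ⟨d, hdF⟩, ?_, fun φ ↦ ?_, fun x hx ↦ ?_, fun x _ ↦ hpos x, Set.ext hdual,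
    hK.finrank_eq hp1⟩
  · rintro rfl
    exact one_ne_zero <| (FractionalIdeal.mem_zero_iff _).1 <| (hdual 1).1 fun x hx ↦
      ⟨0, by simp [(FractionalIdeal.mem_zero_iff _).1 hx]⟩
  · obtain ⟨ψ, hψ⟩ := exists_ringHom_complex_algebraMap_eq (E := K) φ
    have hφd : ψ d = φ ⟨d, hdF⟩ := hψ ⟨d, hdF⟩
    have hψd := hK.re_algHom_pos_of_trace_mul_conj_pos hp.ne_zero hd hpos ψ.toRatAlgHom
    rwa [ψ.toRatAlgHom_apply, hφd, Complex.ofReal_re] at hψd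
  · exact hK.exists_trace_eq_two_mul (by omega) hd fun r hr ↦
      (hdual x).2 hx (r * x) (𝒜.1.smul_mem ⟨r, hr⟩ hx)
end

section
/- Let Λ be an O_L-lattice in a finite-dimensional positive definite Hermitian vector space (V,h) over L, let q be a prime, and let σ be an O_L-linear automorphism of Λ of order q preserving h (h(σx, σy) = h(x,y)) whose only fixed point in Λ is 0. Then for every n ≥ 1 and every nonzero Hermitian matrix A ∈ L^{n×n}, the representation number R_A := |{(x₁,…,x_n) ∈ Λ^n : (h(x_i,x_j))_{i,j} = A}| is finite and divisible by q. -/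
open NumberField

/-!
A lattice with a positive definite rational form has finitely many vectors of a given norm: pairing
with a finite generating set is injective, and maps the vectors of bounded norm to bounded elements
of finitely generated subgroups of `ℚ`. Hence `Λⁿ` contains finitely many tuples with Gram matrix
`A`. Applying `σ` entrywise permutes them with order `q`, and a fixed tuple would be zero, forcing
`A = 0`; so all orbits have `q` elements.
-/

section Finiteness

theorem finite_setOf_mem_and_abs_le_of_fg {N : Submodule ℤ ℚ} (hN : N.FG) (C : ℚ) :
    {y : ℚ | y ∈ N ∧ |y| ≤ C}.Finite := by
  obtain ⟨d, hd, hdN⟩ := FractionalIdeal.isFractional_of_fg (S := nonZeroDivisors ℤ) hN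
  have hd0 : (d : ℚ) ≠ 0 := by exact_mod_cast nonZeroDivisors.ne_zero hd
  let K : ℤ := ⌊|(d : ℚ)| * C⌋
  refine ((Set.finite_Icc (-K) K).image fun k : ℤ => (k : ℚ) / d).subset ?_
  rintro y ⟨hyN, hyC⟩
  obtain ⟨k, hk⟩ := hdN y hyN
  have hkdy : (k : ℚ) = d * y := by simpa using hk
  have habs : |(k : ℚ)| ≤ |(d : ℚ)| * C := by
    rw [hkdy, abs_mul]
    gcongr
  have hkK : |k| ≤ K := Int.le_floor.mpr (by exact_mod_cast habs)
  exact ⟨k, abs_le.mp hkK, by simp only [hkdy, mul_div_cancel_left₀ y hd0]⟩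

section Polar

variable {R M N : Type*} [CommRing R] [AddCommGroup M] [Module R M] [AddCommGroup N] [Module R N]

theorem abs_polar_le [LinearOrder N] [IsOrderedAddMonoid N] {Q : QuadraticMap R M N}
    (hQ : ∀ x, 0 ≤ Q x) (x y : M) : |QuadraticMap.polar Q x y| ≤ Q x + Q y := by
  have hadd : 0 ≤ Q x + Q y + QuadraticMap.polar Q x y :=
    (hQ (x + y)).trans_eq (QuadraticMap.map_add Q x y)
  have hsub : 0 ≤ Q x + Q y - QuadraticMap.polar Q x y := by
    have h := hQ (x + -y)
    rwa [QuadraticMap.map_add Q, QuadraticMap.map_neg, QuadraticMap.polar_neg_right,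
      ← sub_eq_add_neg] at h
  exact abs_le.mpr ⟨neg_le_iff_add_nonneg'.mpr hadd, sub_nonneg.mp hsub⟩

theorem injective_polarBilin_of_anisotropic [IsAddTorsionFree N] {Q : QuadraticMap R M N}
    (hQ : Q.Anisotropic) : Function.Injective Q.polarBilin := by
  refine (injective_iff_map_eq_zero _).mpr fun x hx => hQ x ?_
  have hself : 2 • Q x = 0 := by
    rw [← QuadraticMap.polar_self, ← QuadraticMap.polarBilin_apply_apply, hx, LinearMap.zero_apply]
  exact (nsmul_eq_zero_iff_right two_ne_zero).mp hself

end Polar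

variable {M : Type*} [AddCommGroup M] [Module.Finite ℤ M]

theorem finite_setOf_quadraticMap_le {Q : QuadraticMap ℤ M ℚ} (hQ : Q.PosDef) (c : ℚ) :
    {x : M | Q x ≤ c}.Finite := by
  obtain ⟨S, hS⟩ := (Module.Finite.fg_top : (⊤ : Submodule ℤ M).FG)
  let pairing : M → S → ℚ := fun x v => Q.polarBilin x v
  have hinj : Function.Injective pairing := fun x y hxy =>
    injective_polarBilin_of_anisotropic hQ.anisotropic <|
      LinearMap.ext_on hS fun v hv => congrFun hxy ⟨v, hv⟩
  refine .of_finite_image (.subset (.pi' fun v : S =>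
    finite_setOf_mem_and_abs_le_of_fg (Submodule.fg_range (Q.polarBilin.flip v)) (c + Q v)) ?_)
    hinj.injOn
  rintro _ ⟨x, hx, rfl⟩ v
  exact ⟨⟨x, rfl⟩, (abs_polar_le hQ.nonneg x v).trans (by gcongr; exact hx)⟩

theorem finite_setOf_apply_self_eq {R : Type*} [Ring R] [Nontrivial R] [Algebra ℚ R]
    {h : LinearMap.BilinMap ℤ M R}
    (hpos : ∀ x, x ≠ 0 → ∃ r : ℚ, 0 < r ∧ h x x = algebraMap ℚ R r) (a : R) :
    {x : M | h x x = a}.Finite := by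
  -- A `ℚ`-linear projection of `R` onto `ℚ` turns `h` into a rational form with the same norms.
  obtain ⟨π, hπ⟩ := (Algebra.linearMap ℚ R).exists_leftInverse_of_injective
    (LinearMap.ker_eq_bot.mpr (algebraMap ℚ R).injective)
  let Q : QuadraticMap ℤ M ℚ := (π.restrictScalars ℤ).compQuadraticMap h.toQuadraticMap
  have hQ : Q.PosDef := fun x hx => by
    obtain ⟨r, hr, hxr⟩ := hpos x hx
    have hQx : Q x = r := (congrArg π hxr).trans (LinearMap.congr_fun hπ r)
    rwa [hQx]
  exact (finite_setOf_quadraticMap_le hQ (π a)).subset fun x hx => (congrArg π hx).le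

end Finiteness

theorem iterate_orderOf_eq_id {R M : Type*} [Semiring R] [AddCommMonoid M] [Module R M]
    (e : M ≃ₗ[R] M) : e^[orderOf e] = id := by
  rw [← LinearEquiv.coe_pow, pow_orderOf_eq_one]
  rfl

theorem prime_dvd_ncard_of_forall_apply_ne {X : Type*} {f : X → X} {s : Set X}
    (hs : s.Finite) (hmaps : Set.MapsTo f s s) {p k : ℕ} (hp : p.Prime)
    (hiter : ∀ x ∈ s, f^[p ^ k] x = x) (hfix : ∀ x ∈ s, f x ≠ x) : p ∣ s.ncard := by
  classical
  have := Fact.mk hp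
  have := hs.fintype
  let g : Function.End s := hmaps.restrict f s s
  have hcoe : g ^ p ^ k = g^[p ^ k] :=
    hom_coe_pow (fun u : Function.End s => u) rfl (fun _ _ => rfl) g _
  have hg : g ^ p ^ k = 1 := hcoe.trans <| funext fun x =>
    Subtype.ext ((hmaps.coe_iterate_restrict x _).trans (hiter x x.2))
  have : IsEmpty (Function.fixedPoints g) :=
    ⟨fun x => hfix x.1 x.1.2 (congrArg Subtype.val x.2)⟩
  rw [← Nat.card_coe_set_eq, Nat.card_eq_fintype_card, ← Nat.modEq_zero_iff_dvd,
    ← Fintype.card_eq_zero (α := Function.fixedPoints g)]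
  exact Equiv.Perm.card_fixedPoints_modEq hg

section Representations

variable {M N ι : Type*} [AddCommGroup M] [AddCommGroup N]

/-- The representations of the matrix `A` by the form `h`: the tuples with Gram matrix `A`. The
representation number `R_A` is the cardinality of this set. Only bilinearity over `ℤ` is encoded,
so that Hermitian forms are included. -/
def representations (h : LinearMap.BilinMap ℤ M N) (A : Matrix ι ι N) : Set (ι → M) :=
  {x | ∀ i j, h (x i) (x j) = A i j}

/-- A map that is additive in the first variable and Hermitian with respect to an additive map
`conj`, as a `ℤ`-bilinear map. -/
def hermitianBilinMap (h : M → M → N) (conj : N →+ N)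
    (hadd : ∀ x y z, h (x + y) z = h x z + h y z) (hswap : ∀ x y, h y x = conj (h x y)) :
    LinearMap.BilinMap ℤ M N :=
  (AddMonoidHom.mk' (fun x => (AddMonoidHom.mk' (h x) fun y z => by
      rw [hswap (y + z) x, hadd, map_add, ← hswap, ← hswap]).toIntLinearMap)
    fun x y => LinearMap.ext (hadd x y)).toIntLinearMap

variable {h : LinearMap.BilinMap ℤ M N}

theorem mapsTo_representations {σ : M → M} (hiso : ∀ x y, h (σ x) (σ y) = h x y)
    (A : Matrix ι ι N) :
    Set.MapsTo (Pi.map fun _ => σ) (representations h A) (representations h A) :=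
  fun x hx i j => (hiso (x i) (x j)).trans (hx i j)

theorem zero_notMem_representations {A : Matrix ι ι N} (hA : A ≠ 0) :
    0 ∉ representations h A := fun h0 => hA <| by
  ext i j
  simp [← h0 i j]

end Representations

section PositiveDefinite

variable {M R ι : Type*} [AddCommGroup M] [Module.Finite ℤ M] [Ring R] [Nontrivial R]
  [Algebra ℚ R] [Finite ι] {h : LinearMap.BilinMap ℤ M R}

theorem finite_representations
    (hpos : ∀ x, x ≠ 0 → ∃ r : ℚ, 0 < r ∧ h x x = algebraMap ℚ R r) (A : Matrix ι ι R) :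
    (representations h A).Finite :=
  (Set.Finite.pi' fun i => finite_setOf_apply_self_eq hpos (A i i)).subset fun _ hx i => hx i i

theorem representation_numbers_divisible_general
    (hpos : ∀ x, x ≠ 0 → ∃ r : ℚ, 0 < r ∧ h x x = algebraMap ℚ R r)
    {p k : ℕ} (hp : p.Prime) {σ : M → M} (hσ : σ^[p ^ k] = id)
    (hiso : ∀ x y, h (σ x) (σ y) = h x y) (hfix : ∀ x, σ x = x → x = 0)
    {A : Matrix ι ι R} (hA : A ≠ 0) :
    (representations h A).Finite ∧ p ∣ (representations h A).ncard := by
  have hfin := finite_representations hpos A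
  refine ⟨hfin, prime_dvd_ncard_of_forall_apply_ne hfin (mapsTo_representations hiso A) hp
    (k := k) (fun x _ => ?_) fun x hx hσx => ?_⟩
  · rw [Pi.map_iterate, hσ]
    rfl
  · have hx0 : x = 0 := funext fun i => hfix (x i) (congrFun hσx i)
    exact zero_notMem_representations hA (hx0 ▸ hx)

end PositiveDefinite

/-- If `σ` is an `O_L`-linear automorphism of the lattice `Λ` of prime
order `q`, preserving `h` and fixing only `0`, then every representation number
`R_A = |{x ∈ Λⁿ : (h(xᵢ,xⱼ)) = A}|` for a nonzero Hermitian matrix `A` is finite and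
divisible by `q`. -/
theorem representation_numbers_divisible (ℓ : ℕ) (hℓpos : 0 < ℓ)
    (hfund : (ℓ % 4 = 3 ∧ Squarefree ℓ) ∨
      ∃ m : ℕ, ℓ = 4 * m ∧ Squarefree m ∧ (m % 4 = 1 ∨ m % 4 = 2))
    (L : Type) [Field L] [NumberField L]
    (α : L) (hα : α ^ 2 = -(ℓ : L)) (hdim : Module.finrank ℚ L = 2)
    (conj : L ≃ₐ[ℚ] L) (hconjα : conj α = -α)
    (V : Type) [AddCommGroup V] [Module L V] [FiniteDimensional L V]
    [Module (𝓞 L) V] [IsScalarTower (𝓞 L) L V]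
    (h : V → V → L)
    (hadd : ∀ x y z : V, h (x + y) z = h x z + h y z)
    (hsmul : ∀ (a : L) (x y : V), h (a • x) y = a * h x y)
    (hswap : ∀ x y : V, h y x = conj (h x y))
    (hpos : ∀ x : V, x ≠ 0 → ∃ r : ℚ, 0 < r ∧ h x x = algebraMap ℚ L r)
    (Λ : Submodule (𝓞 L) V) (hfg : Λ.FG)
    (hspan : Submodule.span L (Λ : Set V) = ⊤)
    (q : ℕ) (hq : q.Prime)
    (σ : Λ ≃ₗ[𝓞 L] Λ) (hord : orderOf σ = q)
    (hiso : ∀ x y : Λ, h (σ x : V) (σ y : V) = h (x : V) (y : V))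
    (hfix : ∀ x : Λ, σ x = x → x = 0) :
    ∀ (n : ℕ), 1 ≤ n → ∀ A : Matrix (Fin n) (Fin n) L, A ≠ 0 →
      (∀ i j, A j i = conj (A i j)) →
      {x : Fin n → Λ | ∀ i j, h (x i : V) (x j : V) = A i j}.Finite ∧
      q ∣ Set.ncard {x : Fin n → Λ | ∀ i j, h (x i : V) (x j : V) = A i j} := by
  intro n _ A hA _
  have : Module.Finite (𝓞 L) Λ := Module.Finite.iff_fg.mpr hfg
  have : Module.Finite ℤ Λ := Module.Finite.trans (𝓞 L) Λ
  have hσ : σ^[q ^ 1] = id := by rw [pow_one, ← hord, iterate_orderOf_eq_id]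
  exact representation_numbers_divisible_general
    (h := hermitianBilinMap (fun x y : Λ => h x y) (conj : L →+ L)
      (fun x y z => hadd x y z) fun x y => hswap x y)
    (fun x hx => hpos x (by simpa using hx)) hq hσ hiso hfix hA
end
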